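/- There exists an absolute constant c ≥ 1 (independent of the dimension and of the bodies) such that for every dimension d ≥ 2, every pair of convex bodies G, K ⊆ ℝ^d with 0 ∈ int(G) and G ⊆ int(K), and every α with 0 < α ≤ 1, one has c^{−d} · N_{G°}(K°, α) ≤ N_K(G, α) ≤ c^{d} · N_{G°}(K°, α), where N_K(·,·) denotes the Hilbert covering number with respect to K and N_{G°}(·,·) the Hilbert covering number with respect to G°. (Note that K° ⊆ int(G°), so the right-hand covering numbers are well defined.) -/

import Mathlib

open Set MeasureTheory Metric
open scoped Pointwise RealInnerProductSpace ENNReal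

noncomputable section

abbrev Euc (d : ℕ) := EuclideanSpace ℝ (Fin d)

/-- A convex body: a compact convex set with nonempty interior. -/
def IsConvexBody {d : ℕ} (K : Set (Euc d)) : Prop :=
  IsCompact K ∧ Convex ℝ K ∧ (interior K).Nonempty

/-- The polar of a set. -/
def polarSet {d : ℕ} (S : Set (Euc d)) : Set (Euc d) :=
  {y | ∀ x ∈ S, ⟪x, y⟫ ≤ 1}

/-- The Hilbert distance with respect to the body `K`. -/
def hilbertDist {d : ℕ} (K : Set (Euc d)) (x y : Euc d) : ℝ :=
  -(1 / 2) * Real.log ((1 - gauge ((fun k => k - x) '' K) (y - x)) *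
    (1 - gauge ((fun k => k - y) '' K) (x - y)))

/-- The Hilbert ball of radius `r` centered at `x`. -/
def hilbertBall {d : ℕ} (K : Set (Euc d)) (x : Euc d) (r : ℝ) : Set (Euc d) :=
  {y ∈ interior K | hilbertDist K x y ≤ r}

/-- The Hilbert covering number of `U` at scale `α` in the geometry induced by `K`. -/
def hilbertCov {d : ℕ} (K U : Set (Euc d)) (α : ℝ) : ℕ :=
  sInf {m : ℕ | ∃ x : Fin m → Euc d, (∀ i, x i ∈ interior K) ∧
    U ⊆ ⋃ i, hilbertBall K (x i) α}

/-- The translative covering number of `U` by translates of `α • D`. -/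
def transCov {d : ℕ} (D U : Set (Euc d)) (α : ℝ) : ℕ :=
  sInf {m : ℕ | ∃ x : Fin m → Euc d, U ⊆ ⋃ i, x i +ᵥ α • D}

/-- The Hilbert `α`-expansion of `G` in `K`. -/
def hilbertExpand {d : ℕ} (K G : Set (Euc d)) (α : ℝ) : Set (Euc d) :=
  {x ∈ interior K | sInf (hilbertDist K x '' G) ≤ α}

/-- The Lebesgue volume of the Euclidean unit ball in `ℝ^d`. -/
def ωd (d : ℕ) : ℝ := (volume (ball (0 : Euc d) 1)).toReal

/-- The Hilbert Finsler unit ball at `y` in the geometry induced by `K`. -/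
def finslerBall {d : ℕ} (K : Set (Euc d)) (y : Euc d) : Set (Euc d) :=
  {v | gauge ((fun k => k - y) '' K) v + gauge ((fun k => k - y) '' K) (-v) ≤ 2}

/-- The Hilbert Holmes–Thompson volume of `U` in the geometry induced by `K`. -/
def volH {d : ℕ} (K U : Set (Euc d)) : ℝ :=
  (1 / ωd d) * ∫ y in U, (volume (polarSet (finslerBall K y))).toReal

/-- The recentered Macbeath region `A(x) := (K ∩ (2x − K)) − x`. -/
def macbeathA {d : ℕ} (K : Set (Euc d)) (x : Euc d) : Set (Euc d) :=
  (fun k => k - x) '' (K ∩ ((fun k => (2 : ℝ) • x - k) '' K))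


open Set MeasureTheory Metric
open scoped Pointwise RealInnerProductSpace ENNReal


/-- Symmetric convex bodies. -/
structure SymBody {d : ℕ} (K : Set (Euc d)) : Prop where
  compact : IsCompact K
  conv : Convex ℝ K
  int_ne : (interior K).Nonempty
  symm : ∀ x ∈ K, -x ∈ K

def Zt {d : ℕ} (K : Set (Euc d)) (f : Euc d → ℝ) (x : Euc d) : ℝ :=
  ∫ y in K, f y * Real.exp ⟪x, y⟫

def Mt {d : ℕ} (K : Set (Euc d)) (f : Euc d → ℝ) (x : Euc d) : ℝ :=
  Zt K f x / Zt K (fun _ => 1) x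

lemma Zt_integrable {d : ℕ} {K : Set (Euc d)} (hK : IsCompact K) {f : Euc d → ℝ}
    (hf : Continuous f) (x : Euc d) :
    IntegrableOn (fun y => f y * Real.exp ⟪x, y⟫) K := by
  apply ContinuousOn.integrableOn_compact hK
  apply Continuous.continuousOn
  fun_prop

lemma Zt_hasFDerivAt {d : ℕ} {K : Set (Euc d)} (hK : IsCompact K) {f : Euc d → ℝ}
    (hf : Continuous f) (x : Euc d) :
    ∃ L : Euc d →L[ℝ] ℝ, HasFDerivAt (Zt K f) L x ∧
      ∀ v, L v = Zt K (fun y => f y * ⟪v, y⟫) x := by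
  obtain ⟨R, hR⟩ := hK.isBounded.exists_norm_le
  obtain ⟨C, hC⟩ := hK.exists_bound_of_continuousOn hf.continuousOn
  have hR' : ∀ y ∈ K, ‖y‖ ≤ |R| := fun y hy => (hR y hy).trans (le_abs_self R)
  have hC' : ∀ y ∈ K, ‖f y‖ ≤ |C| := fun y hy => (hC y hy).trans (le_abs_self C)
  set F' : Euc d → Euc d → (Euc d →L[ℝ] ℝ) :=
    fun x y => (f y * Real.exp ⟪x, y⟫) • innerSL ℝ y with hF'
  have hcont : Continuous (F' x) := by
    rw [hF']
    have h1 : Continuous fun y => f y * Real.exp ⟪x, y⟫ := by fun_prop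
    exact Continuous.smul h1 (innerSL ℝ).continuous
  have hIntg : IntegrableOn (F' x) K := by
    apply ContinuousOn.integrableOn_compact hK
    exact hcont.continuousOn
  refine ⟨∫ y in K, F' x y, ?_, ?_⟩
  · refine hasFDerivAt_integral_of_dominated_of_fderiv_le (s := ball x 1)
      (bound := fun _ => |C| * Real.exp ((‖x‖ + 1) * |R|) * |R|) (ball_mem_nhds x one_pos)
      ?_ (Zt_integrable hK hf x) hIntg.aestronglyMeasurable ?_ ?_ ?_
    · exact Filter.Eventually.of_forall fun x => (Zt_integrable hK hf x).aestronglyMeasurable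
    · refine (ae_restrict_iff' hK.measurableSet).2 (Filter.Eventually.of_forall ?_)
      intro y hy x' hx'
      rw [hF']
      simp only
      rw [norm_smul, norm_mul, innerSL_apply_norm, Real.norm_eq_abs (Real.exp _), Real.abs_exp]
      have h1 : ⟪x', y⟫ ≤ (‖x‖ + 1) * |R| := by
        refine (real_inner_le_norm _ _).trans ?_
        have : ‖x'‖ ≤ ‖x‖ + 1 := by
          have := mem_ball_iff_norm.1 hx'
          have h2 : ‖x'‖ ≤ ‖x‖ + ‖x' - x‖ := by
            simpa using norm_add_le x (x' - x)
          linarith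
        exact mul_le_mul this (hR' y hy) (norm_nonneg _) (by positivity)
      have h2 := Real.exp_le_exp.2 h1
      have := hC' y hy
      have := hR' y hy
      gcongr
    · have : IsFiniteMeasure (volume.restrict K) := ⟨by
        rw [Measure.restrict_apply_univ]; exact hK.measure_lt_top⟩
      exact integrable_const _
    · refine Filter.Eventually.of_forall ?_
      intro y x' _
      have h1 : HasFDerivAt (fun x : Euc d => ⟪x, y⟫) (innerSL ℝ y) x' := by
        have := (innerSL ℝ y).hasFDerivAt (x := x')
        refine this.congr_of_eventuallyEq (Filter.Eventually.of_forall fun z => ?_)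
        simp [real_inner_comm]
      have := (h1.exp).const_mul (f y)
      rw [smul_smul] at this
      exact this
  · intro v
    rw [ContinuousLinearMap.integral_apply hIntg]
    unfold Zt
    congr 1
    ext y
    simp [hF', real_inner_comm]
    ring

lemma vol_pos_of {d : ℕ} {K : Set (Euc d)} (hK : SymBody K) : 0 < volume K :=
  Measure.measure_pos_of_nonempty_interior _ hK.int_ne

lemma Zt_one_pos {d : ℕ} {K : Set (Euc d)} (hK : SymBody K) (x : Euc d) :
    0 < Zt K (fun _ => 1) x := by
  unfold Zt
  rw [setIntegral_pos_iff_support_of_nonneg_ae]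
  · have : Function.support (fun y : Euc d => (1:ℝ) * Real.exp ⟪x, y⟫) = univ := by
      ext y; simp [Real.exp_ne_zero]
    rw [this, univ_inter]
    exact vol_pos_of hK
  · exact Filter.Eventually.of_forall fun y => by simp [Real.exp_nonneg]
  · exact Zt_integrable hK.compact continuous_const x

lemma Zt_add {d : ℕ} {K : Set (Euc d)} (hK : SymBody K) {f g : Euc d → ℝ}
    (hf : Continuous f) (hg : Continuous g) (x : Euc d) :
    Zt K (fun y => f y + g y) x = Zt K f x + Zt K g x := by
  unfold Zt
  rw [← integral_add (Zt_integrable hK.compact hf x) (Zt_integrable hK.compact hg x)]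
  congr 1; ext y; ring

lemma Zt_smul {d : ℕ} {K : Set (Euc d)} (c : ℝ) (f : Euc d → ℝ) (x : Euc d) :
    Zt K (fun y => c * f y) x = c * Zt K f x := by
  unfold Zt
  rw [← integral_const_mul]
  congr 1; ext y; ring

lemma Zt_mono {d : ℕ} {K : Set (Euc d)} (hK : SymBody K) {f g : Euc d → ℝ}
    (hf : Continuous f) (hg : Continuous g) (h : ∀ y ∈ K, f y ≤ g y) (x : Euc d) :
    Zt K f x ≤ Zt K g x := by
  unfold Zt
  refine setIntegral_mono_on (Zt_integrable hK.compact hf x) (Zt_integrable hK.compact hg x)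
    hK.compact.measurableSet ?_
  intro y hy
  exact mul_le_mul_of_nonneg_right (h y hy) (Real.exp_nonneg _)

lemma Mt_add {d : ℕ} {K : Set (Euc d)} (hK : SymBody K) {f g : Euc d → ℝ}
    (hf : Continuous f) (hg : Continuous g) (x : Euc d) :
    Mt K (fun y => f y + g y) x = Mt K f x + Mt K g x := by
  unfold Mt; rw [Zt_add hK hf hg, add_div]

lemma Mt_smul {d : ℕ} {K : Set (Euc d)} (c : ℝ) (f : Euc d → ℝ) (x : Euc d) :
    Mt K (fun y => c * f y) x = c * Mt K f x := by
  unfold Mt; rw [Zt_smul, mul_div_assoc]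

lemma Mt_mono {d : ℕ} {K : Set (Euc d)} (hK : SymBody K) {f g : Euc d → ℝ}
    (hf : Continuous f) (hg : Continuous g) (h : ∀ y ∈ K, f y ≤ g y) (x : Euc d) :
    Mt K f x ≤ Mt K g x :=
  div_le_div_of_nonneg_right (Zt_mono hK hf hg h x) (Zt_one_pos hK x).le

lemma Mt_const {d : ℕ} {K : Set (Euc d)} (hK : SymBody K) (c : ℝ) (x : Euc d) :
    Mt K (fun _ => c) x = c := by
  have := Mt_smul (K := K) c (fun _ => 1) x
  simp only [mul_one] at this
  rw [this, Mt, div_self (Zt_one_pos hK x).ne', mul_one]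

lemma Mt_abs_le {d : ℕ} {K : Set (Euc d)} (hK : SymBody K) {f : Euc d → ℝ}
    (hf : Continuous f) {C : ℝ} (h : ∀ y ∈ K, |f y| ≤ C) (x : Euc d) : |Mt K f x| ≤ C := by
  rw [abs_le]
  constructor
  · have := Mt_mono hK continuous_const hf (fun y hy => (abs_le.1 (h y hy)).1) x
    rwa [Mt_const hK] at this
  · have := Mt_mono hK hf continuous_const (fun y hy => (abs_le.1 (h y hy)).2) x
    rwa [Mt_const hK] at this

lemma Mt_bdd {d : ℕ} {K : Set (Euc d)} (hK : SymBody K) {f : Euc d → ℝ}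
    (hf : Continuous f) : ∃ C, 0 ≤ C ∧ ∀ x, |Mt K f x| ≤ C := by
  obtain ⟨C, hC⟩ := hK.compact.exists_bound_of_continuousOn hf.continuousOn
  exact ⟨|C|, abs_nonneg _, Mt_abs_le hK hf fun y hy => (hC y hy).trans (le_abs_self C)⟩

lemma Mt_sum {d : ℕ} {K : Set (Euc d)} (hK : SymBody K) {ι : Type*} (s : Finset ι)
    (f : ι → Euc d → ℝ)
    (hf : ∀ i, Continuous (f i)) (x : Euc d) :
    Mt K (fun y => ∑ i ∈ s, f i y) x = ∑ i ∈ s, Mt K (f i) x := by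
  classical
  induction s using Finset.induction_on with
  | empty => simpa using Mt_const hK 0 x
  | insert a s ha ih =>
    simp only [Finset.sum_insert ha]
    rw [Mt_add hK (hf a) (continuous_finsetSum _ fun i _ => hf i), ih]

lemma Mt_hasFDerivAt {d : ℕ} {K : Set (Euc d)} (hK : SymBody K) {f : Euc d → ℝ}
    (hf : Continuous f) (x : Euc d) :
    ∃ L : Euc d →L[ℝ] ℝ, HasFDerivAt (Mt K f) L x ∧
      ∀ v, L v = Mt K (fun y => f y * ⟪v, y⟫) x - Mt K f x * Mt K (fun y => ⟪v, y⟫) x := by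
  obtain ⟨L, hL, hL'⟩ := Zt_hasFDerivAt hK.compact hf x
  obtain ⟨L1, hL1, hL1'⟩ := Zt_hasFDerivAt hK.compact (f := fun _ => (1:ℝ)) continuous_const x
  have hz := (Zt_one_pos hK x).ne'
  have := HasFDerivAt.mul hL ((hasDerivAt_inv hz).comp_hasFDerivAt x hL1)
  refine ⟨_, this.congr_of_eventuallyEq (Filter.Eventually.of_forall fun z => ?_), ?_⟩
  · simp [Mt, div_eq_mul_inv]
  · intro v
    simp only [_root_.add_apply, _root_.smul_apply, hL', hL1', Mt,
      smul_eq_mul, one_mul, Function.comp]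
    field_simp
    ring

/-- variance is positive -/
lemma Mt_pos {d : ℕ} {K : Set (Euc d)} (hK : SymBody K) {f : Euc d → ℝ}
    (hf : Continuous f) (h0 : ∀ y, 0 ≤ f y) (hne : ∃ y ∈ interior K, f y ≠ 0) (x : Euc d) :
    0 < Mt K f x := by
  refine div_pos ?_ (Zt_one_pos hK x)
  unfold Zt
  rw [setIntegral_pos_iff_support_of_nonneg_ae]
  · have : Function.support (fun y : Euc d => f y * Real.exp ⟪x, y⟫) = {y | f y ≠ 0} := by
      ext y; simp [Real.exp_ne_zero]
    rw [this]
    have ho : IsOpen ({y | f y ≠ 0} ∩ interior K) :=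
      (isOpen_ne_fun hf continuous_const).inter isOpen_interior
    obtain ⟨y, hy, hy'⟩ := hne
    refine lt_of_lt_of_le (ho.measure_pos volume ⟨y, hy', hy⟩) (measure_mono ?_)
    exact inter_subset_inter_right _ interior_subset
  · exact Filter.Eventually.of_forall fun y => mul_nonneg (h0 y) (Real.exp_nonneg _)
  · exact Zt_integrable hK.compact hf x

open Set MeasureTheory Metric
open scoped Pointwise RealInnerProductSpace ENNReal


def hs {d : ℕ} (K : Set (Euc d)) (x : Euc d) : ℝ := sSup ((fun y => ⟪x, y⟫) '' K)

lemma le_hs {d : ℕ} {K : Set (Euc d)} (hK : IsCompact K) (x : Euc d) {y : Euc d} (hy : y ∈ K) :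
    ⟪x, y⟫ ≤ hs K x :=
  le_csSup (hK.image (by fun_prop)).bddAbove ⟨y, hy, rfl⟩

lemma hs_le {d : ℕ} {K : Set (Euc d)} (hne : K.Nonempty) {x : Euc d} {c : ℝ}
    (h : ∀ y ∈ K, ⟪x, y⟫ ≤ c) : hs K x ≤ c := by
  refine csSup_le (hne.image _) ?_
  rintro _ ⟨y, hy, rfl⟩
  exact h y hy

lemma hs_exists {d : ℕ} {K : Set (Euc d)} (hK : IsCompact K) (hne : K.Nonempty) (x : Euc d) :
    ∃ y ∈ K, ⟪x, y⟫ = hs K x := by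
  obtain ⟨y, hy, h⟩ := hK.exists_sSup_image_eq hne (f := fun y => ⟪x, y⟫) (by fun_prop)
  exact ⟨y, hy, h.symm⟩

lemma hs_add_le {d : ℕ} {K : Set (Euc d)} (hK : IsCompact K) (hne : K.Nonempty) (x x' : Euc d) :
    hs K (x + x') ≤ hs K x + hs K x' := by
  refine hs_le hne fun y hy => ?_
  rw [inner_add_left]
  exact add_le_add (le_hs hK x hy) (le_hs hK x' hy)

lemma hs_smul {d : ℕ} {K : Set (Euc d)} (hK : IsCompact K) (hne : K.Nonempty) {c : ℝ}
    (hc : 0 ≤ c) (x : Euc d) : hs K (c • x) = c * hs K x := by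
  apply le_antisymm
  · refine hs_le hne fun y hy => ?_
    rw [real_inner_smul_left]
    exact mul_le_mul_of_nonneg_left (le_hs hK x hy) hc
  · obtain ⟨y, hy, h⟩ := hs_exists hK hne x
    rw [← h, ← real_inner_smul_left]
    exact le_hs hK _ hy

lemma hs_continuous {d : ℕ} {K : Set (Euc d)} (hK : IsCompact K) (hne : K.Nonempty) :
    Continuous (hs K) := by
  obtain ⟨R, hR⟩ := hK.isBounded.exists_norm_le
  have key : ∀ x x', hs K x - hs K x' ≤ |R| * ‖x - x'‖ := by
    intro x x'
    obtain ⟨y, hy, h⟩ := hs_exists hK hne x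
    have h1 := le_hs hK x' hy
    have h2 : ⟪x, y⟫ - ⟪x', y⟫ ≤ ‖x - x'‖ * ‖y‖ := by
      rw [← inner_sub_left]; exact real_inner_le_norm _ _
    have h3 : ‖x - x'‖ * ‖y‖ ≤ |R| * ‖x - x'‖ := by
      rw [mul_comm]
      exact mul_le_mul_of_nonneg_right ((hR y hy).trans (le_abs_self R)) (norm_nonneg _)
    linarith
  have : LipschitzWith (Real.toNNReal |R|) (hs K) := by
    refine LipschitzWith.of_dist_le_mul fun x x' => ?_
    rw [Real.dist_eq, dist_eq_norm, Real.coe_toNNReal _ (abs_nonneg R), abs_le]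
    constructor
    · have := key x' x
      rw [norm_sub_rev] at this
      linarith
    · exact key x x'
  exact this.continuous

lemma mem_of_hs {d : ℕ} {K : Set (Euc d)} (hK : IsCompact K) (hc : Convex ℝ K)
    (hne : K.Nonempty) {x : Euc d}
    (h : ∀ v, ⟪v, x⟫ ≤ hs K v) : x ∈ K := by
  by_contra hx
  obtain ⟨f, u, hf, hu⟩ := geometric_hahn_banach_closed_point hc hK.isClosed hx
  obtain ⟨v, hv⟩ := (InnerProductSpace.toDual ℝ (Euc d)).surjective f
  have hfv : ∀ z, f z = ⟪v, z⟫ := fun z => by rw [← hv]; simp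
  obtain ⟨y, hy, hy'⟩ := hs_exists hK hne v
  have h1 := hf y hy
  have h2 := h v
  rw [hfv] at h1 hu
  linarith

lemma SymBody.ne {d : ℕ} {K : Set (Euc d)} (hK : SymBody K) : K.Nonempty :=
  hK.int_ne.mono interior_subset

lemma hs_nonneg {d : ℕ} {K : Set (Euc d)} (hK : SymBody K) (x : Euc d) : 0 ≤ hs K x := by
  obtain ⟨y, hy⟩ := hK.ne
  have h1 := le_hs hK.compact x hy
  have h2 := le_hs hK.compact x (hK.symm y hy)
  rw [inner_neg_right] at h2
  linarith

lemma SymBody.zero_int {d : ℕ} {K : Set (Euc d)} (hK : SymBody K) : (0 : Euc d) ∈ interior K := by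
  obtain ⟨y, hy⟩ := hK.int_ne
  have h := hK.conv.openSegment_interior_self_subset_interior hy
    (hK.symm y (interior_subset hy))
  apply h
  exact ⟨1/2, 1/2, by norm_num, by norm_num, by norm_num, by simp⟩

lemma hs_coercive {d : ℕ} {K : Set (Euc d)} (hK : SymBody K) :
    ∃ δ > 0, ∀ x, δ * ‖x‖ ≤ hs K x := by
  obtain ⟨r, hr, hb⟩ := Metric.nhds_basis_closedBall.mem_iff.1 (mem_interior_iff_mem_nhds.1 hK.zero_int)
  refine ⟨r, hr, fun x => ?_⟩
  rcases eq_or_ne x 0 with rfl | hx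
  · simpa using hs_nonneg hK 0
  have hx' : ‖x‖ ≠ 0 := norm_ne_zero_iff.2 hx
  have : (r / ‖x‖) • x ∈ K := by
    apply hb
    rw [mem_closedBall_zero_iff, norm_smul, Real.norm_of_nonneg (by positivity)]
    field_simp
    rfl
  have h := le_hs hK.compact x this
  rw [real_inner_smul_right, real_inner_self_eq_norm_sq] at h
  refine le_trans (le_of_eq ?_) h
  field_simp

/-- gradient of the log-Laplace transform -/
def grad {d : ℕ} (K : Set (Euc d)) (x : Euc d) : Euc d :=
  WithLp.toLp 2 (fun i => Mt K (fun y => y i) x)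

def Amat {d : ℕ} (K : Set (Euc d)) (x : Euc d) : Matrix (Fin d) (Fin d) ℝ :=
  Matrix.of fun i j => Mt K (fun y => y i * y j) x - Mt K (fun y => y i) x * Mt K (fun y => y j) x

lemma inner_grad {d : ℕ} {K : Set (Euc d)} (hK : SymBody K) (v x : Euc d) :
    ⟪v, grad K x⟫ = Mt K (fun y => ⟪v, y⟫) x := by
  have h : (fun y : Euc d => ⟪v, y⟫) = fun y => ∑ i, v i * y i := by
    ext y; simp [PiLp.inner_apply, mul_comm]
  rw [h, Mt_sum hK Finset.univ (fun i y => v i * y i) (fun i => by fun_prop)]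
  simp only [Mt_smul]
  simp [PiLp.inner_apply, grad, mul_comm]

lemma grad_mem {d : ℕ} {K : Set (Euc d)} (hK : SymBody K) (x : Euc d) : grad K x ∈ K := by
  refine mem_of_hs hK.compact hK.conv hK.ne fun v => ?_
  rw [inner_grad hK]
  have := Mt_mono hK (f := fun y => ⟪v, y⟫) (by fun_prop) (continuous_const (y := hs K v))
    (fun y hy => le_hs hK.compact v hy) x
  rwa [Mt_const hK] at this

lemma coord_hasFDerivAt {d : ℕ} {K : Set (Euc d)} (hK : SymBody K) (i : Fin d) (x : Euc d) :
    ∃ L : Euc d →L[ℝ] ℝ, HasFDerivAt (Mt K (fun y => y i)) L x ∧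
      ∀ v, L v = ∑ j, Amat K x i j * v j := by
  obtain ⟨L, hL, h⟩ := Mt_hasFDerivAt hK (f := fun y => y i) (by fun_prop) x
  refine ⟨L, hL, fun v => ?_⟩
  rw [h]
  have h1 : (fun y : Euc d => ⟪v, y⟫) = fun y => ∑ i, v i * y i := by
    ext y; simp [PiLp.inner_apply, mul_comm]
  have h2 : (fun y : Euc d => y i * ⟪v, y⟫) = fun y => ∑ j, v j * (y i * y j) := by
    ext y
    have := congrFun h1 y
    simp only at this
    rw [this, Finset.mul_sum]
    exact Finset.sum_congr rfl fun j _ => by ring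
  rw [h2, h1, Mt_sum hK Finset.univ (fun i y => v i * y i) (fun i => by fun_prop),
    Mt_sum hK Finset.univ (fun j y => v j * (y i * y j)) (fun i => by fun_prop)]
  simp only [Mt_smul, Amat, Matrix.of_apply]
  rw [Finset.mul_sum, ← Finset.sum_sub_distrib]
  exact Finset.sum_congr rfl fun j _ => by ring

lemma grad_hasFDerivAt {d : ℕ} {K : Set (Euc d)} (hK : SymBody K) (x : Euc d) :
    HasFDerivAt (grad K) (Matrix.toEuclideanCLM (𝕜 := ℝ) (Amat K x)) x := by
  rw [← hasFDerivWithinAt_univ, hasFDerivWithinAt_piLp]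
  intro i
  rw [hasFDerivWithinAt_univ]
  obtain ⟨L, hL, h⟩ := coord_hasFDerivAt hK i x
  have : (PiLp.proj (𝕜 := ℝ) 2 (fun _ : Fin d => ℝ) i).comp
      (Matrix.toEuclideanCLM (𝕜 := ℝ) (Amat K x)) = L := by
    ext v
    rw [h]
    simp [Matrix.ofLp_toEuclideanCLM, Matrix.mulVec, dotProduct]
  rw [this]
  exact hL

lemma toEuclideanCLM_det {d : ℕ} (A : Matrix (Fin d) (Fin d) ℝ) :
    (Matrix.toEuclideanCLM (𝕜 := ℝ) A).det = A.det := by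
  have : ((Matrix.toEuclideanCLM (𝕜 := ℝ) A : Euc d →L[ℝ] Euc d) : Euc d →ₗ[ℝ] Euc d)
      = Matrix.toLin (PiLp.basisFun 2 ℝ (Fin d)) (PiLp.basisFun 2 ℝ (Fin d)) A := by
    rw [← Matrix.toLpLin_eq_toLin]
    rfl
  rw [ContinuousLinearMap.det, this, LinearMap.det_toLin]

lemma quad_Amat {d : ℕ} {K : Set (Euc d)} (hK : SymBody K) (v x : Euc d) :
    ⟪v, Matrix.toEuclideanCLM (𝕜 := ℝ) (Amat K x) v⟫ =
      Mt K (fun y => (⟪v, y⟫ - ⟪v, grad K x⟫) ^ 2) x := by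
  -- derivative of `⟪v, grad⟫` computed in two ways
  obtain ⟨L, hL, h⟩ := Mt_hasFDerivAt hK (f := fun y => ⟪v, y⟫) (by fun_prop) x
  have h1 := (innerSL ℝ v).hasFDerivAt.comp x (grad_hasFDerivAt hK x)
  have h2 : (innerSL ℝ v) ∘ grad K = Mt K (fun y => ⟪v, y⟫) := by
    ext z; simp [inner_grad hK]
  rw [h2] at h1
  have h3 := congrArg (fun T : Euc d →L[ℝ] ℝ => T v) (h1.unique hL)
  simp only [ContinuousLinearMap.comp_apply, innerSL_apply_apply] at h3
  rw [h3, h, inner_grad hK]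
  set m := Mt K (fun y => ⟪v, y⟫) x
  have h4 : (fun y : Euc d => (⟪v, y⟫ - m) ^ 2) =
      fun y => (⟪v, y⟫ * ⟪v, y⟫ + (-2 * m) * ⟪v, y⟫) + m ^ 2 := by
    ext y; ring
  rw [h4, Mt_add hK (by fun_prop) (by fun_prop), Mt_add hK (by fun_prop) (by fun_prop), Mt_smul,
    Mt_const hK]
  ring

lemma quad_Amat_pos {d : ℕ} {K : Set (Euc d)} (hK : SymBody K) {v : Euc d} (hv : v ≠ 0)
    (x : Euc d) : 0 < ⟪v, Matrix.toEuclideanCLM (𝕜 := ℝ) (Amat K x) v⟫ := by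
  rw [quad_Amat hK]
  refine Mt_pos hK (by fun_prop) (fun y => sq_nonneg _) ?_ x
  by_contra hcon
  push Not at hcon
  obtain ⟨r, hr, hb⟩ := Metric.nhds_basis_closedBall.mem_iff.1
    (isOpen_interior.mem_nhds hK.zero_int)
  have hv' : 0 < ‖v‖ := norm_pos_iff.2 hv
  have h0 := hcon 0 hK.zero_int
  have h1 := hcon ((r / ‖v‖) • v) (hb (by
    rw [mem_closedBall_zero_iff, norm_smul, Real.norm_of_nonneg (by positivity)]
    field_simp
    rfl))
  rw [inner_zero_right] at h0
  have h2 : ⟪v, grad K x⟫ = 0 := by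
    have := pow_eq_zero_iff (two_ne_zero) |>.1 h0
    linarith
  rw [h2, sub_zero] at h1
  have h3 := pow_eq_zero_iff (two_ne_zero) |>.1 h1
  rw [real_inner_smul_right, real_inner_self_eq_norm_sq] at h3
  have : 0 < r / ‖v‖ * ‖v‖ ^ 2 := by positivity
  linarith

lemma grad_strict {d : ℕ} {K : Set (Euc d)} (hK : SymBody K) {x u : Euc d} (h : x ≠ u) :
    0 < ⟪x - u, grad K x - grad K u⟫ := by
  have hv : x - u ≠ 0 := sub_ne_zero.2 h
  set v := x - u with hvdef
  have hd : ∀ s : ℝ, HasDerivAt (fun s : ℝ => ⟪v, grad K (u + s • v)⟫)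
      ⟪v, Matrix.toEuclideanCLM (𝕜 := ℝ) (Amat K (u + s • v)) v⟫ s := by
    intro s
    have h1 : HasDerivAt (fun s : ℝ => u + s • v) v s := by
      simpa using ((hasDerivAt_id s).smul_const v).const_add u
    have h2 := (grad_hasFDerivAt hK (u + s • v)).comp_hasDerivAt s h1
    have h3 := (innerSL ℝ v).hasFDerivAt.comp_hasDerivAt s h2
    exact h3
  have hm : StrictMono (fun s : ℝ => ⟪v, grad K (u + s • v)⟫) := by
    refine strictMono_of_deriv_pos fun s => ?_
    rw [(hd s).deriv]
    exact quad_Amat_pos hK hv _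
  have := hm (zero_lt_one)
  simp only [zero_smul, add_zero, one_smul] at this
  rw [hvdef, add_sub_cancel, ← hvdef] at this
  rw [inner_sub_right]
  linarith

lemma grad_inj {d : ℕ} {K : Set (Euc d)} (hK : SymBody K) : Function.Injective (grad K) := by
  intro x u h
  by_contra hne
  have := grad_strict hK hne
  rw [h, sub_self, inner_zero_right] at this
  exact lt_irrefl _ this

lemma lintegral_det_le {d : ℕ} {F : Euc d → Euc d} {F' : Euc d → Matrix (Fin d) (Fin d) ℝ}
    (hF : ∀ x, HasFDerivAt F (Matrix.toEuclideanCLM (𝕜 := ℝ) (F' x)) x)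
    (hinj : Function.Injective F) {S : Set (Euc d)} (hS : ∀ x, F x ∈ S) :
    ∫⁻ x, ENNReal.ofReal |(F' x).det| ≤ volume S := by
  have := lintegral_image_eq_lintegral_abs_det_fderiv_mul volume MeasurableSet.univ
    (fun x _ => (hF x).hasFDerivWithinAt) hinj.injOn (fun _ => 1)
  simp only [mul_one, Measure.restrict_univ, toEuclideanCLM_det, lintegral_one] at this
  rw [← this, Measure.restrict_apply_univ]
  apply measure_mono
  rintro _ ⟨x, _, rfl⟩
  exact hS x

lemma lintegral_det_grad {d : ℕ} {K : Set (Euc d)} (hK : SymBody K) :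
    ∫⁻ x, ENNReal.ofReal |(Amat K x).det| ≤ volume K :=
  lintegral_det_le (grad_hasFDerivAt hK) (grad_inj hK) (grad_mem hK)

lemma lintegral_det_pair {d : ℕ} {K : Set (Euc d)} (hK : SymBody K) (p : Euc d) :
    ∫⁻ x, ENNReal.ofReal |((1/2 : ℝ) • (Amat K x + Amat K (p - x))).det| ≤ volume K := by
  refine lintegral_det_le (F := fun x => (1/2 : ℝ) • (grad K x - grad K (p - x))) ?_ ?_ ?_
  · intro x
    have h1 : HasFDerivAt (fun x : Euc d => p - x) (-ContinuousLinearMap.id ℝ (Euc d)) x :=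
      (hasFDerivAt_id x).const_sub p
    have h2 := ((grad_hasFDerivAt hK x).sub
      ((grad_hasFDerivAt hK (p - x)).comp x h1)).const_smul (1/2 : ℝ)
    have e : Matrix.toEuclideanCLM (𝕜 := ℝ) ((1/2 : ℝ) • (Amat K x + Amat K (p - x))) =
        (1/2 : ℝ) • (Matrix.toEuclideanCLM (𝕜 := ℝ) (Amat K x) -
          (Matrix.toEuclideanCLM (𝕜 := ℝ) (Amat K (p - x))).comp
            (-ContinuousLinearMap.id ℝ (Euc d))) := by
      refine ContinuousLinearMap.ext fun v => ?_
      simp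
    rw [e]
    exact h2
  · intro x u h
    have h' : grad K x - grad K (p - x) = grad K u - grad K (p - u) :=
      smul_right_injective _ (by norm_num : (1/2 : ℝ) ≠ 0) h
    by_contra hne
    have h1 := grad_strict hK hne
    have h2 := grad_strict hK (x := p - u) (u := p - x) (fun h => hne (by
      have := sub_right_injective h; exact this.symm))
    have h3 : grad K x - grad K u = grad K (p - x) - grad K (p - u) := by
      rw [sub_eq_sub_iff_add_eq_add] at h' ⊢
      rw [h', add_comm]
    have h4 : p - u - (p - x) = x - u := by abel
    rw [h4] at h2
    rw [h3, inner_sub_right] at h1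
    rw [inner_sub_right] at h2
    linarith
  · intro x
    have := hK.conv (grad_mem hK x) (hK.symm _ (grad_mem hK (p - x)))
      (by norm_num : (0:ℝ) ≤ 1/2) (by norm_num : (0:ℝ) ≤ 1/2) (by norm_num)
    rw [← smul_add, ← sub_eq_add_neg] at this
    exact this

open Set MeasureTheory Metric
open scoped Pointwise RealInnerProductSpace ENNReal


/-- the polar-volume functional `∫ exp (-h_K)` -/
def IK {d : ℕ} (K : Set (Euc d)) : ℝ≥0∞ := ∫⁻ p, ENNReal.ofReal (Real.exp (-(hs K p)))

lemma Mt_jensen {d : ℕ} {K : Set (Euc d)} (hK : SymBody K) {u : Euc d → ℝ}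
    (hu : Continuous u) (x : Euc d) :
    Real.exp (-(Mt K u x)) ≤ Mt K (fun y => Real.exp (-(u y))) x := by
  set m := Mt K u x with hm
  have h1 : ∀ y ∈ K, (Real.exp (-m) * (1 + m)) + (-Real.exp (-m)) * u y ≤ Real.exp (-(u y)) := by
    intro y _
    have h2 := Real.add_one_le_exp (m - u y)
    have h3 : Real.exp (-(u y)) = Real.exp (-m) * Real.exp (m - u y) := by
      rw [← Real.exp_add]; congr 1; ring
    rw [h3]
    have := mul_le_mul_of_nonneg_left h2 (Real.exp_nonneg (-m))
    linarith
  have h4 := Mt_mono hK (by fun_prop) (by fun_prop) h1 x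
  rw [Mt_add hK (by fun_prop) (by fun_prop), Mt_const hK, Mt_smul, ← hm] at h4
  linarith

lemma vol_ne_top {d : ℕ} {K : Set (Euc d)} (hK : SymBody K) : volume K ≠ ∞ :=
  hK.compact.measure_lt_top.ne

lemma volr_pos {d : ℕ} {K : Set (Euc d)} (hK : SymBody K) : 0 < (volume K).toReal :=
  ENNReal.toReal_pos (vol_pos_of hK).ne' (vol_ne_top hK)

lemma Zt_lower {d : ℕ} {K : Set (Euc d)} (hK : SymBody K) (x : Euc d) :
    ((1/4 : ℝ)) ^ d * Real.exp (hs K x / 2) * (volume K).toReal ≤ Zt K (fun _ => 1) x := by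
  obtain ⟨p, hp, hpx⟩ := hs_exists hK.compact hK.ne x
  set S : Set (Euc d) := (3/4 : ℝ) • p +ᵥ (1/4 : ℝ) • K with hS
  have hSc : IsCompact S := (hK.compact.smul (1/4 : ℝ)).vadd _
  have hSK : S ⊆ K := by
    rintro _ ⟨_, ⟨y, hy, rfl⟩, rfl⟩
    exact hK.conv hp hy (by norm_num) (by norm_num) (by norm_num)
  have hSv : (volume S).toReal = (1/4 : ℝ) ^ d * (volume K).toReal := by
    rw [hS, measure_vadd, Measure.addHaar_smul]
    simp
  have hlow : ∀ y ∈ S, Real.exp (hs K x / 2) ≤ 1 * Real.exp ⟪x, y⟫ := by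
    rintro _ ⟨_, ⟨y, hy, rfl⟩, rfl⟩
    rw [one_mul]
    apply Real.exp_le_exp.2
    have h2 := le_hs hK.compact x (hK.symm y hy)
    simp only [vadd_eq_add, inner_add_right, real_inner_smul_right, hpx] at h2 ⊢
    rw [inner_neg_right] at h2
    linarith
  have h1 : ∫ y in S, Real.exp (hs K x / 2) ≤ ∫ y in S, 1 * Real.exp ⟪x, y⟫ :=
    setIntegral_mono_on (by simp [hSc.measure_lt_top]) (Zt_integrable hSc continuous_const x)
      hSc.measurableSet hlow
  have h2 : ∫ y in S, 1 * Real.exp ⟪x, y⟫ ≤ Zt K (fun _ => 1) x := by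
    refine setIntegral_mono_set (Zt_integrable hK.compact continuous_const x) ?_ ?_
    · exact Filter.Eventually.of_forall fun y => by simp [Real.exp_nonneg]
    · exact hSK.eventuallyLE
  rw [setIntegral_const, Measure.real, hSv, smul_eq_mul] at h1
  nlinarith

lemma exp_grad_le {d : ℕ} {K : Set (Euc d)} (hK : SymBody K) (x : Euc d) :
    Real.exp (-⟪x, grad K x⟫) ≤ 4 ^ d * Real.exp (-(hs K x / 2)) := by
  have h1 := Mt_jensen hK (u := fun y => ⟪x, y⟫) (by fun_prop) x
  rw [inner_grad hK]
  refine h1.trans ?_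
  have h2 : Zt K (fun y => Real.exp (-⟪x, y⟫)) x = (volume K).toReal := by
    unfold Zt
    have : ∀ y : Euc d, Real.exp (-⟪x, y⟫) * Real.exp ⟪x, y⟫ = 1 := fun y => by
      rw [← Real.exp_add]; simp
    simp only [this]
    simp [Measure.real]
  rw [Mt, h2, div_le_iff₀ (Zt_one_pos hK x)]
  have h3 := mul_le_mul_of_nonneg_left (Zt_lower hK x)
    (by positivity : 0 ≤ 4 ^ d * Real.exp (-(hs K x / 2)))
  refine le_trans (le_of_eq ?_) h3
  have e1 : Real.exp (-(hs K x / 2)) * Real.exp (hs K x / 2) = 1 := by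
    rw [← Real.exp_add]; simp
  have e2 : (4:ℝ) ^ d * (1/4) ^ d = 1 := by rw [← mul_pow]; norm_num
  calc (volume K).toReal = ((4:ℝ) ^ d * (1/4) ^ d) *
      (Real.exp (-(hs K x / 2)) * Real.exp (hs K x / 2)) * (volume K).toReal := by
        rw [e1, e2]; ring
    _ = _ := by ring

lemma inner_grad_lower {d : ℕ} {K : Set (Euc d)} (hK : SymBody K) (x : Euc d) :
    hs K x / 2 - d * Real.log 4 ≤ ⟪x, grad K x⟫ := by
  have h := exp_grad_le hK x
  have : (4:ℝ) ^ d * Real.exp (-(hs K x / 2)) = Real.exp (d * Real.log 4 - hs K x / 2) := by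
    rw [sub_eq_add_neg, Real.exp_add, mul_comm (d:ℝ), Real.exp_mul, Real.exp_log (by norm_num)]
    simp
  rw [this, Real.exp_le_exp] at h
  linarith

lemma Amat_posDef {d : ℕ} {K : Set (Euc d)} (hK : SymBody K) (x : Euc d) :
    (Amat K x).PosDef := by
  refine Matrix.PosDef.of_dotProduct_mulVec_pos ?_ ?_
  · ext i j
    simp [Amat, mul_comm]
  · intro v hv
    have h := quad_Amat_pos hK (v := WithLp.toLp 2 v) (by simpa using hv) x
    refine lt_of_lt_of_eq h ?_
    simp [PiLp.inner_apply, dotProduct, mul_comm]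

open scoped MatrixOrder in
lemma exists_whiten {d : ℕ} {A : Matrix (Fin d) (Fin d) ℝ} (hA : A.PosDef) :
    ∃ T : Matrix (Fin d) (Fin d) ℝ, T * A * star T = 1 := by
  obtain ⟨B, hB⟩ := CStarAlgebra.nonneg_iff_eq_star_mul_self.mp hA.posSemidef.nonneg
  have hdet : IsUnit B.det := by
    have h1 := hA.det_pos
    rw [hB, Matrix.det_mul] at h1
    exact isUnit_iff_ne_zero.2 fun h => by rw [h, mul_zero] at h1; exact lt_irrefl _ h1
  refine ⟨star B⁻¹, ?_⟩
  have h2 : B * B⁻¹ = 1 := Matrix.mul_nonsing_inv B hdet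
  have h3 : star B⁻¹ * star B = 1 := by rw [← star_mul, h2, star_one]
  rw [hB, star_star, ← mul_assoc, h3, one_mul, h2]

lemma lintegral_comp_lin {d : ℕ} (T : Euc d →L[ℝ] Euc d) (hT : T.det ≠ 0) {f : Euc d → ℝ≥0∞}
    (hf : Measurable f) : ∫⁻ y, f (T y) = ENNReal.ofReal |T.det⁻¹| * ∫⁻ y, f y := by
  have h := Measure.map_linearMap_addHaar_eq_smul_addHaar (volume : Measure (Euc d))
    (f := (T : Euc d →ₗ[ℝ] Euc d)) hT
  have h2 := lintegral_map (μ := volume) hf T.continuous.measurable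
  rw [← h2]
  have h3 : Measure.map (⇑T) (volume : Measure (Euc d)) = ENNReal.ofReal |T.det⁻¹| • volume := h
  rw [h3, lintegral_smul_measure, smul_eq_mul]

lemma lintegral_gauss (d : ℕ) : ∫⁻ v : Euc d, ENNReal.ofReal (Real.exp (-(‖v‖ ^ 2 / 2))) =
    ENNReal.ofReal ((2 * Real.pi) ^ (d / 2 : ℝ)) := by
  have h := GaussianFourier.integral_rexp_neg_mul_sq_norm (V := Euc d) (b := 1/2) (by norm_num)
  have e : (fun v : Euc d => Real.exp (-(1/2 : ℝ) * ‖v‖ ^ 2)) =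
      fun v => Real.exp (-(‖v‖ ^ 2 / 2)) := by
    ext v; congr 1; ring
  rw [e] at h
  rw [← ofReal_integral_eq_lintegral_ofReal, h]
  · simp [mul_comm]
  · refine Integrable.of_integral_ne_zero ?_
    rw [h]
    positivity
  · exact Filter.Eventually.of_forall fun v => Real.exp_nonneg _

lemma Mt_ofReal_le {d : ℕ} {K : Set (Euc d)} (hK : SymBody K) {g : Euc d → ℝ}
    (hg : Continuous g) (hg0 : ∀ y, 0 ≤ g y) (x : Euc d) :
    ENNReal.ofReal (Mt K g x) ≤
      ENNReal.ofReal (4 ^ d * Real.exp (hs K x / 2) / (volume K).toReal) *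
        ∫⁻ y, ENNReal.ofReal (g y) := by
  have hV := volr_pos hK
  have hZ := Zt_one_pos hK x
  have h1 : ENNReal.ofReal (Zt K g x) ≤
      ENNReal.ofReal (Real.exp (hs K x)) * ∫⁻ y, ENNReal.ofReal (g y) := by
    unfold Zt
    rw [ofReal_integral_eq_lintegral_ofReal (Zt_integrable hK.compact hg x)
      (Filter.Eventually.of_forall fun y => mul_nonneg (hg0 y) (Real.exp_nonneg _)),
      ← lintegral_const_mul _ (by fun_prop)]
    refine le_trans ?_ (setLIntegral_le_lintegral K _)
    refine setLIntegral_mono' hK.compact.measurableSet fun y hy => ?_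
    rw [← ENNReal.ofReal_mul (Real.exp_nonneg _), mul_comm]
    apply ENNReal.ofReal_le_ofReal
    exact mul_le_mul_of_nonneg_right (Real.exp_le_exp.2 (le_hs hK.compact x hy)) (hg0 y)
  rw [Mt, div_eq_inv_mul, ENNReal.ofReal_mul (by positivity)]
  refine (mul_le_mul_right h1 _).trans ?_
  rw [← mul_assoc, ← ENNReal.ofReal_mul (by positivity)]
  refine mul_le_mul_left ?_ _
  apply ENNReal.ofReal_le_ofReal
  rw [inv_mul_le_iff₀ hZ, ← mul_div_assoc, le_div_iff₀ hV]
  have h3 := mul_le_mul_of_nonneg_right (Zt_lower hK x)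
    (by positivity : 0 ≤ 4 ^ d * Real.exp (hs K x / 2))
  refine le_trans (le_of_eq ?_) h3
  have e1 : Real.exp (hs K x) = Real.exp (hs K x / 2) * Real.exp (hs K x / 2) := by
    rw [← Real.exp_add]; congr 1; ring
  have e2 : (1/4:ℝ) ^ d * 4 ^ d = 1 := by rw [← mul_pow]; norm_num
  calc _ = ((1/4:ℝ) ^ d * 4 ^ d) * (Real.exp (hs K x / 2) * Real.exp (hs K x / 2)) *
        (volume K).toReal := by rw [e1, e2]; ring
    _ = _ := by ring

lemma det_Amat_lower {d : ℕ} {K : Set (Euc d)} (hK : SymBody K) (x : Euc d) :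
    (volume K).toReal ^ 2 * Real.exp (-(hs K x)) ≤ 300 ^ d * (Amat K x).det := by
  obtain ⟨T, hT⟩ := exists_whiten (Amat_posDef hK x)
  set L := Matrix.toEuclideanCLM (𝕜 := ℝ) T with hL
  set S := Matrix.toEuclideanCLM (𝕜 := ℝ) (Amat K x) with hS
  have hLS : L * S * star L = 1 := by
    rw [hL, hS, ← map_star, ← map_mul, ← map_mul, hT, map_one]
  have hdet : T.det ^ 2 * (Amat K x).det = 1 := by
    have h := congrArg Matrix.det hT
    rw [Matrix.det_mul, Matrix.det_mul, Matrix.star_eq_conjTranspose, Matrix.det_conjTranspose,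
      Matrix.det_one] at h
    simp only [star_trivial] at h
    rw [← h]; ring
  have hTd : T.det ≠ 0 := fun h => by rw [h] at hdet; norm_num at hdet
  set m := grad K x with hm
  set u : Euc d → ℝ := fun y => ‖L (y - m)‖ ^ 2 / 2 with hu
  have huc : Continuous u := by fun_prop
  -- the mean of the quadratic form
  have hmean : Mt K u x = d / 2 := by
    have e1 : u = fun y => ∑ i, (1/2 : ℝ) *
        (⟪star L (EuclideanSpace.single i (1:ℝ)), y⟫ -
          ⟪star L (EuclideanSpace.single i (1:ℝ)), m⟫) ^ 2 := by
      ext y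
      simp only [hu]
      rw [EuclideanSpace.norm_sq_eq, Finset.sum_div]
      refine Finset.sum_congr rfl fun i _ => ?_
      rw [← inner_sub_right, ContinuousLinearMap.star_eq_adjoint,
        ContinuousLinearMap.adjoint_inner_left]
      rw [EuclideanSpace.inner_single_left]
      simp
      ring
    rw [e1, Mt_sum hK Finset.univ _ (fun i => by fun_prop)]
    simp only [Mt_smul, hm]
    have e2 : ∀ i : Fin d, Mt K (fun y => (⟪star L (EuclideanSpace.single i (1:ℝ)), y⟫ -
          ⟪star L (EuclideanSpace.single i (1:ℝ)), grad K x⟫) ^ 2) x = 1 := by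
      intro i
      rw [← quad_Amat hK, ← hS]
      conv_lhs => rw [ContinuousLinearMap.star_eq_adjoint, ContinuousLinearMap.adjoint_inner_left]
      have := congrArg (fun R : Euc d →L[ℝ] Euc d => R (EuclideanSpace.single i (1:ℝ))) hLS
      simp only [ContinuousLinearMap.star_eq_adjoint] at this
      have h3 : L (S (ContinuousLinearMap.adjoint L (EuclideanSpace.single i (1:ℝ)))) =
        EuclideanSpace.single i (1:ℝ) := this
      rw [h3]
      simp
    simp only [e2]
    simp
    ring
  have h1 := Mt_jensen hK huc x
  rw [hmean] at h1
  have h2 := Mt_ofReal_le hK (g := fun y => Real.exp (-(u y))) (by fun_prop)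
    (fun y => Real.exp_nonneg _) x
  have h3 : ∫⁻ y, ENNReal.ofReal (Real.exp (-(u y))) =
      ENNReal.ofReal (|T.det⁻¹| * (2 * Real.pi) ^ (d / 2 : ℝ)) := by
    have e1 := lintegral_sub_right_eq_self (μ := (volume : Measure (Euc d)))
      (fun y => ENNReal.ofReal (Real.exp (-(‖L y‖ ^ 2 / 2)))) m
    simp only [hu]
    rw [e1]
    have e2 := lintegral_comp_lin L (by rw [hL, toEuclideanCLM_det]; exact hTd)
      (f := fun y => ENNReal.ofReal (Real.exp (-(‖y‖ ^ 2 / 2)))) (by fun_prop)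
    rw [e2, lintegral_gauss, ← ENNReal.ofReal_mul (abs_nonneg _), hL, toEuclideanCLM_det]
  have hV := volr_pos hK
  rw [h3, ← ENNReal.ofReal_mul (by positivity)] at h2
  have h4 := (ENNReal.ofReal_le_ofReal h1).trans h2
  rw [ENNReal.ofReal_le_ofReal_iff (by positivity)] at h4
  set V := (volume K).toReal
  set D := (Amat K x).det
  set h := hs K x
  -- square
  have h5 := pow_le_pow_left₀ (Real.exp_nonneg _) h4 2
  have e1 : Real.exp (-((d:ℝ)/2)) ^ 2 = (Real.exp (-1)) ^ d := by
    rw [← Real.exp_nat_mul, ← Real.exp_nat_mul]; congr 1; push_cast; ring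
  have e2 : ((2 * Real.pi) ^ (d / 2 : ℝ)) ^ 2 = (2 * Real.pi) ^ d := by
    rw [← Real.rpow_natCast, ← Real.rpow_mul (by positivity), ← Real.rpow_natCast]
    congr 1; push_cast; ring
  have e3 : |T.det⁻¹| ^ 2 = D := by
    rw [sq_abs]; field_simp; linarith
  have e4 : Real.exp (h/2) ^ 2 = Real.exp h := by
    rw [← Real.exp_nat_mul]; congr 1; push_cast; ring
  have e5 : ((4:ℝ)^d)^2 = 16 ^ d := by rw [← pow_mul, mul_comm, pow_mul]; norm_num
  have hD : 0 < D := (Amat_posDef hK x).det_pos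
  have h6 : (Real.exp (-1)) ^ d ≤ 16 ^ d * Real.exp h / V ^ 2 * (D * (2 * Real.pi) ^ d) := by
    calc _ = Real.exp (-((d:ℝ)/2)) ^ 2 := e1.symm
      _ ≤ _ := h5
      _ = _ := by rw [mul_pow, mul_pow, div_pow, mul_pow, e2, e3, e4, e5]
  have h7 : V ^ 2 * Real.exp (-h) ≤ (32 * Real.pi * Real.exp 1) ^ d * D := by
    have e6 : Real.exp (-h) * Real.exp h = 1 := by rw [← Real.exp_add]; simp
    have e7 : Real.exp (-1) ^ d * Real.exp 1 ^ d = 1 := by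
      rw [← mul_pow, ← Real.exp_add]; simp
    have := mul_le_mul_of_nonneg_left h6
      (by positivity : 0 ≤ V ^ 2 * Real.exp (-h) * Real.exp 1 ^ d)
    calc V ^ 2 * Real.exp (-h) = V ^ 2 * Real.exp (-h) * (Real.exp (-1) ^ d * Real.exp 1 ^ d) := by
          rw [e7, mul_one]
      _ = V ^ 2 * Real.exp (-h) * Real.exp 1 ^ d * Real.exp (-1) ^ d := by ring
      _ ≤ _ := this
      _ = (Real.exp (-h) * Real.exp h) * ((16 * (2 * Real.pi) * Real.exp 1) ^ d * D) := by
          rw [mul_pow, mul_pow]; field_simp; rw [mul_pow, mul_pow]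
      _ = _ := by rw [e6, one_mul]; congr 2; ring
  refine h7.trans ?_
  apply mul_le_mul_of_nonneg_right _ hD.le
  apply pow_le_pow_left₀ (by positivity)
  have p1 := Real.pi_lt_d2
  have p2 := Real.exp_one_lt_d9
  have p3 := Real.pi_pos
  have p4 := Real.exp_pos 1
  nlinarith

/-- weak Blaschke-Santalo inequality -/
lemma santalo {d : ℕ} {K : Set (Euc d)} (hK : SymBody K) : volume K * IK K ≤ 300 ^ d := by
  have hV := volr_pos hK
  have hVe : ENNReal.ofReal (volume K).toReal = volume K := ENNReal.ofReal_toReal (vol_ne_top hK)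
  have h1 : volume K * volume K * IK K ≤ 300 ^ d * volume K := by
    unfold IK
    have hc := hs_continuous hK.compact hK.ne
    rw [← lintegral_const_mul _ (by fun_prop)]
    refine le_trans ?_ (mul_le_mul_right (lintegral_det_grad hK) _)
    rw [← lintegral_const_mul' _ _ (by simp)]
    refine lintegral_mono fun x => ?_
    rw [← hVe, ← ENNReal.ofReal_mul hV.le, ← ENNReal.ofReal_mul (by positivity)]
    have : (300:ℝ≥0∞) ^ d = ENNReal.ofReal (300 ^ d) := by
      rw [ENNReal.ofReal_pow (by norm_num)]; simp
    rw [this, ← ENNReal.ofReal_mul (by positivity)]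
    apply ENNReal.ofReal_le_ofReal
    have := det_Amat_lower hK x
    rw [abs_of_pos (Amat_posDef hK x).det_pos]
    linarith
  rw [mul_assoc, mul_comm] at h1
  exact (ENNReal.mul_le_mul_iff_left (vol_pos_of hK).ne' (vol_ne_top hK)).1 h1

open Set MeasureTheory Metric
open scoped Pointwise RealInnerProductSpace ENNReal


/-! ### Determinant algebra -/

lemma det_col_expand {n : ℕ} (W : Matrix (Fin n) (Fin n) ℂ) (c : Fin n → ℂ) (i : Fin n) :
    ∑ σ : Equiv.Perm (Fin n), ((Equiv.Perm.sign σ : ℤ) : ℂ) *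
      (c (σ i) * ∏ k ∈ Finset.univ.erase i, W (σ k) k) = (W.updateCol i c).det := by
  rw [Matrix.det_apply']
  refine Finset.sum_congr rfl fun σ _ => ?_
  congr 1
  rw [← Finset.mul_prod_erase Finset.univ _ (Finset.mem_univ i)]
  congr 1
  · simp
  · refine Finset.prod_congr rfl fun k hk => ?_
    rw [Matrix.updateCol_ne (Finset.ne_of_mem_erase hk)]

lemma det_col_mulVec {n : ℕ} (W : Matrix (Fin n) (Fin n) ℂ) (z : Fin n → ℂ) (i : Fin n) :
    (W.updateCol i (W.mulVec z)).det = W.det * z i := by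
  rw [← Matrix.cramer_apply, Matrix.cramer_eq_adjugate_mulVec, Matrix.mulVec_mulVec,
    Matrix.adjugate_mul, Matrix.smul_mulVec, Matrix.one_mulVec]
  rfl

lemma piola {n : ℕ} (W : Matrix (Fin n) (Fin n) ℂ) (T : Fin n → Fin n → Fin n → ℂ)
    (hT : ∀ l j k, T l j k = T j l k) (i : Fin n) :
    ∑ σ : Equiv.Perm (Fin n), ((Equiv.Perm.sign σ : ℤ) : ℂ) *
      ∑ k ∈ Finset.univ.erase i, (∏ l ∈ (Finset.univ.erase i).erase k, W (σ l) l) *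
        T (σ i) (σ k) k = 0 := by
  simp only [Finset.mul_sum]
  rw [Finset.sum_comm]
  refine Finset.sum_eq_zero fun k hk => ?_
  have hki : k ≠ i := Finset.ne_of_mem_erase hk
  refine Finset.sum_involution (fun σ _ => σ * Equiv.swap i k) ?_ ?_ ?_ ?_
  · intro σ _
    have h1 : (Equiv.Perm.sign (σ * Equiv.swap i k)) = - Equiv.Perm.sign σ := by
      rw [Equiv.Perm.sign_mul, Equiv.Perm.sign_swap hki.symm]; simp
    have h2 : ∏ l ∈ (Finset.univ.erase i).erase k, W ((σ * Equiv.swap i k) l) l =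
        ∏ l ∈ (Finset.univ.erase i).erase k, W (σ l) l := by
      refine Finset.prod_congr rfl fun l hl => ?_
      have hlk : l ≠ k := Finset.ne_of_mem_erase hl
      have hli : l ≠ i := Finset.ne_of_mem_erase (Finset.mem_of_mem_erase hl)
      rw [Equiv.Perm.mul_apply, Equiv.swap_apply_of_ne_of_ne hli hlk]
    rw [h1, h2, Equiv.Perm.mul_apply, Equiv.Perm.mul_apply, Equiv.swap_apply_left,
      Equiv.swap_apply_right, hT (σ k) (σ i) k]
    push_cast
    ring
  · intro σ _ _ h
    have := congrArg (fun τ : Equiv.Perm (Fin n) => σ⁻¹ (τ i)) h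
    simp at this
    exact hki this
  · intro σ _; exact Finset.mem_univ _
  · intro σ _
    simp [mul_assoc]

/-! ### Families of polynomial growth -/

structure Good {d : ℕ} (g : ℝ → Euc d × Euc d → ℂ) : Prop where
  diff : ∀ θ, Differentiable ℝ (g θ)
  bd : ∃ C : ℝ, ∃ N : ℕ, 0 ≤ C ∧ ∀ θ p, ‖g θ p‖ ≤ C * (1 + ‖p‖) ^ N ∧
    ‖fderiv ℝ (g θ) p‖ ≤ C * (1 + ‖p‖) ^ N

section GoodSec

variable {d : ℕ}

lemma Good.const {c : ℝ → ℂ} {C : ℝ} (hc : ∀ θ, ‖c θ‖ ≤ C) :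
    Good (d := d) (fun θ _ => c θ) := by
  have hC : 0 ≤ C := (norm_nonneg _).trans (hc 0)
  refine ⟨fun θ => differentiable_const _, C, 0, hC, fun θ p => ⟨?_, ?_⟩⟩
  · simpa using hc θ
  · simp [hC]

lemma Good.mul {g k : ℝ → Euc d × Euc d → ℂ} (hg : Good g) (hk : Good k) :
    Good (fun θ p => g θ p * k θ p) := by
  obtain ⟨C1, N1, hC1, h1⟩ := hg.bd
  obtain ⟨C2, N2, hC2, h2⟩ := hk.bd
  refine ⟨fun θ => (hg.diff θ).mul (hk.diff θ), 2 * (C1 * C2), N1 + N2, by positivity,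
    fun θ p => ?_⟩
  have hr : (0:ℝ) < 1 + ‖p‖ := by positivity
  have e : 2 * (C1 * C2) * (1 + ‖p‖) ^ (N1 + N2) =
      2 * ((C1 * (1 + ‖p‖) ^ N1) * (C2 * (1 + ‖p‖) ^ N2)) := by rw [pow_add]; ring
  obtain ⟨a1, b1⟩ := h1 θ p
  obtain ⟨a2, b2⟩ := h2 θ p
  have p1 : 0 ≤ C1 * (1 + ‖p‖) ^ N1 := by positivity
  have p2 : 0 ≤ C2 * (1 + ‖p‖) ^ N2 := by positivity
  rw [e]
  constructor
  · rw [norm_mul]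
    have := mul_le_mul a1 a2 (norm_nonneg _) p1
    nlinarith
  · rw [fderiv_fun_mul (hg.diff θ p) (hk.diff θ p)]
    refine (norm_add_le _ _).trans ?_
    rw [norm_smul, norm_smul]
    have q1 := mul_le_mul a1 b2 (norm_nonneg _) p1
    have q2 := mul_le_mul a2 b1 (norm_nonneg _) p2
    linarith

lemma Good.add {g k : ℝ → Euc d × Euc d → ℂ} (hg : Good g) (hk : Good k) :
    Good (fun θ p => g θ p + k θ p) := by
  obtain ⟨C1, N1, hC1, h1⟩ := hg.bd
  obtain ⟨C2, N2, hC2, h2⟩ := hk.bd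
  refine ⟨fun θ => (hg.diff θ).add (hk.diff θ), C1 + C2, N1 + N2, by positivity,
    fun θ p => ?_⟩
  have hr : (1:ℝ) ≤ 1 + ‖p‖ := by simp
  have m1 := mul_le_mul_of_nonneg_left (pow_le_pow_right₀ hr (Nat.le_add_right N1 N2)) hC1
  have m2 := mul_le_mul_of_nonneg_left (pow_le_pow_right₀ hr (Nat.le_add_left N2 N1)) hC2
  obtain ⟨a1, b1⟩ := h1 θ p
  obtain ⟨a2, b2⟩ := h2 θ p
  rw [add_mul]
  constructor
  · exact (norm_add_le _ _).trans (by linarith)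
  · rw [fderiv_fun_add (hg.diff θ p) (hk.diff θ p)]
    exact (norm_add_le _ _).trans (by linarith)

lemma Good.cmul {k : ℝ → Euc d × Euc d → ℂ} (c : ℂ) (hk : Good k) :
    Good (fun θ p => c * k θ p) :=
  (Good.const (c := fun _ => c) (fun _ => le_rfl)).mul hk

lemma Good.sub {g k : ℝ → Euc d × Euc d → ℂ} (hg : Good g) (hk : Good k) :
    Good (fun θ p => g θ p - k θ p) := by
  have := hg.add (hk.cmul (-1))
  simpa [sub_eq_add_neg] using this

lemma Good.sum {ι : Type*} (s : Finset ι) {g : ι → ℝ → Euc d × Euc d → ℂ}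
    (hg : ∀ i, Good (g i)) : Good (fun θ p => ∑ i ∈ s, g i θ p) := by
  classical
  induction s using Finset.induction_on with
  | empty => simpa using Good.const (d := d) (c := fun _ => 0) (C := 0) (by simp)
  | insert a s ha ih =>
    simp only [Finset.sum_insert ha]
    exact (hg a).add ih

lemma Good.prod {ι : Type*} (s : Finset ι) {g : ι → ℝ → Euc d × Euc d → ℂ}
    (hg : ∀ i, Good (g i)) : Good (fun θ p => ∏ i ∈ s, g i θ p) := by
  classical
  induction s using Finset.induction_on with
  | empty => simpa using Good.const (d := d) (c := fun _ => 1) (C := 1) (by simp)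
  | insert a s ha ih =>
    simp only [Finset.prod_insert ha]
    exact (hg a).mul ih

lemma Good.clm (L : Euc d × Euc d →L[ℝ] ℂ) : Good (fun _ p => L p) := by
  refine ⟨fun θ => L.differentiable, ‖L‖, 1, norm_nonneg _, fun θ p => ⟨?_, ?_⟩⟩
  · refine (L.le_opNorm p).trans ?_
    rw [pow_one]
    nlinarith [norm_nonneg L, norm_nonneg p]
  · have : fderiv ℝ (fun p => L p) p = L := L.fderiv
    rw [this, pow_one]
    nlinarith [norm_nonneg L, norm_nonneg p]

lemma Mt_fderiv_bdd {K : Set (Euc d)} (hK : SymBody K) {f : Euc d → ℝ}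
    (hf : Continuous f) : ∃ C, 0 ≤ C ∧ ∀ x, ‖fderiv ℝ (Mt K f) x‖ ≤ C := by
  obtain ⟨C, hC⟩ := hK.compact.exists_bound_of_continuousOn hf.continuousOn
  obtain ⟨R, hR⟩ := hK.compact.isBounded.exists_norm_le
  have hC' : ∀ y ∈ K, |f y| ≤ |C| := fun y hy => (hC y hy).trans (le_abs_self C)
  have hR' : ∀ v, ∀ y ∈ K, |⟪v, y⟫| ≤ ‖v‖ * |R| := fun v y hy =>
    (abs_real_inner_le_norm v y).trans
      (mul_le_mul_of_nonneg_left ((hR y hy).trans (le_abs_self R)) (norm_nonneg _))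
  refine ⟨2 * (|C| * |R|), by positivity, fun x => ?_⟩
  obtain ⟨L, hL, h⟩ := Mt_hasFDerivAt hK hf x
  rw [hL.fderiv]
  refine L.opNorm_le_bound (by positivity) fun v => ?_
  rw [h, Real.norm_eq_abs]
  have h1 : |Mt K (fun y => f y * ⟪v, y⟫) x| ≤ |C| * (‖v‖ * |R|) :=
    Mt_abs_le hK (by fun_prop) (fun y hy => by
      rw [abs_mul]; exact mul_le_mul (hC' y hy) (hR' v y hy) (abs_nonneg _) (abs_nonneg _)) x
  have h2 : |Mt K f x * Mt K (fun y => ⟪v, y⟫) x| ≤ |C| * (‖v‖ * |R|) := by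
    rw [abs_mul]
    exact mul_le_mul (Mt_abs_le hK hf hC' x) (Mt_abs_le hK (by fun_prop) (hR' v) x)
      (abs_nonneg _) (abs_nonneg _)
  exact (abs_sub _ _).trans (by linarith)

lemma good_Mt_aux {K : Set (Euc d)} (hK : SymBody K) {f : Euc d → ℝ}
    (hf : Continuous f) (π : Euc d × Euc d →L[ℝ] Euc d) :
    Good (fun _ p => (Mt K f (π p) : ℂ)) := by
  have hd : Differentiable ℝ (Mt K f) := fun x =>
    (Mt_hasFDerivAt hK hf x).choose_spec.1.differentiableAt
  have hh : ∀ p, HasFDerivAt (fun p => (Mt K f (π p) : ℂ))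
      (Complex.ofRealCLM.comp ((fderiv ℝ (Mt K f) (π p)).comp π)) p := fun p =>
    Complex.ofRealCLM.hasFDerivAt.comp p ((hd (π p)).hasFDerivAt.comp p π.hasFDerivAt)
  obtain ⟨C1, hC1, h1⟩ := Mt_bdd hK hf
  obtain ⟨C2, hC2, h2⟩ := Mt_fderiv_bdd hK hf
  refine ⟨fun θ p => (hh p).differentiableAt, C1 + C2 * ‖π‖, 0, by positivity,
    fun θ p => ⟨?_, ?_⟩⟩
  · have := h1 (π p)
    have h3 : 0 ≤ C2 * ‖π‖ := by positivity
    simp only [Complex.norm_real, Real.norm_eq_abs, pow_zero, mul_one]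
    linarith
  · rw [(hh p).fderiv]
    refine (ContinuousLinearMap.opNorm_comp_le _ _).trans ?_
    rw [Complex.ofRealCLM_norm, one_mul]
    refine (ContinuousLinearMap.opNorm_comp_le _ _).trans ?_
    have := mul_le_mul_of_nonneg_right (h2 (π p)) (norm_nonneg π)
    simp only [pow_zero, mul_one]
    linarith

end GoodSec

open Set MeasureTheory Metric
open scoped Pointwise RealInnerProductSpace ENNReal


section Homot

variable {d : ℕ}

/-- the d-bar derivative of a real-linear functional -/
def dbar (j : Fin d) (L : Euc d × Euc d →L[ℝ] ℂ) : ℂ :=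
  (1/2) * (L (EuclideanSpace.single j 1, 0) + Complex.I * L (0, EuclideanSpace.single j 1))

lemma dbar_add (j : Fin d) (L M : Euc d × Euc d →L[ℝ] ℂ) :
    dbar j (L + M) = dbar j L + dbar j M := by
  simp [dbar]; ring

lemma dbar_smul (j : Fin d) (c : ℂ) (M : Euc d × Euc d →L[ℝ] ℂ) :
    dbar j (c • M) = c * dbar j M := by
  simp [dbar]; ring

lemma dbar_sum {ι : Type*} (j : Fin d) (s : Finset ι) (L : ι → Euc d × Euc d →L[ℝ] ℂ) :
    dbar j (∑ i ∈ s, L i) = ∑ i ∈ s, dbar j (L i) := by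
  classical
  induction s using Finset.induction_on with
  | empty => simp [dbar]
  | insert a s ha ih => rw [Finset.sum_insert ha, Finset.sum_insert ha, dbar_add, ih]

lemma dbar_norm_le (j : Fin d) (L : Euc d × Euc d →L[ℝ] ℂ) : ‖dbar j L‖ ≤ ‖L‖ := by
  have h1 := L.le_opNorm (EuclideanSpace.single j 1, 0)
  have h2 := L.le_opNorm (0, EuclideanSpace.single j 1)
  simp at h1 h2
  rw [dbar, norm_mul]
  have h3 := norm_add_le (L (EuclideanSpace.single j 1, 0))
    (Complex.I * L (0, EuclideanSpace.single j 1))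
  rw [norm_mul, Complex.norm_I, one_mul] at h3
  norm_num
  linarith

def co1 (k : Fin d) : Euc d × Euc d →L[ℝ] ℂ :=
  Complex.ofRealCLM.comp ((EuclideanSpace.proj k).comp (ContinuousLinearMap.fst ℝ _ _))

def co2 (k : Fin d) : Euc d × Euc d →L[ℝ] ℂ :=
  Complex.ofRealCLM.comp ((EuclideanSpace.proj k).comp (ContinuousLinearMap.snd ℝ _ _))

lemma co1_apply (k : Fin d) (p : Euc d × Euc d) : co1 k p = (p.1 k : ℂ) := rfl
lemma co2_apply (k : Fin d) (p : Euc d × Euc d) : co2 k p = (p.2 k : ℂ) := rfl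

lemma dbar_co1 (j k : Fin d) : dbar j (co1 k) = (1/2) * (if k = j then 1 else 0) := by
  simp [dbar, co1_apply, apply_ite]

lemma dbar_co2 (j k : Fin d) : dbar j (co2 k) = (1/2) * (Complex.I * (if k = j then 1 else 0)) := by
  simp [dbar, co2_apply, apply_ite]

def zz (k : Fin d) (p : Euc d × Euc d) : ℂ := p.1 k + Complex.I * p.2 k
def zbar (k : Fin d) (p : Euc d × Euc d) : ℂ := p.1 k - Complex.I * p.2 k
def mm (K : Set (Euc d)) (k : Fin d) (p : Euc d × Euc d) : ℂ :=
  (Mt K (fun y => y k) p.1 : ℂ) - Complex.I * (Mt K (fun y => y k) p.2 : ℂ)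
def HH (K : Set (Euc d)) (j k : Fin d) (p : Euc d × Euc d) : ℂ :=
  (1/2) * ((Amat K p.1 k j : ℂ) + (Amat K p.2 k j : ℂ))

def aa (θ : ℝ) : ℂ := ((Real.cos θ ^ 2 : ℝ) : ℂ)
def bb (θ : ℝ) : ℂ := ((Real.sin θ ^ 2 : ℝ) : ℂ)
def ss (θ : ℝ) : ℂ := ((2 * Real.sin θ * Real.cos θ : ℝ) : ℂ)

def ww (K : Set (Euc d)) (θ : ℝ) (k : Fin d) (p : Euc d × Euc d) : ℂ :=
  aa θ * zbar k p + bb θ * mm K k p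
def vv (K : Set (Euc d)) (θ : ℝ) (k : Fin d) (p : Euc d × Euc d) : ℂ :=
  ss θ * (mm K k p - zbar k p)
def WW (K : Set (Euc d)) (θ : ℝ) (p : Euc d × Euc d) : Matrix (Fin d) (Fin d) ℂ :=
  Matrix.of fun j k => aa θ * (if k = j then 1 else 0) + bb θ * HH K j k p
def qq (K : Set (Euc d)) (θ : ℝ) (p : Euc d × Euc d) : ℂ :=
  (1/2) * ∑ k, zz k p * ww K θ k p

lemma aa_le (θ : ℝ) : ‖aa θ‖ ≤ 1 := by
  rw [aa, Complex.norm_real, Real.norm_eq_abs, abs_of_nonneg (sq_nonneg _)]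
  exact Real.cos_sq_le_one θ

lemma bb_le (θ : ℝ) : ‖bb θ‖ ≤ 1 := by
  rw [bb, Complex.norm_real, Real.norm_eq_abs, abs_of_nonneg (sq_nonneg _)]
  exact Real.sin_sq_le_one θ

lemma ss_le (θ : ℝ) : ‖ss θ‖ ≤ 1 := by
  rw [ss, Complex.norm_real, Real.norm_eq_abs, ← Real.sin_two_mul]
  exact Real.abs_sin_le_one _

lemma aa_deriv (θ : ℝ) : HasDerivAt aa (-ss θ) θ := by
  have h : HasDerivAt (fun θ => Real.cos θ ^ 2) (-(2 * Real.sin θ * Real.cos θ)) θ := by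
    have := (Real.hasDerivAt_cos θ).pow 2
    refine this.congr_deriv ?_
    simp; ring
  have h2 := h.ofReal_comp
  refine h2.congr_deriv ?_
  simp [ss]

lemma bb_deriv (θ : ℝ) : HasDerivAt bb (ss θ) θ := by
  have h : HasDerivAt (fun θ => Real.sin θ ^ 2) (2 * Real.sin θ * Real.cos θ) θ := by
    have := (Real.hasDerivAt_sin θ).pow 2
    refine this.congr_deriv ?_
    simp
  have h2 := h.ofReal_comp
  exact h2

lemma good_zz (k : Fin d) : Good (fun _ p => zz (d := d) k p) := by
  have := (Good.clm (co1 (d := d) k)).add ((Good.clm (co2 k)).cmul Complex.I)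
  exact this

lemma good_zbar (k : Fin d) : Good (fun _ p => zbar (d := d) k p) := by
  have := (Good.clm (co1 (d := d) k)).sub ((Good.clm (co2 k)).cmul Complex.I)
  exact this

lemma good_Mt1 {K : Set (Euc d)} (hK : SymBody K) {f : Euc d → ℝ} (hf : Continuous f) :
    Good (fun _ p => (Mt K f p.1 : ℂ)) := good_Mt_aux hK hf (ContinuousLinearMap.fst ℝ _ _)

lemma good_Mt2 {K : Set (Euc d)} (hK : SymBody K) {f : Euc d → ℝ} (hf : Continuous f) :
    Good (fun _ p => (Mt K f p.2 : ℂ)) := good_Mt_aux hK hf (ContinuousLinearMap.snd ℝ _ _)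

lemma good_mm {K : Set (Euc d)} (hK : SymBody K) (k : Fin d) : Good (fun _ p => mm K k p) :=
  (good_Mt1 hK (f := fun y => y k) (by fun_prop)).sub
    ((good_Mt2 hK (f := fun y => y k) (by fun_prop)).cmul Complex.I)

lemma good_HH {K : Set (Euc d)} (hK : SymBody K) (j k : Fin d) :
    Good (fun _ p => HH K j k p) := by
  have c1 : Continuous (fun y : Euc d => y k * y j) := by fun_prop
  have c2 : Continuous (fun y : Euc d => y k) := by fun_prop
  have c3 : Continuous (fun y : Euc d => y j) := by fun_prop
  have := (((good_Mt1 hK c1).sub ((good_Mt1 hK c2).mul (good_Mt1 hK c3))).add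
    ((good_Mt2 hK c1).sub ((good_Mt2 hK c2).mul (good_Mt2 hK c3)))).cmul (1/2)
  simpa [HH, Amat] using this

lemma good_ww {K : Set (Euc d)} (hK : SymBody K) (k : Fin d) : Good (fun θ p => ww K θ k p) :=
  ((Good.const aa_le).mul (good_zbar k)).add ((Good.const bb_le).mul (good_mm hK k))

lemma good_vv {K : Set (Euc d)} (hK : SymBody K) (k : Fin d) : Good (fun θ p => vv K θ k p) :=
  (Good.const ss_le).mul ((good_mm hK k).sub (good_zbar k))

lemma good_WW {K : Set (Euc d)} (hK : SymBody K) (j k : Fin d) :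
    Good (fun θ p => WW K θ p j k) :=
  (((Good.const aa_le).mul (Good.const (c := fun _ => if k = j then 1 else 0) (C := 1)
    (by intro; split_ifs <;> simp))).add
    ((Good.const bb_le).mul (good_HH hK j k)))

lemma good_qq {K : Set (Euc d)} (hK : SymBody K) : Good (fun θ p => qq K θ p) :=
  (Good.sum Finset.univ fun k => (good_zz k).mul (good_ww hK k)).cmul (1/2)

/-! derivatives -/

def Db (j : Fin d) (f : Euc d × Euc d → ℂ) (p : Euc d × Euc d) : ℂ := dbar j (fderiv ℝ f p)

lemma Db_mul (j : Fin d) {f g : Euc d × Euc d → ℂ} {p : Euc d × Euc d}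
    (hf : DifferentiableAt ℝ f p) (hg : DifferentiableAt ℝ g p) :
    Db j (fun p => f p * g p) p = f p * Db j g p + g p * Db j f p := by
  rw [Db, fderiv_fun_mul hf hg, dbar_add, dbar_smul, dbar_smul]; rfl

lemma Db_add (j : Fin d) {f g : Euc d × Euc d → ℂ} {p : Euc d × Euc d}
    (hf : DifferentiableAt ℝ f p) (hg : DifferentiableAt ℝ g p) :
    Db j (fun p => f p + g p) p = Db j f p + Db j g p := by
  rw [Db, fderiv_fun_add hf hg, dbar_add]; rfl

lemma Db_const (j : Fin d) (c : ℂ) (p : Euc d × Euc d) : Db j (fun _ => c) p = 0 := by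
  rw [Db, fderiv_const_apply]; simp [dbar]

lemma Db_cmul (j : Fin d) {g : Euc d × Euc d → ℂ} {p : Euc d × Euc d} (c : ℂ)
    (hg : DifferentiableAt ℝ g p) :
    Db j (fun p => c * g p) p = c * Db j g p := by
  rw [Db_mul j (differentiableAt_const c) hg, Db_const]; ring

lemma Db_sub (j : Fin d) {f g : Euc d × Euc d → ℂ} {p : Euc d × Euc d}
    (hf : DifferentiableAt ℝ f p) (hg : DifferentiableAt ℝ g p) :
    Db j (fun p => f p - g p) p = Db j f p - Db j g p := by
  have := Db_add j hf (hg.const_mul (-1))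
  rw [Db_cmul j (-1) hg] at this
  simpa [sub_eq_add_neg] using this

lemma Db_sum {ι : Type*} (j : Fin d) (s : Finset ι) {f : ι → Euc d × Euc d → ℂ}
    {p : Euc d × Euc d} (hf : ∀ i, DifferentiableAt ℝ (f i) p) :
    Db j (fun p => ∑ i ∈ s, f i p) p = ∑ i ∈ s, Db j (f i) p := by
  rw [Db, fderiv_fun_sum (fun i _ => hf i), dbar_sum]; rfl

lemma Db_prod {ι : Type*} [DecidableEq ι] (j : Fin d) (s : Finset ι) {f : ι → Euc d × Euc d → ℂ}
    {p : Euc d × Euc d} (hf : ∀ i, DifferentiableAt ℝ (f i) p) :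
    Db j (fun p => ∏ i ∈ s, f i p) p =
      ∑ i ∈ s, (∏ l ∈ s.erase i, f l p) * Db j (f i) p := by
  rw [Db, fderiv_finsetProd (fun i _ => hf i), dbar_sum]
  simp only [dbar_smul]; rfl

lemma Db_Mt1 {K : Set (Euc d)} (hK : SymBody K) {f : Euc d → ℝ} (hf : Continuous f)
    (j : Fin d) (p : Euc d × Euc d) :
    Db j (fun p => (Mt K f p.1 : ℂ)) p = (1/2) *
      ((Mt K (fun y => f y * y j) p.1 - Mt K f p.1 * Mt K (fun y => y j) p.1 : ℝ) : ℂ) := by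
  obtain ⟨L, hL, h⟩ := Mt_hasFDerivAt hK hf p.1
  have hh : HasFDerivAt (fun p : Euc d × Euc d => (Mt K f p.1 : ℂ))
      (Complex.ofRealCLM.comp (L.comp (ContinuousLinearMap.fst ℝ _ _))) p :=
    Complex.ofRealCLM.hasFDerivAt.comp p (hL.comp p hasFDerivAt_fst)
  rw [Db, hh.fderiv, dbar]
  simp [h, EuclideanSpace.inner_single_left, Mt_const hK 0]

lemma Db_Mt2 {K : Set (Euc d)} (hK : SymBody K) {f : Euc d → ℝ} (hf : Continuous f)
    (j : Fin d) (p : Euc d × Euc d) :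
    Db j (fun p => (Mt K f p.2 : ℂ)) p = (1/2) * (Complex.I *
      ((Mt K (fun y => f y * y j) p.2 - Mt K f p.2 * Mt K (fun y => y j) p.2 : ℝ) : ℂ)) := by
  obtain ⟨L, hL, h⟩ := Mt_hasFDerivAt hK hf p.2
  have hh : HasFDerivAt (fun p : Euc d × Euc d => (Mt K f p.2 : ℂ))
      (Complex.ofRealCLM.comp (L.comp (ContinuousLinearMap.snd ℝ _ _))) p :=
    Complex.ofRealCLM.hasFDerivAt.comp p (hL.comp p hasFDerivAt_snd)
  rw [Db, hh.fderiv, dbar]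
  simp [h, EuclideanSpace.inner_single_left, Mt_const hK 0]

lemma Db_clm (j : Fin d) (L : Euc d × Euc d →L[ℝ] ℂ) (p : Euc d × Euc d) :
    Db j (fun p => L p) p = dbar j L := by
  rw [Db]
  have : fderiv ℝ (fun p => L p) p = L := L.fderiv
  rw [this]

lemma Db_zz (j k : Fin d) (p : Euc d × Euc d) : Db j (zz k) p = 0 := by
  have := Db_add j (p := p) (co1 k).differentiableAt ((co2 k).differentiableAt.const_mul Complex.I)
  rw [Db_cmul j _ (co2 k).differentiableAt, Db_clm, Db_clm, dbar_co1, dbar_co2] at this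
  refine this.trans ?_
  linear_combination (1/2) * (if k = j then (1:ℂ) else 0) * Complex.I_sq

lemma Db_zbar (j k : Fin d) (p : Euc d × Euc d) :
    Db j (zbar k) p = if k = j then 1 else 0 := by
  have := Db_sub j (p := p) (co1 k).differentiableAt ((co2 k).differentiableAt.const_mul Complex.I)
  rw [Db_cmul j _ (co2 k).differentiableAt, Db_clm, Db_clm, dbar_co1, dbar_co2] at this
  refine this.trans ?_
  linear_combination -(1/2) * (if k = j then (1:ℂ) else 0) * Complex.I_sq

lemma Db_mm {K : Set (Euc d)} (hK : SymBody K) (j k : Fin d) (p : Euc d × Euc d) :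
    Db j (mm K k) p = HH K j k p := by
  have c2 : Continuous (fun y : Euc d => y k) := by fun_prop
  have := Db_sub j ((good_Mt1 hK c2).diff 0 p) (((good_Mt2 hK c2).diff 0 p).const_mul Complex.I)
  rw [Db_cmul j _ ((good_Mt2 hK c2).diff 0 p), Db_Mt1 hK c2, Db_Mt2 hK c2] at this
  refine this.trans ?_
  simp only [HH, Amat, Matrix.of_apply]
  linear_combination -(1/2) * ((Mt K (fun y => y k * y j) p.2 -
    Mt K (fun y => y k) p.2 * Mt K (fun y => y j) p.2 : ℝ) : ℂ) * Complex.I_sq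

lemma Db_Amat1 {K : Set (Euc d)} (hK : SymBody K) (l j k : Fin d) (p : Euc d × Euc d) :
    Db l (fun p => (Amat K p.1 k j : ℂ)) p = Db j (fun p => (Amat K p.1 k l : ℂ)) p := by
  have c2 : ∀ j, Continuous (fun y : Euc d => y j) := fun j => by fun_prop
  have c1 : ∀ k j, Continuous (fun y : Euc d => y k * y j) := fun k j => by fun_prop
  have key : ∀ l j, Db l (fun p => (Amat K p.1 k j : ℂ)) p =
      (1/2) * (((Mt K (fun y => y k * y j * y l) p.1 - Mt K (fun y => y k * y j) p.1 * Mt K (fun y => y l) p.1 : ℝ) : ℂ)) -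
        ((Mt K (fun y => y k) p.1 : ℂ) * ((1/2) * (((Mt K (fun y => y j * y l) p.1 - Mt K (fun y => y j) p.1 * Mt K (fun y => y l) p.1 : ℝ) : ℂ))) +
        (Mt K (fun y => y j) p.1 : ℂ) * ((1/2) * (((Mt K (fun y => y k * y l) p.1 - Mt K (fun y => y k) p.1 * Mt K (fun y => y l) p.1 : ℝ) : ℂ)))) := fun l j => by
    have h1 := Db_sub l ((good_Mt1 hK (c1 k j)).diff 0 p)
      (((good_Mt1 hK (c2 k)).diff 0 p).mul ((good_Mt1 hK (c2 j)).diff 0 p))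
    have h2 := Db_mul l ((good_Mt1 hK (c2 k)).diff 0 p) ((good_Mt1 hK (c2 j)).diff 0 p)
    rw [Db_Mt1 hK (c2 k), Db_Mt1 hK (c2 j)] at h2
    rw [Db_Mt1 hK (c1 k j)] at h1
    have h3 : (fun p : Euc d × Euc d => (Amat K p.1 k j : ℂ)) =
      fun p => (Mt K (fun y => y k * y j) p.1 : ℂ) -
        (Mt K (fun y => y k) p.1 : ℂ) * (Mt K (fun y => y j) p.1 : ℂ) := by
      ext p; simp [Amat]
    rw [h3]
    exact h1.trans (congrArg _ h2)
  rw [key, key]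
  have e1 : (fun y : Euc d => y k * y j * y l) = fun y => y k * y l * y j := by ext y; ring
  have e2 : (fun y : Euc d => y j * y l) = fun y => y l * y j := by ext y; ring
  rw [e1, e2]
  push_cast
  ring

lemma Db_Amat2 {K : Set (Euc d)} (hK : SymBody K) (l j k : Fin d) (p : Euc d × Euc d) :
    Db l (fun p => (Amat K p.2 k j : ℂ)) p = Db j (fun p => (Amat K p.2 k l : ℂ)) p := by
  have c2 : ∀ j, Continuous (fun y : Euc d => y j) := fun j => by fun_prop
  have c1 : ∀ k j, Continuous (fun y : Euc d => y k * y j) := fun k j => by fun_prop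
  have key : ∀ l j, Db l (fun p => (Amat K p.2 k j : ℂ)) p =
      (1/2) * (Complex.I * ((Mt K (fun y => y k * y j * y l) p.2 - Mt K (fun y => y k * y j) p.2 * Mt K (fun y => y l) p.2 : ℝ) : ℂ)) -
        ((Mt K (fun y => y k) p.2 : ℂ) * ((1/2) * (Complex.I * ((Mt K (fun y => y j * y l) p.2 - Mt K (fun y => y j) p.2 * Mt K (fun y => y l) p.2 : ℝ) : ℂ))) +
        (Mt K (fun y => y j) p.2 : ℂ) * ((1/2) * (Complex.I * ((Mt K (fun y => y k * y l) p.2 - Mt K (fun y => y k) p.2 * Mt K (fun y => y l) p.2 : ℝ) : ℂ)))) := fun l j => by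
    have h1 := Db_sub l ((good_Mt2 hK (c1 k j)).diff 0 p)
      (((good_Mt2 hK (c2 k)).diff 0 p).mul ((good_Mt2 hK (c2 j)).diff 0 p))
    have h2 := Db_mul l ((good_Mt2 hK (c2 k)).diff 0 p) ((good_Mt2 hK (c2 j)).diff 0 p)
    rw [Db_Mt2 hK (c2 k), Db_Mt2 hK (c2 j)] at h2
    rw [Db_Mt2 hK (c1 k j)] at h1
    have h3 : (fun p : Euc d × Euc d => (Amat K p.2 k j : ℂ)) =
      fun p => (Mt K (fun y => y k * y j) p.2 : ℂ) -
        (Mt K (fun y => y k) p.2 : ℂ) * (Mt K (fun y => y j) p.2 : ℂ) := by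
      ext p; simp [Amat]
    rw [h3]
    exact h1.trans (congrArg _ h2)
  rw [key, key]
  have e1 : (fun y : Euc d => y k * y j * y l) = fun y => y k * y l * y j := by ext y; ring
  have e2 : (fun y : Euc d => y j * y l) = fun y => y l * y j := by ext y; ring
  rw [e1, e2]
  push_cast
  ring

lemma good_Amat1 {K : Set (Euc d)} (hK : SymBody K) (j k : Fin d) :
    Good (fun _ p => (Amat K p.1 k j : ℂ)) := by
  have c1 : Continuous (fun y : Euc d => y k * y j) := by fun_prop
  have c2 : Continuous (fun y : Euc d => y k) := by fun_prop
  have c3 : Continuous (fun y : Euc d => y j) := by fun_prop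
  have := ((good_Mt1 hK c1).sub ((good_Mt1 hK c2).mul (good_Mt1 hK c3)))
  simpa [Amat] using this

lemma good_Amat2 {K : Set (Euc d)} (hK : SymBody K) (j k : Fin d) :
    Good (fun _ p => (Amat K p.2 k j : ℂ)) := by
  have c1 : Continuous (fun y : Euc d => y k * y j) := by fun_prop
  have c2 : Continuous (fun y : Euc d => y k) := by fun_prop
  have c3 : Continuous (fun y : Euc d => y j) := by fun_prop
  have := ((good_Mt2 hK c1).sub ((good_Mt2 hK c2).mul (good_Mt2 hK c3)))
  simpa [Amat] using this

lemma Db_HH {K : Set (Euc d)} (hK : SymBody K) (l j k : Fin d) (p : Euc d × Euc d) :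
    Db l (HH K j k) p = Db j (HH K l k) p := by
  have key : ∀ l j, Db l (HH K j k) p = (1/2) * (Db l (fun p => (Amat K p.1 k j : ℂ)) p +
      Db l (fun p => (Amat K p.2 k j : ℂ)) p) := fun l j => by
    have g1 := (good_Amat1 hK j k).diff 0 p
    have g2 := (good_Amat2 hK j k).diff 0 p
    have h1 := Db_cmul l (1/2) (g1.add g2)
    exact h1.trans (congrArg _ (Db_add l g1 g2))
  rw [key, key, Db_Amat1 hK, Db_Amat2 hK]

lemma Db_WW {K : Set (Euc d)} (hK : SymBody K) (θ : ℝ) (l j k : Fin d) (p : Euc d × Euc d) :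
    Db l (fun p => WW K θ p j k) p = Db j (fun p => WW K θ p l k) p := by
  have key : ∀ l j, Db l (fun p => WW K θ p j k) p = bb θ * Db l (HH K j k) p := fun l j => by
    have g1 := (good_HH hK j k).diff 0 p
    have h1 := Db_add l (differentiableAt_const (aa θ * (if k = j then 1 else 0)))
      (g1.const_mul (bb θ))
    rw [Db_const, zero_add] at h1
    exact h1.trans (Db_cmul l _ g1)
  rw [key, key, Db_HH hK]

lemma Db_ww {K : Set (Euc d)} (hK : SymBody K) (θ : ℝ) (j k : Fin d) (p : Euc d × Euc d) :
    Db j (ww K θ k) p = WW K θ p j k := by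
  have g1 := (good_zbar k).diff 0 p
  have g2 := (good_mm hK k).diff 0 p
  have h1 := Db_add j (g1.const_mul (aa θ)) (g2.const_mul (bb θ))
  have h2 := Db_cmul j (aa θ) g1
  have h3 := Db_cmul j (bb θ) g2
  have e1 : Db j (fun p => zbar k p) p = _ := Db_zbar j k p
  have e2 : Db j (fun p => mm K k p) p = _ := Db_mm hK j k p
  rw [e1] at h2
  rw [e2] at h3
  refine h1.trans ?_
  rw [h2, h3]
  rfl

lemma Db_vv {K : Set (Euc d)} (hK : SymBody K) (θ : ℝ) (j k : Fin d) (p : Euc d × Euc d) :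
    Db j (vv K θ k) p = ss θ * (HH K j k p - if k = j then 1 else 0) := by
  have g1 := (good_zbar k).diff 0 p
  have g2 := (good_mm hK k).diff 0 p
  have h1 := Db_cmul j (ss θ) (g2.sub g1)
  have h2 := Db_sub j g2 g1
  have e1 : Db j (fun p => zbar k p) p = _ := Db_zbar j k p
  have e2 : Db j (fun p => mm K k p) p = _ := Db_mm hK j k p
  rw [e1, e2] at h2
  exact h1.trans (congrArg _ h2)

lemma Db_qq {K : Set (Euc d)} (hK : SymBody K) (θ : ℝ) (j : Fin d) (p : Euc d × Euc d) :
    Db j (qq K θ) p = (1/2) * ((WW K θ p).mulVec (fun k => zz k p)) j := by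
  have g1 := fun k => (good_zz (d := d) k).diff 0 p
  have g2 := fun k => (good_ww hK k).diff θ p
  have h1 := Db_cmul j (1/2)
    (((Good.sum Finset.univ fun k => (good_zz k).mul (good_ww hK k))).diff θ p)
  refine h1.trans ?_
  congr 1
  refine (Db_sum j Finset.univ (fun k => (g1 k).mul (g2 k))).trans ?_
  rw [Matrix.mulVec, dotProduct]
  refine Finset.sum_congr rfl fun k _ => ?_
  refine (Db_mul j (g1 k) (g2 k)).trans ?_
  have e1 : Db j (fun p => zz k p) p = _ := Db_zz j k p
  have e2 : Db j (fun p => ww K θ k p) p = _ := Db_ww hK θ j k p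
  rw [e1, e2]
  ring

end Homot

open Set MeasureTheory Metric
open scoped Pointwise RealInnerProductSpace ENNReal


section Homot2

variable {d : ℕ}

lemma haar_prod (d : ℕ) : (volume : Measure (Euc d × Euc d)).IsAddHaarMeasure := by
  rw [Measure.volume_eq_prod]
  exact Measure.prod.instIsAddHaarMeasure _ _

lemma re_qq {K : Set (Euc d)} (hK : SymBody K) (θ : ℝ) (p : Euc d × Euc d) :
    (qq K θ p).re = (1/2) * (Real.cos θ ^ 2 * (‖p.1‖ ^ 2 + ‖p.2‖ ^ 2) +
      Real.sin θ ^ 2 * (⟪p.1, grad K p.1⟫ + ⟪p.2, grad K p.2⟫)) := by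
  have h1 : ∀ k, (zz k p * ww K θ k p).re =
      Real.cos θ ^ 2 * (p.1 k ^ 2 + p.2 k ^ 2) +
      Real.sin θ ^ 2 * (p.1 k * grad K p.1 k + p.2 k * grad K p.2 k) := by
    intro k
    simp [zz, ww, zbar, mm, aa, bb, grad, -Complex.ofReal_pow]
    ring
  have h2 : (qq K θ p).re = (1/2) * (∑ k, zz k p * ww K θ k p).re := by
    rw [qq, show (1/2 : ℂ) = ((1/2 : ℝ) : ℂ) by norm_num, Complex.re_ofReal_mul]
  rw [h2, Complex.re_sum]
  simp only [h1]
  rw [Finset.sum_add_distrib, ← Finset.mul_sum, ← Finset.mul_sum, Finset.sum_add_distrib,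
    Finset.sum_add_distrib, EuclideanSpace.norm_sq_eq, EuclideanSpace.norm_sq_eq]
  simp [PiLp.inner_apply, mul_comm]

lemma re_qq_lower {K : Set (Euc d)} (hK : SymBody K) :
    ∃ δ > 0, ∃ C, ∀ θ p, δ * ‖p‖ - C ≤ (qq K θ p).re := by
  obtain ⟨δ, hδ, h⟩ := hs_coercive hK
  set δ' := min 1 (δ / 2) with hδ'
  have hd1 : δ' ≤ 1 := min_le_left _ _
  have hd2 : δ' ≤ δ / 2 := min_le_right _ _
  have hd0 : 0 < δ' := by rw [hδ']; positivity
  set C := 1 + d * Real.log 4 with hC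
  have hl : 0 ≤ d * Real.log 4 := by
    have := Real.log_nonneg (by norm_num : (1:ℝ) ≤ 4)
    positivity
  have k1 : ∀ x : Euc d, δ' * ‖x‖ - C ≤ ‖x‖ ^ 2 := by
    intro x
    nlinarith [norm_nonneg x, sq_nonneg (‖x‖ - 1)]
  have k2 : ∀ x : Euc d, δ' * ‖x‖ - C ≤ ⟪x, grad K x⟫ := by
    intro x
    have h1 := inner_grad_lower hK x
    have h2 := h x
    nlinarith [norm_nonneg x]
  refine ⟨δ' / 2, by positivity, C, fun θ p => ?_⟩
  rw [re_qq hK]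
  have hp : ‖p‖ ≤ ‖p.1‖ + ‖p.2‖ := by
    rw [Prod.norm_def]
    exact max_le (by simp) (by simp)
  have hcs := Real.sin_sq_add_cos_sq θ
  have a1 := k1 p.1
  have a2 := k1 p.2
  have b1 := k2 p.1
  have b2 := k2 p.2
  have m1 := mul_le_mul_of_nonneg_left (add_le_add a1 a2) (sq_nonneg (Real.cos θ))
  have m2 := mul_le_mul_of_nonneg_left (add_le_add b1 b2) (sq_nonneg (Real.sin θ))
  have m3 := mul_le_mul_of_nonneg_left hp hd0.le
  set X := δ' * ‖p.1‖ - C + (δ' * ‖p.2‖ - C) with hX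
  have : X = Real.cos θ ^ 2 * X + Real.sin θ ^ 2 * X := by
    rw [← add_mul, add_comm (Real.cos θ ^ 2), hcs, one_mul]
  linarith

lemma integrable_poly_exp {δ : ℝ} (hδ : 0 < δ) (N : ℕ) :
    Integrable (fun p : Euc d × Euc d => (1 + ‖p‖) ^ N * Real.exp (-(δ * ‖p‖))) := by
  have := haar_prod d
  set D := Module.finrank ℝ (Euc d × Euc d) + 1 with hD
  have h0 := (integrable_one_add_norm (E := Euc d × Euc d) (μ := volume) (r := (D : ℝ))
    (by rw [hD]; push_cast; linarith)).const_mul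
      (((N + D).factorial : ℝ) / δ ^ (N + D) * Real.exp δ)
  refine h0.mono' (by fun_prop) (Filter.Eventually.of_forall fun p => ?_)
  have hr : (0:ℝ) < 1 + ‖p‖ := by positivity
  rw [Real.norm_of_nonneg (by positivity), Real.rpow_neg hr.le, Real.rpow_natCast]
  have h1 := Real.pow_div_factorial_le_exp (δ * (1 + ‖p‖)) (by positivity) (N + D)
  have hf : (0:ℝ) < (N + D).factorial := by positivity
  have e1 : Real.exp (-(δ * ‖p‖)) * Real.exp (δ * (1 + ‖p‖)) = Real.exp δ := by
    rw [← Real.exp_add]; congr 1; ring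
  rw [← div_eq_mul_inv, le_div_iff₀ (by positivity)]
  rw [div_le_iff₀ hf, mul_pow] at h1
  have h2 := mul_le_mul_of_nonneg_left h1 (Real.exp_nonneg (-(δ * ‖p‖)))
  rw [← mul_assoc (Real.exp (-(δ * ‖p‖))) (Real.exp _), e1] at h2
  rw [div_mul_eq_mul_div, le_div_iff₀ (by positivity)]
  calc _ = Real.exp (-(δ * ‖p‖)) * (δ ^ (N + D) * (1 + ‖p‖) ^ (N + D)) := by rw [pow_add]; ring
    _ ≤ _ := h2
    _ = _ := by ring

def ee (K : Set (Euc d)) (θ : ℝ) (p : Euc d × Euc d) : ℂ := Complex.exp (-(qq K θ p))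

lemma ee_hasFDerivAt {K : Set (Euc d)} (hK : SymBody K) (θ : ℝ) (p : Euc d × Euc d) :
    HasFDerivAt (ee K θ) (-(ee K θ p) • fderiv ℝ (qq K θ) p) p := by
  have h := ((good_qq hK).diff θ p).hasFDerivAt
  have h2 := h.neg.cexp
  have e : -(ee K θ p) • fderiv ℝ (qq K θ) p =
    Complex.exp (-(qq K θ p)) • -(fderiv ℝ (qq K θ) p) := by
    refine ContinuousLinearMap.ext fun v => ?_
    show -(ee K θ p) * fderiv ℝ (qq K θ) p v = Complex.exp (-(qq K θ p)) * -(fderiv ℝ (qq K θ) p v)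
    rw [ee]; ring
  rw [e]
  exact h2

lemma ee_diff {K : Set (Euc d)} (hK : SymBody K) (θ : ℝ) : Differentiable ℝ (ee K θ) :=
  fun p => (ee_hasFDerivAt hK θ p).differentiableAt

lemma Db_ee {K : Set (Euc d)} (hK : SymBody K) (θ : ℝ) (j : Fin d) (p : Euc d × Euc d) :
    Db j (ee K θ) p = -(ee K θ p) * ((1/2) * ((WW K θ p).mulVec (fun k => zz k p)) j) := by
  rw [Db, (ee_hasFDerivAt hK θ p).fderiv, dbar_smul, ← Db_qq hK]; rfl

lemma ee_bound {K : Set (Euc d)} (hK : SymBody K) {g : ℝ → Euc d × Euc d → ℂ} (hg : Good g) :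
    ∃ bound : Euc d × Euc d → ℝ, Integrable bound ∧ ∀ θ p, ‖ee K θ p * g θ p‖ ≤ bound p ∧
      ‖fderiv ℝ (fun p => ee K θ p * g θ p) p‖ ≤ bound p := by
  obtain ⟨δ, hδ, C, hq⟩ := re_qq_lower hK
  obtain ⟨C1, N1, hC1, h1⟩ := hg.bd
  obtain ⟨C2, N2, hC2, h2⟩ := (good_qq hK).bd
  refine ⟨fun p => (C1 + C1 * C2) * Real.exp C * ((1 + ‖p‖) ^ (N1 + N2) * Real.exp (-(δ * ‖p‖))),
    (integrable_poly_exp hδ _).const_mul _, fun θ p => ?_⟩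
  have he : ‖ee K θ p‖ ≤ Real.exp C * Real.exp (-(δ * ‖p‖)) := by
    rw [ee, Complex.norm_exp, ← Real.exp_add]
    apply Real.exp_le_exp.2
    have := hq θ p
    simp only [Complex.neg_re]
    linarith
  have hr : (1:ℝ) ≤ 1 + ‖p‖ := by simp
  obtain ⟨a1, b1⟩ := h1 θ p
  obtain ⟨a2, b2⟩ := h2 θ p
  set E := Real.exp C * Real.exp (-(δ * ‖p‖)) with hE
  have hE0 : 0 ≤ E := by positivity
  have m1 := mul_le_mul_of_nonneg_left (pow_le_pow_right₀ hr (Nat.le_add_right N1 N2)) hC1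
  have ebd : (C1 + C1 * C2) * Real.exp C * ((1 + ‖p‖) ^ (N1 + N2) * Real.exp (-(δ * ‖p‖))) =
    E * (C1 * (1 + ‖p‖) ^ (N1 + N2)) + E * ((C1 * (1 + ‖p‖) ^ N1) * (C2 * (1 + ‖p‖) ^ N2)) := by
    rw [hE, pow_add]; ring
  have hpos : 0 ≤ E * ((C1 * (1 + ‖p‖) ^ N1) * (C2 * (1 + ‖p‖) ^ N2)) := by positivity
  have q1 : ‖ee K θ p‖ * ‖g θ p‖ ≤ E * (C1 * (1 + ‖p‖) ^ N1) :=
    mul_le_mul he a1 (norm_nonneg _) hE0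
  have q1' : ‖ee K θ p‖ * ‖fderiv ℝ (g θ) p‖ ≤ E * (C1 * (1 + ‖p‖) ^ N1) :=
    mul_le_mul he b1 (norm_nonneg _) hE0
  have q2 := mul_le_mul_of_nonneg_left m1 hE0
  have q3 : ‖ee K θ p‖ * ‖g θ p‖ * ‖fderiv ℝ (qq K θ) p‖ ≤
      E * ((C1 * (1 + ‖p‖) ^ N1) * (C2 * (1 + ‖p‖) ^ N2)) := by
    rw [← mul_assoc]
    exact mul_le_mul q1 b2 (norm_nonneg _) (by positivity)
  show _ ≤ (C1 + C1 * C2) * Real.exp C * ((1 + ‖p‖) ^ (N1 + N2) * Real.exp (-(δ * ‖p‖))) ∧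
    _ ≤ (C1 + C1 * C2) * Real.exp C * ((1 + ‖p‖) ^ (N1 + N2) * Real.exp (-(δ * ‖p‖)))
  rw [ebd]
  constructor
  · rw [norm_mul]
    linarith
  · rw [fderiv_fun_mul (ee_diff hK θ p) (hg.diff θ p), (ee_hasFDerivAt hK θ p).fderiv]
    refine (norm_add_le _ _).trans ?_
    rw [norm_smul, norm_smul, norm_smul, norm_neg]
    have : ‖g θ p‖ * (‖ee K θ p‖ * ‖fderiv ℝ (qq K θ) p‖) =
      ‖ee K θ p‖ * ‖g θ p‖ * ‖fderiv ℝ (qq K θ) p‖ := by ring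
    linarith

lemma ee_integrable {K : Set (Euc d)} (hK : SymBody K) {g : ℝ → Euc d × Euc d → ℂ} (hg : Good g)
    (θ : ℝ) : Integrable (fun p => ee K θ p * g θ p) := by
  obtain ⟨b, hb, h⟩ := ee_bound hK hg
  exact hb.mono' ((ee_diff hK θ).mul (hg.diff θ)).continuous.aestronglyMeasurable
    (Filter.Eventually.of_forall fun p => (h θ p).1)

lemma ee_fderiv_integrable {K : Set (Euc d)} (hK : SymBody K) {g : ℝ → Euc d × Euc d → ℂ}
    (hg : Good g) (θ : ℝ) (v : Euc d × Euc d) :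
    Integrable (fun p => fderiv ℝ (fun p => ee K θ p * g θ p) p v) := by
  obtain ⟨b, hb, h⟩ := ee_bound hK hg
  refine (hb.mul_const ‖v‖).mono' (measurable_fderiv_apply_const ℝ _ v).aestronglyMeasurable
    (Filter.Eventually.of_forall fun p => ?_)
  exact (ContinuousLinearMap.le_opNorm _ _).trans
    (mul_le_mul_of_nonneg_right (h θ p).2 (norm_nonneg _))

lemma ee_fderiv_integral {K : Set (Euc d)} (hK : SymBody K) {g : ℝ → Euc d × Euc d → ℂ}
    (hg : Good g) (θ : ℝ) (v : Euc d × Euc d) :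
    ∫ p, fderiv ℝ (fun p => ee K θ p * g θ p) p v = 0 := by
  have := haar_prod d
  have := integral_mul_fderiv_eq_neg_fderiv_mul_of_integrable (μ := (volume : Measure (Euc d × Euc d)))
    (f := fun _ => (1:ℂ)) (g := fun p => ee K θ p * g θ p) (v := v)
    (by simp) (by simpa using ee_fderiv_integrable hK hg θ v)
    (by simpa using ee_integrable hK hg θ)
    (fun x _ => differentiableAt_const _)
    (fun x _ => ((ee_diff hK θ).mul (hg.diff θ)) x)
  simpa using this

lemma ee_Db_integrable {K : Set (Euc d)} (hK : SymBody K) {g : ℝ → Euc d × Euc d → ℂ}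
    (hg : Good g) (θ : ℝ) (j : Fin d) :
    Integrable (fun p => Db j (fun p => ee K θ p * g θ p) p) :=
  ((ee_fderiv_integrable hK hg θ _).add
    ((ee_fderiv_integrable hK hg θ _).const_mul Complex.I)).const_mul (1/2)

lemma ee_Db_integral {K : Set (Euc d)} (hK : SymBody K) {g : ℝ → Euc d × Euc d → ℂ}
    (hg : Good g) (θ : ℝ) (j : Fin d) :
    ∫ p, Db j (fun p => ee K θ p * g θ p) p = 0 := by
  unfold Db dbar
  rw [integral_const_mul, integral_add (ee_fderiv_integrable hK hg θ _)
    ((ee_fderiv_integrable hK hg θ _).const_mul Complex.I), integral_const_mul,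
    ee_fderiv_integral hK hg, ee_fderiv_integral hK hg]
  simp

/-- the homotopy density -/
def FF (K : Set (Euc d)) (θ : ℝ) (p : Euc d × Euc d) : ℂ := ee K θ p * (WW K θ p).det

def gg (K : Set (Euc d)) (i : Fin d) (σ : Equiv.Perm (Fin d)) (θ : ℝ) (p : Euc d × Euc d) : ℂ :=
  vv K θ i p * ∏ k ∈ Finset.univ.erase i, WW K θ p (σ k) k

def FF' (K : Set (Euc d)) (θ : ℝ) (p : Euc d × Euc d) : ℂ :=
  ∑ σ : Equiv.Perm (Fin d), ∑ i, ((Equiv.Perm.sign σ : ℤ) : ℂ) *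
    Db (σ i) (fun p => ee K θ p * gg K i σ θ p) p

lemma good_gg {K : Set (Euc d)} (hK : SymBody K) (i : Fin d) (σ : Equiv.Perm (Fin d)) :
    Good (gg K i σ) :=
  (good_vv hK i).mul (Good.prod _ fun k => good_WW hK (σ k) k)

lemma good_det {K : Set (Euc d)} (hK : SymBody K) : Good (fun θ p => (WW K θ p).det) := by
  have := Good.sum Finset.univ (fun σ : Equiv.Perm (Fin d) =>
    (Good.prod Finset.univ fun k => good_WW hK (σ k) k).cmul ((Equiv.Perm.sign σ : ℤ) : ℂ))
  simpa only [Matrix.det_apply'] using this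

lemma FF'_integral {K : Set (Euc d)} (hK : SymBody K) (θ : ℝ) : ∫ p, FF' K θ p = 0 := by
  unfold FF'
  rw [integral_finsetSum _ fun σ _ => integrable_finsetSum _ fun i _ =>
    (ee_Db_integrable hK (good_gg hK i σ) θ (σ i)).const_mul _]
  refine Finset.sum_eq_zero fun σ _ => ?_
  rw [integral_finsetSum _ fun i _ => (ee_Db_integrable hK (good_gg hK i σ) θ (σ i)).const_mul _]
  refine Finset.sum_eq_zero fun i _ => ?_
  rw [integral_const_mul, ee_Db_integral hK (good_gg hK i σ), mul_zero]

lemma FF'_integrable {K : Set (Euc d)} (hK : SymBody K) (θ : ℝ) : Integrable (FF' K θ) :=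
  integrable_finsetSum _ fun σ _ => integrable_finsetSum _ fun i _ =>
    (ee_Db_integrable hK (good_gg hK i σ) θ (σ i)).const_mul _

lemma FF'_bound {K : Set (Euc d)} (hK : SymBody K) :
    ∃ bound : Euc d × Euc d → ℝ, Integrable bound ∧ ∀ θ p, ‖FF' K θ p‖ ≤ bound p := by
  choose b hb h using fun (σ : Equiv.Perm (Fin d)) (i : Fin d) => ee_bound hK (good_gg hK i σ)
  refine ⟨fun p => ∑ σ, ∑ i, b σ i p, integrable_finsetSum _ fun σ _ =>
    integrable_finsetSum _ fun i _ => hb σ i, fun θ p => ?_⟩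
  refine (norm_sum_le _ _).trans (Finset.sum_le_sum fun σ _ => ?_)
  refine (norm_sum_le _ _).trans (Finset.sum_le_sum fun i _ => ?_)
  rw [norm_mul]
  have h1 : ‖((Equiv.Perm.sign σ : ℤ) : ℂ)‖ = 1 := by
    rcases Int.units_eq_one_or (Equiv.Perm.sign σ) with h | h <;> simp [h]
  rw [h1, one_mul]
  exact (dbar_norm_le _ _).trans (h σ i θ p).2

end Homot2

open Set MeasureTheory Metric
open scoped Pointwise RealInnerProductSpace ENNReal


section Homot3

variable {d : ℕ}

lemma WW_theta {K : Set (Euc d)} (hK : SymBody K) (θ : ℝ) (p : Euc d × Euc d) (j k : Fin d) :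
    HasDerivAt (fun θ => WW K θ p j k) (Db j (vv K θ k) p) θ := by
  rw [Db_vv hK]
  have h := ((aa_deriv θ).mul_const (if k = j then (1:ℂ) else 0)).add
    ((bb_deriv θ).mul_const (HH K j k p))
  refine HasDerivAt.congr_deriv (f := fun θ => WW K θ p j k) h ?_
  ring

lemma ee_theta {K : Set (Euc d)} (θ : ℝ) (p : Euc d × Euc d) :
    HasDerivAt (fun θ => ee K θ p) (ee K θ p * (-((1/2) * ∑ k, zz k p * vv K θ k p))) θ := by
  have hw : ∀ k, HasDerivAt (fun θ => zz k p * ww K θ k p) (zz k p * vv K θ k p) θ := by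
    intro k
    have h := (((aa_deriv θ).mul_const (zbar k p)).add
      ((bb_deriv θ).mul_const (mm K k p))).const_mul (zz k p)
    refine HasDerivAt.congr_deriv (f := fun θ => zz k p * ww K θ k p) h ?_
    rw [vv]; ring
  have hs := HasDerivAt.fun_sum (u := Finset.univ) (fun k _ => hw k)
  exact (hs.const_mul (1/2)).neg.cexp

lemma Db_egg {K : Set (Euc d)} (hK : SymBody K) (θ : ℝ) (p : Euc d × Euc d) (i j : Fin d)
    (σ : Equiv.Perm (Fin d)) :
    Db j (fun p => ee K θ p * gg K i σ θ p) p =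
      ee K θ p * (vv K θ i p * ∑ k ∈ Finset.univ.erase i,
        (∏ l ∈ (Finset.univ.erase i).erase k, WW K θ p (σ l) l) * Db j (fun p => WW K θ p (σ k) k) p)
      + ee K θ p * ((∏ k ∈ Finset.univ.erase i, WW K θ p (σ k) k) * Db j (vv K θ i) p)
      - (1/2) * ee K θ p * vv K θ i p * (((WW K θ p).mulVec (fun k => zz k p)) j *
          ∏ k ∈ Finset.univ.erase i, WW K θ p (σ k) k) := by
  have hP : Good (fun θ p => ∏ k ∈ Finset.univ.erase i, WW K θ p (σ k) k) :=
    Good.prod _ fun k => good_WW hK (σ k) k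
  rw [Db_mul j (ee_diff hK θ p) ((good_gg hK i σ).diff θ p), Db_ee hK]
  have h1 : Db j (gg K i σ θ) p = _ := Db_mul j ((good_vv hK i).diff θ p) (hP.diff θ p)
  have h2 : Db j (fun p => ∏ k ∈ Finset.univ.erase i, WW K θ p (σ k) k) p = _ :=
    Db_prod j _ (fun k => ((good_WW hK (σ k) k).diff θ p))
  rw [h1, h2, gg]
  ring

lemma FF'_eq {K : Set (Euc d)} (hK : SymBody K) (θ : ℝ) (p : Euc d × Euc d) :
    FF' K θ p = ee K θ p * (∑ σ : Equiv.Perm (Fin d), ((Equiv.Perm.sign σ : ℤ) : ℂ) *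
      ∑ i, (∏ k ∈ Finset.univ.erase i, WW K θ p (σ k) k) * Db (σ i) (vv K θ i) p)
      + (ee K θ p * (-((1/2) * ∑ k, zz k p * vv K θ k p))) * (WW K θ p).det := by
  have hA : ∀ i, ∑ σ : Equiv.Perm (Fin d), ((Equiv.Perm.sign σ : ℤ) : ℂ) *
      (ee K θ p * (vv K θ i p * ∑ k ∈ Finset.univ.erase i,
        (∏ l ∈ (Finset.univ.erase i).erase k, WW K θ p (σ l) l) *
          Db (σ i) (fun p => WW K θ p (σ k) k) p)) = 0 := by
    intro i
    have h := piola (WW K θ p) (fun l j k => Db l (fun p => WW K θ p j k) p)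
      (fun l j k => Db_WW hK θ l j k p) i
    have h' := congrArg (fun t => ee K θ p * vv K θ i p * t) h
    simp only [mul_zero, Finset.mul_sum] at h'
    rw [← h']
    simp only [Finset.mul_sum]
    refine Finset.sum_congr rfl fun σ _ => Finset.sum_congr rfl fun k _ => ?_
    ring
  have hC : ∀ i, ∑ σ : Equiv.Perm (Fin d), ((Equiv.Perm.sign σ : ℤ) : ℂ) *
      ((1/2) * ee K θ p * vv K θ i p * (((WW K θ p).mulVec (fun k => zz k p)) (σ i) *
          ∏ k ∈ Finset.univ.erase i, WW K θ p (σ k) k)) =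
        (1/2) * ee K θ p * vv K θ i p * ((WW K θ p).det * zz i p) := by
    intro i
    rw [← det_col_mulVec (WW K θ p) (fun k => zz k p) i, ← det_col_expand, Finset.mul_sum]
    refine Finset.sum_congr rfl fun σ _ => ?_
    ring
  unfold FF'
  simp only [Db_egg hK, mul_add, mul_sub, Finset.sum_add_distrib, Finset.sum_sub_distrib]
  rw [Finset.sum_comm, Finset.sum_eq_zero (fun i _ => hA i), zero_add, sub_eq_add_neg]
  congr 1
  · simp only [Finset.mul_sum]
    refine Finset.sum_congr rfl fun σ _ => Finset.sum_congr rfl fun k _ => ?_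
    ring
  · rw [Finset.sum_comm, Finset.sum_congr rfl (fun i _ => hC i)]
    simp only [Finset.mul_sum, Finset.sum_mul, ← Finset.sum_neg_distrib]
    refine Finset.sum_congr rfl fun σ _ => ?_
    ring

lemma FF_theta {K : Set (Euc d)} (hK : SymBody K) (θ : ℝ) (p : Euc d × Euc d) :
    HasDerivAt (fun θ => FF K θ p) (FF' K θ p) θ := by
  have hdet : HasDerivAt (fun θ => (WW K θ p).det) (∑ σ : Equiv.Perm (Fin d),
      ((Equiv.Perm.sign σ : ℤ) : ℂ) *
      ∑ i, (∏ k ∈ Finset.univ.erase i, WW K θ p (σ k) k) * Db (σ i) (vv K θ i) p) θ := by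
    have := HasDerivAt.fun_sum (u := Finset.univ) (fun (σ : Equiv.Perm (Fin d)) _ =>
      (HasDerivAt.fun_finsetProd (u := Finset.univ)
        (fun k _ => WW_theta hK θ p (σ k) k)).const_mul ((Equiv.Perm.sign σ : ℤ) : ℂ))
    simp only [Matrix.det_apply']
    exact this
  refine ((ee_theta θ p).mul hdet).congr_deriv ?_
  rw [FF'_eq hK, add_comm]

lemma FF_int_const {K : Set (Euc d)} (hK : SymBody K) (θ : ℝ) :
    ∫ p, FF K θ p = ∫ p, FF K 0 p := by
  obtain ⟨b, hb, hbd⟩ := FF'_bound hK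
  have hd : ∀ θ, HasDerivAt (fun θ => ∫ p, FF K θ p) 0 θ := by
    intro θ
    have := (hasDerivAt_integral_of_dominated_loc_of_deriv_le (μ := volume)
      (F := fun θ p => FF K θ p) (F' := fun θ p => FF' K θ p) (x₀ := θ) (s := univ) (bound := b)
      Filter.univ_mem
      (Filter.Eventually.of_forall fun t => (ee_integrable hK (good_det hK) t).aestronglyMeasurable)
      (ee_integrable hK (good_det hK) θ)
      (FF'_integrable hK θ).aestronglyMeasurable
      (Filter.Eventually.of_forall fun p t _ => hbd t p) hb
      (Filter.Eventually.of_forall fun p t _ => FF_theta hK t p)).2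
    rwa [FF'_integral hK] at this
  exact is_const_of_deriv_eq_zero (fun θ => (hd θ).differentiableAt) (fun θ => (hd θ).deriv) θ 0

end Homot3

open Set MeasureTheory Metric
open scoped Pointwise RealInnerProductSpace ENNReal


section BMsec

variable {d : ℕ}

lemma FF_zero (K : Set (Euc d)) (p : Euc d × Euc d) :
    FF K 0 p = ((Real.exp (-(1/2) * ‖p.1‖ ^ 2) * Real.exp (-(1/2) * ‖p.2‖ ^ 2) : ℝ) : ℂ) := by
  have h1 : WW K 0 p = 1 := by
    ext j k
    simp [WW, aa, bb, Matrix.one_apply, eq_comm]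
  have h2 : qq K 0 p = (((1/2) * (‖p.1‖ ^ 2 + ‖p.2‖ ^ 2) : ℝ) : ℂ) := by
    rw [EuclideanSpace.norm_sq_eq, EuclideanSpace.norm_sq_eq, ← Finset.sum_add_distrib]
    simp only [qq, ww, zz, zbar, aa, bb]
    push_cast
    congr 1
    refine Finset.sum_congr rfl fun k _ => ?_
    simp [← Complex.ofReal_pow]
    ring_nf
    simp
  rw [FF, h1, Matrix.det_one, mul_one, ee, h2, ← Real.exp_add, Complex.ofReal_exp]
  congr 1
  push_cast
  ring

lemma FF_zero_integral (K : Set (Euc d)) : 1 ≤ ‖∫ p, FF K 0 p‖ₑ := by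
  simp only [FF_zero]
  rw [integral_complex_ofReal]
  have h := integral_prod_mul (μ := (volume : Measure (Euc d))) (ν := (volume : Measure (Euc d)))
    (fun x => Real.exp (-(1/2) * ‖x‖ ^ 2)) (fun x => Real.exp (-(1/2) * ‖x‖ ^ 2))
  rw [← Measure.volume_eq_prod] at h
  rw [h, GaussianFourier.integral_rexp_neg_mul_sq_norm (V := Euc d) (b := 1/2) (by norm_num)]
  have hpi := Real.pi_gt_three
  have h1 : (1:ℝ) ≤ (Real.pi / (1/2)) ^ ((Module.finrank ℝ (Euc d) : ℝ) / 2) :=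
    Real.one_le_rpow (by linarith) (by positivity)
  rw [← ofReal_norm, Complex.norm_real, Real.norm_of_nonneg (by positivity)]
  rw [← ENNReal.ofReal_one]
  apply ENNReal.ofReal_le_ofReal
  nlinarith

lemma FF_pi {K : Set (Euc d)} (hK : SymBody K) (p : Euc d × Euc d) :
    ‖FF K (Real.pi / 2) p‖ ≤ 4 ^ d * Real.exp (-(hs K (p.1 + p.2) / 4)) *
      |((1/2 : ℝ) • (Amat K p.1 + Amat K p.2)).det| := by
  have h1 : WW K (Real.pi / 2) p =
      (((1/2 : ℝ) • (Amat K p.1 + Amat K p.2)).transpose.map (algebraMap ℝ ℂ)) := by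
    ext j k
    simp [WW, aa, bb, HH]
    ring
  have h2 : ‖(WW K (Real.pi / 2) p).det‖ = |((1/2 : ℝ) • (Amat K p.1 + Amat K p.2)).det| := by
    rw [h1]
    have := RingHom.map_det (algebraMap ℝ ℂ) ((1/2 : ℝ) • (Amat K p.1 + Amat K p.2)).transpose
    rw [RingHom.mapMatrix_apply] at this
    rw [← this, Matrix.det_transpose]
    simp
  rw [FF, norm_mul, h2]
  refine mul_le_mul_of_nonneg_right ?_ (abs_nonneg _)
  rw [ee, Complex.norm_exp, Complex.neg_re, re_qq hK]
  have e4 : (4:ℝ) ^ d = Real.exp (d * Real.log 4) := by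
    rw [mul_comm, Real.exp_mul, Real.exp_log (by norm_num)]; simp
  rw [e4, ← Real.exp_add]
  apply Real.exp_le_exp.2
  simp only [Real.cos_pi_div_two, Real.sin_pi_div_two]
  have a1 := inner_grad_lower hK p.1
  have a2 := inner_grad_lower hK p.2
  have a3 := hs_add_le hK.compact hK.ne p.1 p.2
  linarith

lemma Amat_continuous {K : Set (Euc d)} (hK : SymBody K) : Continuous (Amat K) := by
  have h : ∀ f : Euc d → ℝ, Continuous f → Continuous (Mt K f) := fun f hf =>
    (show Differentiable ℝ (Mt K f) from fun x =>
      (Mt_hasFDerivAt hK hf x).choose_spec.1.differentiableAt).continuous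
  refine continuous_matrix fun i j => ?_
  simp only [Amat, Matrix.of_apply]
  exact (h _ (by fun_prop)).sub ((h _ (by fun_prop)).mul (h _ (by fun_prop)))

lemma IK_scale {K : Set (Euc d)} (hK : IsCompact K) (hne : K.Nonempty) {c : ℝ} (hc : 0 < c) :
    ∫⁻ p, ENNReal.ofReal (Real.exp (-(c * hs K p))) = ENNReal.ofReal ((c⁻¹) ^ d) * IK K := by
  have hm : Measurable (fun p => ENNReal.ofReal (Real.exp (-(hs K p)))) :=
    (ENNReal.continuous_ofReal.comp (Real.continuous_exp.comp (hs_continuous hK hne).neg)).measurable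
  have h := Measure.map_addHaar_smul (volume : Measure (Euc d)) hc.ne'
  have h2 := lintegral_map (μ := (volume : Measure (Euc d))) hm (measurable_const_smul c)
  rw [h, lintegral_smul_measure] at h2
  simp only [hs_smul hK hne hc.le] at h2
  rw [← h2, IK]
  simp [abs_of_pos hc]

lemma bourgain_milman {K : Set (Euc d)} (hK : SymBody K) :
    1 ≤ 16 ^ d * (volume K * IK K) := by
  have hc := Amat_continuous hK
  have hc2 : Continuous fun q : Euc d × Euc d => (1/2 : ℝ) • (Amat K q.1 + Amat K q.2) := by
    have h := (hc.comp (continuous_fst (X := Euc d) (Y := Euc d))).add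
      (hc.comp (continuous_snd (X := Euc d) (Y := Euc d)))
    exact h.const_smul (1/2 : ℝ)
  have hhc := hs_continuous hK.compact hK.ne
  set D : Euc d → Euc d → ℝ≥0∞ := fun x y =>
    ENNReal.ofReal |((1/2 : ℝ) • (Amat K x + Amat K y)).det| with hD
  set E : Euc d → ℝ≥0∞ := fun p => ENNReal.ofReal (4 ^ d * Real.exp (-(hs K p / 4))) with hE
  have hEm : Continuous E := by
    rw [hE]; exact ENNReal.continuous_ofReal.comp (by fun_prop)
  have hDm : Continuous (fun q : Euc d × Euc d => D q.1 q.2) := by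
    refine ENNReal.continuous_ofReal.comp (continuous_abs.comp (Continuous.matrix_det ?_))
    exact hc2
  have hDE : Continuous (fun q : Euc d × Euc d => E (q.1 + q.2) * D q.1 q.2) := by
    refine Continuous.congr (f := fun q : Euc d × Euc d => ENNReal.ofReal (4 ^ d * Real.exp (-(hs K (q.1 + q.2) / 4)) *
      |((1/2 : ℝ) • (Amat K q.1 + Amat K q.2)).det|)) ?_ ?_
    · refine ENNReal.continuous_ofReal.comp (Continuous.mul (by fun_prop)
        (continuous_abs.comp (Continuous.matrix_det ?_)))
      exact hc2
    · intro q
      rw [ENNReal.ofReal_mul (by positivity)]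
  have h1 : (1:ℝ≥0∞) ≤ ∫⁻ q : Euc d × Euc d, E (q.1 + q.2) * D q.1 q.2 := by
    calc 1 ≤ ‖∫ p, FF K 0 p‖ₑ := FF_zero_integral K
      _ = ‖∫ p, FF K (Real.pi / 2) p‖ₑ := by rw [FF_int_const hK (Real.pi / 2)]
      _ ≤ ∫⁻ p, ‖FF K (Real.pi / 2) p‖ₑ := enorm_integral_le_lintegral_enorm _
      _ ≤ _ := by
        refine lintegral_mono fun p => ?_
        rw [← ofReal_norm]
        refine (ENNReal.ofReal_le_ofReal (FF_pi hK p)).trans ?_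
        rw [ENNReal.ofReal_mul (by positivity)]
  have h2 : ∫⁻ q : Euc d × Euc d, E (q.1 + q.2) * D q.1 q.2 = ∫⁻ x, ∫⁻ p, E p * D x (p - x) := by
    rw [Measure.volume_eq_prod, lintegral_prod _ hDE.measurable.aemeasurable]
    refine lintegral_congr fun x => ?_
    rw [← lintegral_sub_right_eq_self (fun y => E (x + y) * D x y) x]
    simp
  have h3 : ∫⁻ x, ∫⁻ p, E p * D x (p - x) = ∫⁻ p, ∫⁻ x, E p * D x (p - x) := by
    apply lintegral_lintegral_swap
    have : Measurable fun q : Euc d × Euc d => E (q.1 + (q.2 - q.1)) * D q.1 (q.2 - q.1) :=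
      (hDE.comp (f := fun q : Euc d × Euc d => (q.1, q.2 - q.1)) (by fun_prop)).measurable
    simp only [add_sub_cancel] at this
    exact this.aemeasurable
  have h4 : ∫⁻ p, ∫⁻ x, E p * D x (p - x) ≤ ∫⁻ p, E p * volume K := by
    refine lintegral_mono fun p => ?_
    have hm : Measurable fun x => D x (p - x) :=
      (hDm.comp (f := fun x : Euc d => (x, p - x)) (by fun_prop)).measurable
    rw [lintegral_const_mul _ hm]
    gcongr
    exact lintegral_det_pair hK p
  have h5 : ∫⁻ p, E p = 4 ^ d * (4 ^ d * IK K) := by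
    have : ∀ p, E p = 4 ^ d * ENNReal.ofReal (Real.exp (-((1/4) * hs K p))) := by
      intro p
      rw [hE]
      simp only
      rw [ENNReal.ofReal_mul (by positivity), ENNReal.ofReal_pow (by norm_num)]
      norm_num
      congr 3; ring
    simp only [this]
    rw [lintegral_const_mul' _ _ (by simp), IK_scale hK.compact hK.ne (by norm_num),
      ENNReal.ofReal_pow (by norm_num)]
    norm_num
  rw [lintegral_mul_const _ hEm.measurable, h5] at h4
  rw [h2, h3] at h1
  refine (h1.trans h4).trans (le_of_eq ?_)
  rw [show (16:ℝ≥0∞) = 4 * 4 by norm_num, mul_pow]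
  ring

end BMsec

open Set MeasureTheory Metric
open scoped Pointwise RealInnerProductSpace ENNReal


section RSsec

variable {d : ℕ}

lemma hs_infconv {L A : Set (Euc d)} (hL : IsCompact L) (hLc : Convex ℝ L) (h0 : (0 : Euc d) ∈ L)
    (hA : IsCompact A) (hmem : ∀ v, v ∈ L → -v ∈ L → v ∈ A) (x : Euc d) {ε : ℝ} (hε : 0 < ε) :
    ∃ u, hs L u + hs L (u - x) < hs A x + ε := by
  have hne : L.Nonempty := ⟨0, h0⟩
  have hnn : ∀ v, 0 ≤ hs L v := fun v => by simpa using le_hs hL v h0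
  have hz : hs L 0 = 0 := by
    refine le_antisymm (hs_le hne fun y _ => by simp) (hnn 0)
  set N : Euc d → ℝ := fun x => ⨅ u, (hs L u + hs L (u - x)) with hN
  have hbdd : ∀ x, BddBelow (range fun u => hs L u + hs L (u - x)) := fun x =>
    ⟨0, by rintro _ ⟨u, rfl⟩; exact add_nonneg (hnn _) (hnn _)⟩
  have hNle : ∀ x u, N x ≤ hs L u + hs L (u - x) := fun x u => ciInf_le (hbdd x) u
  have hN0 : ∀ x, 0 ≤ N x := fun x => le_ciInf fun u => add_nonneg (hnn _) (hnn _)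
  have hhom1 : ∀ c : ℝ, 0 < c → ∀ x, N (c • x) ≤ c * N x := by
    intro c hc x
    rw [← div_le_iff₀' hc]
    refine le_ciInf fun u => ?_
    rw [div_le_iff₀' hc]
    refine (hNle _ (c • u)).trans (le_of_eq ?_)
    rw [← smul_sub, hs_smul hL hne hc.le, hs_smul hL hne hc.le]
    ring
  have hhom : ∀ c : ℝ, 0 < c → ∀ x, N (c • x) = c * N x := by
    intro c hc x
    refine le_antisymm (hhom1 c hc x) ?_
    have := hhom1 c⁻¹ (inv_pos.2 hc) (c • x)
    rw [inv_smul_smul₀ hc.ne'] at this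
    rwa [inv_mul_eq_div, le_div_iff₀' hc] at this
  have hadd : ∀ x y, N (x + y) ≤ N x + N y := by
    intro x y
    refine le_ciInf_add_ciInf fun u w => ?_
    refine (hNle _ (u + w)).trans ?_
    have e : u + w - (x + y) = (u - x) + (w - y) := by abel
    rw [e]
    have := hs_add_le hL hne u w
    have := hs_add_le hL hne (u - x) (w - y)
    linarith
  have hfin : N x ≤ hs A x := by
    rcases eq_or_ne x 0 with rfl | hx
    · have h1 := hNle 0 0
      have h2 : 0 ≤ hs A 0 := by simpa using le_hs hA 0 (hmem 0 h0 (by simpa using h0))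
      rw [sub_zero, hz] at h1
      linarith
    · obtain ⟨g, hg1, hg2⟩ := exists_extension_of_le_sublinear
        (LinearPMap.mkSpanSingleton x (N x) hx) N hhom hadd (by
          rintro ⟨v, hv⟩
          obtain ⟨c, rfl⟩ := Submodule.mem_span_singleton.1 hv
          have e := LinearPMap.mkSpanSingleton'_apply (σ := RingHom.id ℝ) x (N x)
            (by intro c hc; rcases smul_eq_zero.1 hc with h | h
                · simp [h]
                · exact absurd h hx) c hv
          refine (le_of_eq e).trans ?_
          show c * N x ≤ N (c • x)
          rcases lt_or_ge 0 c with hc | hc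
          · rw [hhom c hc]
          · exact (mul_nonpos_of_nonpos_of_nonneg hc (hN0 x)).trans (hN0 _))
      have hgx : g x = N x := by
        have := hg1 ⟨x, Submodule.mem_span_singleton_self x⟩
        rw [this]
        have h3 := LinearPMap.mkSpanSingleton_apply ℝ ℝ (σ := RingHom.id ℝ) hx (N x)
        exact h3
      set a := (InnerProductSpace.toDual ℝ (Euc d)).symm (LinearMap.toContinuousLinearMap g) with ha
      have hav : ∀ v, ⟪a, v⟫ = g v := fun v => by
        rw [ha, InnerProductSpace.toDual_symm_apply]; rfl
      have h1 : a ∈ L := mem_of_hs hL hLc hne fun v => by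
        rw [real_inner_comm, hav]
        refine (hg2 v).trans ((hNle v v).trans ?_)
        rw [sub_self, hz, add_zero]
      have h2 : -a ∈ L := mem_of_hs hL hLc hne fun v => by
        rw [inner_neg_right, real_inner_comm, hav, ← map_neg]
        refine (hg2 (-v)).trans ((hNle (-v) 0).trans ?_)
        rw [zero_sub, neg_neg, hz, zero_add]
      rw [← hgx, ← hav, real_inner_comm]
      exact le_hs hA x (hmem a h1 h2)
  exact exists_lt_of_ciInf_lt (lt_of_le_of_lt hfin (by linarith))

lemma hs_mono {A L : Set (Euc d)} (hL : IsCompact L) (hne : A.Nonempty) (h : A ⊆ L) (x : Euc d) :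
    hs A x ≤ hs L x := hs_le hne fun _ hy => le_hs hL x (h hy)

lemma rogers_shephard {L A : Set (Euc d)} (hL : IsCompact L) (hLc : Convex ℝ L)
    (hA : SymBody A) (hAL : A ⊆ L) (hmem : ∀ v, v ∈ L → -v ∈ L → v ∈ A) :
    IK A ≤ 2 * 2 ^ d * IK L := by
  have h0 : (0 : Euc d) ∈ L := hAL (interior_subset hA.zero_int)
  have hne : L.Nonempty := ⟨0, h0⟩
  have hc := hs_continuous hL hne
  set F : Euc d → ℝ≥0∞ := fun w => ENNReal.ofReal (Real.exp (-(hs L w))) with hF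
  have hFc : Continuous F := ENNReal.continuous_ofReal.comp (by fun_prop)
  have hFF : Continuous (fun q : Euc d × Euc d => F q.2 * F (q.2 - q.1)) := by
    refine Continuous.congr (f := fun q : Euc d × Euc d =>
      ENNReal.ofReal (Real.exp (-(hs L q.2)) * Real.exp (-(hs L (q.2 - q.1))))) ?_ ?_
    · exact ENNReal.continuous_ofReal.comp (by fun_prop)
    · intro q
      rw [ENNReal.ofReal_mul (by positivity)]
  have hI0 : IK L ≠ 0 := by
    rw [IK, Ne, lintegral_eq_zero_iff hFc.measurable]
    intro h
    have h2 : ∀ᵐ x ∂(volume : Measure (Euc d)), False := by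
      filter_upwards [h] with x hx
      exact absurd hx (ENNReal.ofReal_pos.2 (Real.exp_pos _)).ne'
    simp only [Filter.eventually_false_iff_eq_bot, ae_eq_bot] at h2
    exact (NeZero.ne (volume : Measure (Euc d))) h2
  have hIA : IK A ≠ ∞ := by
    intro h
    have := santalo hA
    rw [h, ENNReal.mul_top (vol_pos_of hA).ne'] at this
    simp at this
  have hIL : IK L ≠ ∞ := by
    refine ne_top_of_le_ne_top hIA (lintegral_mono fun x => ENNReal.ofReal_le_ofReal ?_)
    exact Real.exp_le_exp.2 (neg_le_neg (hs_mono hL hA.ne hAL x))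
  have h1 : ∀ x, ENNReal.ofReal (Real.exp (-(hs A x))) * IK L ≤
      2 * 2 ^ d * ∫⁻ w, F w * F (w - x) := by
    intro x
    obtain ⟨u, hu⟩ := hs_infconv hL hLc h0 hA.compact hmem x (Real.log_pos one_lt_two)
    rw [← lintegral_add_right_eq_self (fun w => F w * F (w - x)) u]
    have h2 := IK_scale hL hne (c := 2) two_pos
    have h3 : IK L = 2 ^ d * ∫⁻ p, ENNReal.ofReal (Real.exp (-(2 * hs L p))) := by
      rw [h2, ← mul_assoc]
      have : (2:ℝ≥0∞) ^ d * ENNReal.ofReal (2⁻¹ ^ d) = 1 := by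
        have : (2:ℝ≥0∞) = ENNReal.ofReal 2 := by norm_num
        rw [this, ← ENNReal.ofReal_pow (by norm_num), ← ENNReal.ofReal_mul (by positivity), ← mul_pow]
        norm_num
      rw [this, one_mul]
    rw [h3, mul_left_comm, mul_comm (2:ℝ≥0∞), mul_assoc]
    refine mul_le_mul_right ?_ _
    rw [← lintegral_const_mul' _ _ (by simp), ← lintegral_const_mul' _ _ (by simp)]
    refine lintegral_mono fun w => ?_
    have e2 : (2:ℝ≥0∞) = ENNReal.ofReal (Real.exp (Real.log 2)) := by
      rw [Real.exp_log two_pos]; norm_num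
    simp only [hF]
    refine le_of_le_of_eq (b := ENNReal.ofReal (Real.exp (Real.log 2)) * (ENNReal.ofReal
      (Real.exp (-hs L (w + u))) * ENNReal.ofReal (Real.exp (-hs L (w + u - x))))) ?_
      (congrArg (fun t => t * (ENNReal.ofReal
      (Real.exp (-hs L (w + u))) * ENNReal.ofReal (Real.exp (-hs L (w + u - x))))) e2.symm)
    rw [← ENNReal.ofReal_mul (by positivity), ← ENNReal.ofReal_mul (by positivity),
      ← ENNReal.ofReal_mul (by positivity), ← Real.exp_add, ← Real.exp_add, ← Real.exp_add]
    refine ENNReal.ofReal_le_ofReal (Real.exp_le_exp.2 ?_)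
    have a1 := hs_add_le hL hne w u
    have a2 := hs_add_le hL hne w (u - x)
    rw [← add_sub_assoc] at a2
    linarith
  have h2 : ∫⁻ x, ∫⁻ w, F w * F (w - x) = IK L * IK L := by
    rw [lintegral_lintegral_swap hFF.measurable.aemeasurable]
    have : ∀ w, ∫⁻ x, F w * F (w - x) = F w * IK L := by
      intro w
      rw [lintegral_const_mul' _ _ (by simp [hF]), lintegral_sub_left_eq_self]; rfl
    simp only [this]
    rw [lintegral_mul_const' _ _ hIL]; rfl
  have h3 : IK A * IK L ≤ 2 * 2 ^ d * IK L * IK L := by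
    have := lintegral_mono (μ := volume) h1
    rw [lintegral_mul_const' _ _ hIL, lintegral_const_mul' _ _ (by finiteness), h2] at this
    rw [mul_assoc (2 * 2 ^ d)]
    exact this
  exact (ENNReal.mul_le_mul_iff_left hI0 hIL).1 h3

end RSsec

open Set MeasureTheory Metric
open scoped Pointwise RealInnerProductSpace ENNReal


section Kernel

variable {d : ℕ}

lemma exp_tail (c b : ℝ) :
    ∫⁻ r in Ioi c, ENNReal.ofReal (Real.exp (-(r - b))) = ENNReal.ofReal (Real.exp (-(c - b))) := by
  have h1 : ∀ r, Real.exp (-(r - b)) = Real.exp b * Real.exp (-r) := fun r => by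
    rw [← Real.exp_add]; congr 1; ring
  simp only [h1]
  rw [← ofReal_integral_eq_lintegral_ofReal, integral_const_mul, integral_exp_neg_Ioi]
  · exact (integrableOn_exp_neg_Ioi c).const_mul _
  · exact Filter.Eventually.of_forall fun r => by positivity

lemma lintegral_scale {f : Euc d → ℝ≥0∞} (hf : Measurable f) {r : ℝ} (hr : 0 < r) :
    ∫⁻ p, f p = ENNReal.ofReal (r ^ d) * ∫⁻ y, f (r • y) := by
  have h := Measure.map_addHaar_smul (volume : Measure (Euc d)) hr.ne'
  have h2 := lintegral_map (μ := (volume : Measure (Euc d))) hf (measurable_const_smul r)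
  rw [h, lintegral_smul_measure] at h2
  rw [← h2, smul_eq_mul, ← mul_assoc, ← ENNReal.ofReal_mul (by positivity)]
  have : r ^ d * |(r ^ Module.finrank ℝ (Euc d))⁻¹| = 1 := by
    rw [abs_of_pos (by positivity), finrank_euclideanSpace_fin]
    exact mul_inv_cancel₀ (by positivity)
  rw [this]; simp

def kk (x y : Euc d) : ℝ≥0∞ :=
  ∫⁻ r in Ioi (0:ℝ), ENNReal.ofReal (r ^ d * Real.exp (-(r * (1 - ⟪x, y⟫))))

lemma kk_meas : Measurable (fun q : Euc d × Euc d => kk q.1 q.2) := by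
  unfold kk
  apply Measurable.lintegral_prod_right'
    (f := fun q : (Euc d × Euc d) × ℝ => ENNReal.ofReal (q.2 ^ d * Real.exp (-(q.2 * (1 - ⟪q.1.1, q.1.2⟫)))))
  exact (ENNReal.continuous_ofReal.comp (by fun_prop)).measurable

lemma mem_polar_iff {K : Set (Euc d)} (hK : IsCompact K) (hne : K.Nonempty) (y : Euc d) :
    y ∈ polarSet K ↔ hs K y ≤ 1 := by
  constructor
  · intro h
    exact hs_le hne fun x hx => by rw [real_inner_comm]; exact h x hx
  · intro h x hx
    rw [real_inner_comm]
    exact (le_hs hK y hx).trans h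

lemma polar_closed (K : Set (Euc d)) : IsClosed (polarSet K) := by
  have : polarSet K = ⋂ x ∈ K, {y | ⟪x, y⟫ ≤ 1} := by
    ext y; simp [polarSet]
  rw [this]
  exact isClosed_biInter fun x _ => isClosed_le (by fun_prop) continuous_const

lemma meas_slice {G : Euc d → ℝ → ℝ≥0∞} (h : Measurable fun q : Euc d × ℝ => G q.1 q.2) (r : ℝ) :
    Measurable fun p => G p r := by
  have h2 : Measurable fun p : Euc d => (p, r) := measurable_prodMk_right
  exact h.comp h2

lemma kernelA {K : Set (Euc d)} (hK : IsCompact K) (h0 : (0 : Euc d) ∈ K) (x : Euc d) :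
    ∫⁻ p, ENNReal.ofReal (Real.exp (-(hs K p - ⟪x, p⟫))) ≤ ∫⁻ y in polarSet K, kk x y := by
  have hne : K.Nonempty := ⟨0, h0⟩
  have hc := hs_continuous hK hne
  have hnn : ∀ v, 0 ≤ hs K v := fun v => by simpa using le_hs hK v h0
  set G : Euc d → ℝ → ℝ≥0∞ := fun p r =>
    if hs K p ≤ r then ENNReal.ofReal (Real.exp (-(r - ⟪x, p⟫))) else 0 with hG
  have hGm : Measurable (fun q : Euc d × ℝ => G q.1 q.2) := by
    refine Measurable.ite ?_ ?_ measurable_const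
    · exact measurableSet_le (hc.comp continuous_fst).measurable measurable_snd
    · exact (ENNReal.continuous_ofReal.comp (by fun_prop)).measurable
  have h1 : ∫⁻ p, ENNReal.ofReal (Real.exp (-(hs K p - ⟪x, p⟫))) ≤
      ∫⁻ p, ∫⁻ r in Ioi (0:ℝ), G p r := by
    refine lintegral_mono fun p => ?_
    rw [← exp_tail]
    refine le_trans ?_ (lintegral_mono_set (Ioi_subset_Ioi (hnn p)))
    refine setLIntegral_mono' measurableSet_Ioi fun r hr => ?_
    simp only [hG]
    rw [if_pos (le_of_lt hr)]
  refine h1.trans ?_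
  rw [lintegral_lintegral_swap hGm.aemeasurable]
  have h2 : ∀ r ∈ Ioi (0:ℝ), ∫⁻ p, G p r = ∫⁻ y in polarSet K,
      ENNReal.ofReal (r ^ d * Real.exp (-(r * (1 - ⟪x, y⟫)))) := by
    intro r hr
    have hr : 0 < r := hr
    have hGr : Measurable fun p => G p r := meas_slice hGm r
    rw [lintegral_scale hGr hr,
      ← lintegral_indicator (polar_closed K).measurableSet,
      ← lintegral_const_mul' _ _ (by simp)]
    refine lintegral_congr fun y => ?_
    simp only [hG, hs_smul hK hne hr.le, indicator]
    have hiff := mem_polar_iff hK hne y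
    by_cases h : hs K y ≤ 1
    · rw [if_pos (hiff.2 h), if_pos (by nlinarith), ← ENNReal.ofReal_mul (by positivity)]
      rw [real_inner_smul_right]
      congr 3; ring_nf
    · rw [if_neg (fun t => h (hiff.1 t)), if_neg, mul_zero]
      push Not at h ⊢
      nlinarith
  rw [setLIntegral_congr_fun measurableSet_Ioi h2]
  unfold kk
  rw [lintegral_lintegral_swap]
  have : Continuous fun q : ℝ × Euc d => q.1 ^ d * Real.exp (-(q.1 * (1 - ⟪x, q.2⟫))) := by fun_prop
  exact (ENNReal.continuous_ofReal.comp this).measurable.aemeasurable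

lemma kernelB {U A : Set (Euc d)} (hU : MeasurableSet U) (hA : IsCompact A) (hne : A.Nonempty)
    {y : Euc d} (h : ∀ x ∈ U, ∀ v ∈ A, ⟪x, v⟫ ≤ 1 - ⟪x, y⟫) :
    ∫⁻ x in U, kk x y ≤ IK A := by
  have hc := hs_continuous hA hne
  set G : Euc d → ℝ → ℝ≥0∞ := fun p r =>
    if hs A p + ⟪p, y⟫ ≤ r then ENNReal.ofReal (Real.exp (-(r - ⟪p, y⟫))) else 0 with hG
  have hGm : Measurable (fun q : Euc d × ℝ => G q.1 q.2) := by
    refine Measurable.ite ?_ ?_ measurable_const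
    · have : Continuous fun q : Euc d × ℝ => hs A q.1 + ⟪q.1, y⟫ := by fun_prop
      exact measurableSet_le this.measurable measurable_snd
    · exact (ENNReal.continuous_ofReal.comp (by fun_prop)).measurable
  unfold kk
  have hcont : Continuous fun q : Euc d × ℝ => q.2 ^ d * Real.exp (-(q.2 * (1 - ⟪q.1, y⟫))) := by
    fun_prop
  rw [lintegral_lintegral_swap (f := fun (x : Euc d) (r : ℝ) =>
    ENNReal.ofReal (r ^ d * Real.exp (-(r * (1 - ⟪x, y⟫)))))
    (ENNReal.continuous_ofReal.comp hcont).measurable.aemeasurable]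
  have h2 : ∀ r ∈ Ioi (0:ℝ), ∫⁻ x in U, ENNReal.ofReal (r ^ d * Real.exp (-(r * (1 - ⟪x, y⟫))))
      ≤ ∫⁻ p, G p r := by
    intro r hr
    have hr : 0 < r := hr
    have hGr : Measurable fun p => G p r := meas_slice hGm r
    rw [lintegral_scale hGr hr,
      ← lintegral_indicator hU, ← lintegral_const_mul' _ _ (by simp)]
    refine lintegral_mono fun x => ?_
    simp only [hG, hs_smul hA hne hr.le, indicator]
    by_cases hx : x ∈ U
    · have h3 : hs A x ≤ 1 - ⟪x, y⟫ := hs_le hne fun v hv => h x hx v hv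
      rw [if_pos hx, if_pos, ← ENNReal.ofReal_mul (by positivity), real_inner_smul_left]
      · apply le_of_eq
        congr 3; ring_nf
      · rw [real_inner_smul_left]; nlinarith
    · rw [if_neg hx]; simp
  refine (setLIntegral_mono' measurableSet_Ioi h2).trans ?_
  rw [lintegral_lintegral_swap (f := fun (r : ℝ) (p : Euc d) => G p r)
    (hGm.comp measurable_swap).aemeasurable]
  refine lintegral_mono fun p => ?_
  have h4 := exp_tail (hs A p + ⟪p, y⟫) ⟪p, y⟫
  rw [add_sub_cancel_right, setLIntegral_congr Ioi_ae_eq_Ici,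
    ← lintegral_indicator measurableSet_Ici] at h4
  rw [← h4]
  refine (setLIntegral_le_lintegral _ _).trans (lintegral_mono fun r => ?_)
  simp only [hG, indicator, mem_Ici]
  rfl

end Kernel

open Set MeasureTheory Metric
open scoped Pointwise RealInnerProductSpace ENNReal


section Geo

variable {d : ℕ}

lemma polar_convex (K : Set (Euc d)) : Convex ℝ (polarSet K) := by
  intro a ha b hb s t hs ht hst x hx
  have h1 := ha x hx
  have h2 := hb x hx
  rw [inner_add_right, real_inner_smul_right, real_inner_smul_right]
  nlinarith

lemma zero_mem_polar (K : Set (Euc d)) : (0 : Euc d) ∈ polarSet K := by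
  intro x _; simp

lemma polar_compact {K : Set (Euc d)} (h0 : (0 : Euc d) ∈ interior K) :
    IsCompact (polarSet K) := by
  obtain ⟨r, hr, hb⟩ := Metric.nhds_basis_closedBall.mem_iff.1 (mem_interior_iff_mem_nhds.1 h0)
  refine Metric.isCompact_of_isClosed_isBounded (polar_closed K)
    ((Metric.isBounded_closedBall (x := (0 : Euc d)) (r := 1 / r)).subset fun y hy => ?_)
  rw [mem_closedBall_zero_iff]
  rcases eq_or_ne y 0 with rfl | hne
  · simp; positivity
  have hn : 0 < ‖y‖ := norm_pos_iff.2 hne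
  have h1 : (r / ‖y‖) • y ∈ K := by
    apply hb
    rw [mem_closedBall_zero_iff, norm_smul, Real.norm_of_nonneg (by positivity),
      div_mul_cancel₀ _ hn.ne']
  have h2 := hy _ h1
  rw [real_inner_smul_left, real_inner_self_eq_norm_sq] at h2
  have h3 : r / ‖y‖ * ‖y‖ ^ 2 = r * ‖y‖ := by field_simp
  rw [h3] at h2
  rw [le_div_iff₀ hr]; linarith

lemma zero_int_polar {K : Set (Euc d)} (hK : IsCompact K) : (0 : Euc d) ∈ interior (polarSet K) := by
  obtain ⟨R, hR, hb⟩ := hK.isBounded.exists_pos_norm_le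
  rw [mem_interior_iff_mem_nhds]
  refine Filter.mem_of_superset (Metric.closedBall_mem_nhds 0 (inv_pos.2 hR)) fun y hy x hx => ?_
  rw [mem_closedBall_zero_iff] at hy
  refine (real_inner_le_norm _ _).trans ?_
  calc ‖x‖ * ‖y‖ ≤ R * R⁻¹ := mul_le_mul (hb x hx) hy (norm_nonneg _) hR.le
    _ = 1 := mul_inv_cancel₀ hR.ne'

lemma mem_of_polar {K : Set (Euc d)} (hK : IsClosed K) (hc : Convex ℝ K) (h0 : (0 : Euc d) ∈ K)
    {x : Euc d} (h : ∀ y ∈ polarSet K, ⟪x, y⟫ ≤ 1) : x ∈ K := by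
  by_contra hx
  obtain ⟨f, u, hf, hu⟩ := geometric_hahn_banach_closed_point hc hK hx
  have hu0 : 0 < u := by simpa using hf 0 h0
  set a := (InnerProductSpace.toDual ℝ (Euc d)).symm f with ha
  have hav : ∀ v, ⟪a, v⟫ = f v := fun v => by
    rw [ha, InnerProductSpace.toDual_symm_apply]
  have h1 : u⁻¹ • a ∈ polarSet K := by
    intro k hk
    rw [real_inner_smul_right, real_inner_comm, hav, inv_mul_eq_div, div_le_one hu0]
    exact (hf k hk).le
  have h2 := h _ h1
  rw [real_inner_smul_right, real_inner_comm, hav, inv_mul_eq_div, div_le_one hu0] at h2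
  linarith

lemma bipolar {K : Set (Euc d)} (hK : IsClosed K) (hc : Convex ℝ K) (h0 : (0 : Euc d) ∈ K) :
    polarSet (polarSet K) = K := by
  ext x
  constructor
  · intro hx
    exact mem_of_polar hK hc h0 fun y hy => by rw [real_inner_comm]; exact hx y hy
  · intro hx y hy
    rw [real_inner_comm]; exact hy x hx

lemma inner_lt_one {K : Set (Euc d)} {x y : Euc d} (hx : x ∈ interior K) (hy : y ∈ polarSet K) :
    ⟪x, y⟫ < 1 := by
  have hcont : Filter.Tendsto (fun t : ℝ => (1 + t) • x) (nhds 0) (nhds x) := by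
    have : Continuous (fun t : ℝ => (1 + t) • x) := by fun_prop
    simpa using this.tendsto 0
  obtain ⟨ε, hε, h⟩ := Metric.eventually_nhds_iff.1
    (hcont.eventually (mem_interior_iff_mem_nhds.1 hx))
  have h1 : (1 + ε / 2) • x ∈ K := h (by simp [abs_of_pos hε]; linarith)
  have h2 := hy _ h1
  rw [real_inner_smul_left] at h2
  by_contra hcon
  push Not at hcon
  nlinarith

lemma gap_of_lt {S : Set (Euc d)} (hS : IsCompact S) {x : Euc d} (h : ∀ y ∈ S, ⟪y, x⟫ < 1) :
    ∃ m > 0, ∀ y ∈ S, m ≤ 1 - ⟪y, x⟫ := by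
  rcases S.eq_empty_or_nonempty with rfl | hne
  · exact ⟨1, one_pos, by simp⟩
  · obtain ⟨y0, hy0, hmin⟩ := hS.exists_isMinOn hne
      (f := fun y => 1 - ⟪y, x⟫) (by fun_prop)
    exact ⟨1 - ⟪y0, x⟫, by linarith [h y0 hy0], fun y hy => hmin hy⟩

def BB (S : Set (Euc d)) (x : Euc d) : Set (Euc d) := {v | ∀ y ∈ S, |⟪y, v⟫| ≤ 1 - ⟪y, x⟫}

lemma BB_nhds {S : Set (Euc d)} (hS : IsCompact S) {x : Euc d} (h : ∀ y ∈ S, ⟪y, x⟫ < 1)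
    : BB S x ∈ nhds 0 := by
  obtain ⟨m, hm, hmin⟩ := gap_of_lt hS h
  obtain ⟨R, hR, hb⟩ := hS.isBounded.exists_pos_norm_le
  refine Filter.mem_of_superset (Metric.closedBall_mem_nhds 0 (div_pos hm hR)) fun v hv y hy => ?_
  rw [mem_closedBall_zero_iff] at hv
  refine (abs_real_inner_le_norm _ _).trans (le_trans ?_ (hmin y hy))
  calc ‖y‖ * ‖v‖ ≤ R * (m / R) := mul_le_mul (hb y hy) hv (norm_nonneg _) hR.le
    _ = m := by field_simp

lemma BB_closed (S : Set (Euc d)) (x : Euc d) : IsClosed (BB S x) := by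
  have : BB S x = ⋂ y ∈ S, {v | |⟪y, v⟫| ≤ 1 - ⟪y, x⟫} := by ext v; simp [BB]
  rw [this]
  exact isClosed_biInter fun y _ => isClosed_le (by fun_prop) continuous_const

lemma BB_sym {S : Set (Euc d)} (hS : IsCompact S) (h0 : (0 : Euc d) ∈ interior S) {x : Euc d}
    (h : ∀ y ∈ S, ⟪y, x⟫ < 1) : SymBody (BB S x) := by
  refine ⟨?_, ?_, ⟨0, mem_interior_iff_mem_nhds.2 (BB_nhds hS h)⟩, ?_⟩
  · -- bounded
    obtain ⟨M, hM⟩ := hS.bddAbove_image (f := fun y => 1 - ⟪y, x⟫) (by fun_prop)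
    have hM' : ∀ y ∈ S, 1 - ⟪y, x⟫ ≤ M := fun y hy => hM ⟨y, hy, rfl⟩
    have hM0 : 0 < M := by
      have := hM' 0 (interior_subset h0)
      simp at this; linarith
    have hpc := polar_compact h0
    refine (hpc.smul M).of_isClosed_subset (BB_closed S x) fun v hv => ?_
    rw [mem_smul_set_iff_inv_smul_mem₀ hM0.ne']
    intro y hy
    rw [real_inner_smul_right, inv_mul_eq_div, div_le_one hM0]
    exact (le_abs_self _).trans ((hv y hy).trans (hM' y hy))
  · intro a ha b hb s t hs ht hst y hy
    have h1 := abs_le.1 (ha y hy)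
    have h2 := abs_le.1 (hb y hy)
    rw [inner_add_right, real_inner_smul_right, real_inner_smul_right, abs_le]
    obtain rfl : t = 1 - s := by linarith
    constructor <;> nlinarith
  · intro v hv y hy
    rw [inner_neg_right, abs_neg]; exact hv y hy

lemma mem_int_of_lt {K : Set (Euc d)} (hK : IsClosed K) (hc : Convex ℝ K)
    (h0 : (0 : Euc d) ∈ interior K) {x : Euc d} (h : ∀ y ∈ polarSet K, ⟪y, x⟫ < 1) :
    x ∈ interior K := by
  have h1 := BB_nhds (polar_compact h0) h
  rw [mem_interior_iff_mem_nhds]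
  have h2 : (fun z => z - x) ⁻¹' (BB (polarSet K) x) ∈ nhds x := by
    have : Continuous fun z : Euc d => z - x := by fun_prop
    apply this.continuousAt.preimage_mem_nhds
    simpa using h1
  refine Filter.mem_of_superset h2 fun z hz => ?_
  refine mem_of_polar hK hc (interior_subset h0) fun y hy => ?_
  have h3 := (le_abs_self _).trans (hz y hy)
  rw [inner_sub_right] at h3
  rw [real_inner_comm]
  linarith

lemma gauge_inner {K : Set (Euc d)} {x : Euc d} (hx : x ∈ interior K) {y : Euc d}
    (hy : y ∈ polarSet K) (v : Euc d) :
    ⟪v, y⟫ ≤ gauge ((fun k => k - x) '' K) v * (1 - ⟪x, y⟫) := by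
  have hl : 0 < 1 - ⟪x, y⟫ := by linarith [inner_lt_one hx hy]
  have hn : ((fun k => k - x) '' K) ∈ nhds (0 : Euc d) := by
    have h1 := (Homeomorph.subRight x).isOpenMap.image_mem_nhds (mem_interior_iff_mem_nhds.1 hx)
    simpa using h1
  have hab : Absorbent ℝ ((fun k => k - x) '' K) := absorbent_nhds_zero hn
  rw [← div_le_iff₀ hl]
  refine le_of_forall_gt_imp_ge_of_dense fun a ha => ?_
  obtain ⟨b, hb0, hba, s, hs, rfl⟩ := exists_lt_of_gauge_lt hab ha
  obtain ⟨k, hk, rfl⟩ := hs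
  have := hy k hk
  simp only [real_inner_smul_left, inner_sub_left]
  rw [div_le_iff₀ hl]
  have h1 : ⟪k, y⟫ - ⟪x, y⟫ ≤ 1 - ⟪x, y⟫ := by linarith
  calc b * (⟪k, y⟫ - ⟪x, y⟫) ≤ b * (1 - ⟪x, y⟫) := mul_le_mul_of_nonneg_left h1 hb0.le
    _ ≤ a * (1 - ⟪x, y⟫) := mul_le_mul_of_nonneg_right hba.le hl.le

lemma gauge_le_of_inner {K : Set (Euc d)} (hK : IsClosed K) (hc : Convex ℝ K)
    (h0 : (0 : Euc d) ∈ K) {x v : Euc d} {t : ℝ} (ht : 0 < t)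
    (h : ∀ y ∈ polarSet K, ⟪v, y⟫ ≤ t * (1 - ⟪x, y⟫)) :
    gauge ((fun k => k - x) '' K) v ≤ t := by
  refine gauge_le_of_mem ht.le ?_
  rw [mem_smul_set_iff_inv_smul_mem₀ ht.ne']
  refine ⟨t⁻¹ • v + x, mem_of_polar hK hc h0 fun y hy => ?_, by simp⟩
  have h1 := h y hy
  rw [inner_add_left, real_inner_smul_left]
  have : t⁻¹ * ⟪v, y⟫ ≤ 1 - ⟪x, y⟫ := by
    rw [inv_mul_eq_div, div_le_iff₀ ht]; linarith
  linarith

lemma gauge_lt_one_int {K : Set (Euc d)} {x x' : Euc d} (hx' : x' ∈ interior K) :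
    gauge ((fun k => k - x) '' K) (x' - x) < 1 := by
  apply interior_subset_gauge_lt_one
  have h1 := (Homeomorph.subRight x).image_interior K
  have h2 : x' - x ∈ (Homeomorph.subRight x) '' interior K := ⟨x', hx', rfl⟩
  rw [h1] at h2
  exact h2

lemma hilbert_ratio {K : Set (Euc d)} {x x' : Euc d} {α : ℝ} (hx : x ∈ interior K)
    (hx' : x' ∈ interior K) (h : hilbertDist K x x' ≤ α) {y : Euc d} (hy : y ∈ polarSet K) :
    Real.exp (-(2 * α)) * (1 - ⟪x, y⟫) ≤ 1 - ⟪x', y⟫ ∧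
    Real.exp (-(2 * α)) * (1 - ⟪x', y⟫) ≤ 1 - ⟪x, y⟫ := by
  unfold hilbertDist at h
  set g1 := gauge ((fun k => k - x) '' K) (x' - x) with hg1
  set g2 := gauge ((fun k => k - x') '' K) (x - x') with hg2
  have a1 : g1 < 1 := gauge_lt_one_int hx'
  have a2 : g2 < 1 := gauge_lt_one_int hx
  have b1 : 0 ≤ g1 := gauge_nonneg _
  have b2 : 0 ≤ g2 := gauge_nonneg _
  have hl : -(2 * α) ≤ Real.log ((1 - g1) * (1 - g2)) := by linarith
  rw [Real.le_log_iff_exp_le (by nlinarith)] at hl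
  have c1 := gauge_inner hx hy (x' - x)
  have c2 := gauge_inner hx' hy (x - x')
  rw [← hg1, inner_sub_left] at c1
  rw [← hg2, inner_sub_left] at c2
  have l1 : 0 < 1 - ⟪x, y⟫ := by linarith [inner_lt_one hx hy]
  have l2 : 0 < 1 - ⟪x', y⟫ := by linarith [inner_lt_one hx' hy]
  have e1 : Real.exp (-(2 * α)) ≤ 1 - g1 := by nlinarith
  have e2 : Real.exp (-(2 * α)) ≤ 1 - g2 := by nlinarith
  have f1 := mul_le_mul_of_nonneg_right e1 l1.le
  have f2 := mul_le_mul_of_nonneg_right e2 l2.le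
  constructor <;> nlinarith

lemma hilbert_ball_of {K : Set (Euc d)} (hK : IsClosed K) (hc : Convex ℝ K)
    (h0 : (0 : Euc d) ∈ interior K) {x x' : Euc d} {α : ℝ} (hα : 0 < α) (hα1 : α ≤ 1)
    (hx : x ∈ interior K)
    (h : ∀ y ∈ polarSet K, |⟪x' - x, y⟫| ≤ α / 4 * (1 - ⟪x, y⟫)) :
    x' ∈ hilbertBall K x α := by
  have l : ∀ y ∈ polarSet K, 0 < 1 - ⟪x, y⟫ := fun y hy => by linarith [inner_lt_one hx hy]
  have hr : ∀ y ∈ polarSet K, (1 - α / 4) * (1 - ⟪x, y⟫) ≤ 1 - ⟪x', y⟫ := fun y hy => by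
    have := (abs_le.1 (h y hy)).2
    rw [inner_sub_left] at this
    linarith
  have hx' : x' ∈ interior K := by
    refine mem_int_of_lt hK hc h0 fun y hy => ?_
    rw [real_inner_comm]
    have := hr y hy
    have := l y hy
    nlinarith
  refine ⟨hx', ?_⟩
  unfold hilbertDist
  have g1 : gauge ((fun k => k - x) '' K) (x' - x) ≤ α / 4 :=
    gauge_le_of_inner hK hc (interior_subset h0) (by linarith)
      fun y hy => (le_abs_self _).trans (h y hy)
  have g2 : gauge ((fun k => k - x') '' K) (x - x') ≤ α / 3 := by
    refine gauge_le_of_inner hK hc (interior_subset h0) (by linarith) fun y hy => ?_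
    have h1 := (abs_le.1 (h y hy)).1
    have h2 := hr y hy
    have h3 := l y hy
    rw [inner_sub_left] at h1 ⊢
    nlinarith
  have hp : (1 - α / 4) * (1 - α / 3) ≤ (1 - gauge ((fun k => k - x) '' K) (x' - x)) *
      (1 - gauge ((fun k => k - x') '' K) (x - x')) :=
    mul_le_mul (by linarith) (by linarith) (by linarith) (by linarith)
  have hp0 : 0 < (1 - α / 4) * (1 - α / 3) := mul_pos (by linarith) (by linarith)
  have hl : -(2 * α) ≤ Real.log ((1 - gauge ((fun k => k - x) '' K) (x' - x)) *
      (1 - gauge ((fun k => k - x') '' K) (x - x'))) := by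
    rw [Real.le_log_iff_exp_le (lt_of_lt_of_le hp0 hp)]
    refine le_trans ?_ hp
    have e1 : 1 + 2 * α ≤ Real.exp (2 * α) := by linarith [Real.add_one_le_exp (2 * α)]
    rw [Real.exp_neg]
    refine (inv_anti₀ (by linarith) e1).trans ?_
    rw [inv_le_iff_one_le_mul₀ (by linarith)]
    nlinarith [mul_pos hα hα]
  linarith

lemma hilbertCov_le {K U : Set (Euc d)} {α : ℝ} (t : Finset (Euc d))
    (ht : ∀ x ∈ t, x ∈ interior K) (hU : U ⊆ ⋃ x ∈ t, hilbertBall K x α) :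
    hilbertCov K U α ≤ t.card := by
  refine Nat.sInf_le ⟨fun i => (t.equivFin.symm i : Euc d), fun i => ht _ (t.equivFin.symm i).2, ?_⟩
  intro u hu
  obtain ⟨x, hx, hux⟩ := mem_iUnion₂.1 (hU hu)
  refine mem_iUnion.2 ⟨t.equivFin ⟨x, hx⟩, ?_⟩
  simpa using hux

lemma hilbertCov_spec {K U : Set (Euc d)} (hK : IsClosed K) (hc : Convex ℝ K)
    (h0 : (0 : Euc d) ∈ interior K) {α : ℝ} (hα : 0 < α) (hα1 : α ≤ 1) (hU : IsCompact U)
    (hUK : U ⊆ interior K) :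
    ∃ x : Fin (hilbertCov K U α) → Euc d, (∀ i, x i ∈ interior K) ∧
      U ⊆ ⋃ i, hilbertBall K (x i) α := by
  refine Nat.sInf_mem (s := {m : ℕ | ∃ x : Fin m → Euc d, (∀ i, x i ∈ interior K) ∧
    U ⊆ ⋃ i, hilbertBall K (x i) α}) ?_
  obtain ⟨t, ht, hUt⟩ := hU.elim_nhds_subcover (fun x => hilbertBall K x α) fun x hx => by
    have h1 : ∀ y ∈ polarSet K, ⟪y, x⟫ < 1 := fun y hy => by
      rw [real_inner_comm]; exact inner_lt_one (hUK hx) hy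
    have h2 : (fun z => (4 / α) • (z - x)) ⁻¹' (BB (polarSet K) x) ∈ nhds x := by
      have : Continuous fun z : Euc d => (4 / α) • (z - x) := by fun_prop
      apply this.continuousAt.preimage_mem_nhds
      simpa using BB_nhds (polar_compact h0) h1
    refine Filter.mem_of_superset h2 fun z hz => ?_
    refine hilbert_ball_of hK hc h0 hα hα1 (hUK hx) fun y hy => ?_
    have h3 := hz y hy
    rw [real_inner_smul_right, abs_mul, abs_of_pos (by positivity), div_mul_eq_mul_div,
      div_le_iff₀ hα] at h3
    rw [real_inner_comm, real_inner_comm y x]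
    linarith
  exact ⟨t.card, fun i => (t.equivFin.symm i : Euc d), fun i => hUK (ht _ (t.equivFin.symm i).2),
    fun u hu => by
      obtain ⟨x, hx, hux⟩ := mem_iUnion₂.1 (hUt hu)
      refine mem_iUnion.2 ⟨t.equivFin ⟨x, hx⟩, ?_⟩
      simpa using hux⟩

end Geo

open Set MeasureTheory Metric
open scoped Pointwise RealInnerProductSpace ENNReal


section Main

variable {d : ℕ}

def Wreg (K : Set (Euc d)) (x : Euc d) (t : ℝ) : Set (Euc d) :=
  {z | ∀ y ∈ polarSet K, |⟪y, z - x⟫| ≤ t * (1 - ⟪y, x⟫)}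

lemma Wreg_eq (K : Set (Euc d)) (x : Euc d) {t : ℝ} (ht : 0 < t) :
    Wreg K x t = x +ᵥ t • BB (polarSet K) x := by
  ext z
  rw [mem_vadd_set_iff_neg_vadd_mem, mem_smul_set_iff_inv_smul_mem₀ ht.ne']
  refine forall₂_congr fun y _ => ?_
  rw [real_inner_smul_right, abs_mul, abs_of_pos (inv_pos.2 ht), inv_mul_le_iff₀ ht, vadd_eq_add,
    neg_add_eq_sub]

lemma Wreg_compact {K : Set (Euc d)} (hK : IsCompact K) (h0 : (0 : Euc d) ∈ interior K) {x : Euc d}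
    (hx : x ∈ interior K) {t : ℝ} (ht : 0 < t) : IsCompact (Wreg K x t) := by
  rw [Wreg_eq K x ht]
  have := BB_sym (polar_compact h0) (zero_int_polar hK) (x := x)
    (fun y hy => by rw [real_inner_comm]; exact inner_lt_one hx hy)
  exact (this.compact.smul t).vadd x

lemma Wreg_vol (K : Set (Euc d)) (x : Euc d) {t : ℝ} (ht : 0 < t) :
    volume (Wreg K x t) = ENNReal.ofReal (t ^ d) * volume (BB (polarSet K) x) := by
  rw [Wreg_eq K x ht, measure_vadd, Measure.addHaar_smul]
  simp [abs_of_pos ht]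

lemma Wreg_int {K : Set (Euc d)} (hK : IsClosed K) (hc : Convex ℝ K)
    (h0 : (0 : Euc d) ∈ interior K) {x z : Euc d}
    (hx : x ∈ interior K) {t : ℝ} (ht : t < 1) (hz : z ∈ Wreg K x t) : z ∈ interior K := by
  refine mem_int_of_lt hK hc h0 fun y hy => ?_
  have h1 := (abs_le.1 (hz y hy)).2
  have h2 := inner_lt_one hx hy
  rw [real_inner_comm] at h2
  rw [inner_sub_right] at h1
  nlinarith

lemma vol_IK_lower {K : Set (Euc d)} (hK : IsCompact K)
    (h0 : (0 : Euc d) ∈ interior K) {x z : Euc d} (hc : Convex ℝ K)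
    (hx : x ∈ interior K) {t : ℝ} (ht : t < 1) (hz : z ∈ Wreg K x t) :
    1 ≤ 32 ^ d * (volume (BB (polarSet K) x) * IK (BB (polarSet K) z)) := by
  have hzi := Wreg_int hK.isClosed hc h0 hx ht hz
  have hsb := BB_sym (polar_compact h0) (zero_int_polar hK) (x := z)
    (fun y hy => by rw [real_inner_comm]; exact inner_lt_one hzi hy)
  have h1 := bourgain_milman hsb
  have h2 : BB (polarSet K) z ⊆ (2 : ℝ) • BB (polarSet K) x := by
    intro v hv
    rw [mem_smul_set_iff_inv_smul_mem₀ two_ne_zero]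
    intro y hy
    rw [real_inner_smul_right, abs_mul, abs_of_pos (by norm_num), inv_mul_le_iff₀ two_pos]
    refine (hv y hy).trans ?_
    have h1 := (abs_le.1 (hz y hy)).1
    have h2 := inner_lt_one hx hy
    rw [real_inner_comm] at h2
    rw [inner_sub_right] at h1
    nlinarith
  have h3 : volume (BB (polarSet K) z) ≤ 2 ^ d * volume (BB (polarSet K) x) := by
    refine (measure_mono h2).trans ?_
    rw [Measure.addHaar_smul]
    have : ENNReal.ofReal |(2:ℝ) ^ Module.finrank ℝ (Euc d)| = 2 ^ d := by
      simp [abs_of_pos, ENNReal.ofReal_pow]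
    exact le_of_eq (congrArg (· * _) this)
  refine h1.trans ?_
  calc _ ≤ 16 ^ d * ((2 ^ d * volume (BB (polarSet K) x)) * IK (BB (polarSet K) z)) := by gcongr
    _ = (16 * 2) ^ d * (volume (BB (polarSet K) x) * IK (BB (polarSet K) z)) := by
        rw [mul_pow]; ring
    _ = _ := by norm_num

lemma IK_kk {K : Set (Euc d)} (hK : IsCompact K) (hc : Convex ℝ K)
    (h0 : (0 : Euc d) ∈ interior K) {z : Euc d} (hz : z ∈ interior K) :
    IK (BB (polarSet K) z) ≤ 2 * 2 ^ d * ∫⁻ y in polarSet K, kk z y := by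
  have hsb := BB_sym (polar_compact h0) (zero_int_polar hK) (x := z)
    (fun y hy => by rw [real_inner_comm]; exact inner_lt_one hz hy)
  set L : Set (Euc d) := -z +ᵥ K with hL
  have hmL : ∀ v, v ∈ L ↔ z + v ∈ K := fun v => by
    rw [hL, mem_vadd_set_iff_neg_vadd_mem]; simp
  have hLc : IsCompact L := hK.vadd _
  have hLv : Convex ℝ L := hc.vadd _
  refine (rogers_shephard hLc hLv hsb ?_ ?_).trans (mul_le_mul_right
    (le_trans ?_ (kernelA hK (interior_subset h0) z)) _)
  · intro v hv
    rw [hmL]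
    refine mem_of_polar hK.isClosed hc (interior_subset h0) fun y hy => ?_
    have := (abs_le.1 (hv y hy)).2
    rw [inner_add_left, real_inner_comm y z, real_inner_comm y v]; linarith
  · intro v hv hv' y hy
    rw [hmL] at hv hv'
    have h1 := hy _ hv
    have h2 := hy _ hv'
    rw [inner_add_left, real_inner_comm, real_inner_comm y v] at h1
    rw [inner_add_left, inner_neg_left, real_inner_comm, real_inner_comm y v] at h2
    rw [abs_le]; constructor <;> linarith
  · refine lintegral_mono fun p => ENNReal.ofReal_le_ofReal (Real.exp_le_exp.2 ?_)
    have h3 : hs K p ≤ hs L p + ⟪z, p⟫ := by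
      refine hs_le ⟨0, interior_subset h0⟩ fun k hk => ?_
      have : k - z ∈ L := by rw [hmL]; simpa using hk
      have := le_hs hLc p this
      rw [inner_sub_right, real_inner_comm z p] at this
      linarith
    linarith

lemma point_lower {K : Set (Euc d)} (hK : IsCompact K) (hc : Convex ℝ K)
    (h0 : (0 : Euc d) ∈ interior K) {x : Euc d}
    (hx : x ∈ interior K) {t : ℝ} (ht0 : 0 < t) (ht : t < 1) :
    ENNReal.ofReal (t ^ d) ≤ 2 * 64 ^ d * ∫⁻ z in Wreg K x t, ∫⁻ y in polarSet K, kk z y := by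
  have hsb := BB_sym (polar_compact h0) (zero_int_polar hK) (x := x)
    (fun y hy => by rw [real_inner_comm]; exact inner_lt_one hx hy)
  set V := volume (BB (polarSet K) x) with hV
  have hV0 : V ≠ 0 := (vol_pos_of hsb).ne'
  have hVt : V ≠ ∞ := vol_ne_top hsb
  have h1 : ∀ z ∈ Wreg K x t, 1 ≤ (V * (2 * 64 ^ d)) * ∫⁻ y in polarSet K, kk z y := by
    intro z hz
    refine (vol_IK_lower hK h0 hc hx ht hz).trans ?_
    refine (mul_le_mul_right (mul_le_mul_right
      (IK_kk hK hc h0 (Wreg_int hK.isClosed hc h0 hx ht hz)) _) _).trans (le_of_eq ?_)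
    rw [← hV]
    have : (64 : ℝ≥0∞) ^ d = 32 ^ d * 2 ^ d := by rw [← mul_pow]; norm_num
    rw [this]; ring
  have h2 : volume (Wreg K x t) ≤ (V * (2 * 64 ^ d)) *
      ∫⁻ z in Wreg K x t, ∫⁻ y in polarSet K, kk z y := by
    have hne : V * (2 * 64 ^ d) ≠ ∞ := by finiteness
    rw [← lintegral_const_mul' _ _ hne, ← setLIntegral_one]
    exact setLIntegral_mono' (Wreg_compact hK h0 hx ht0).measurableSet h1
  rw [Wreg_vol K x ht0, ← hV, mul_assoc, mul_comm _ V] at h2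
  exact (ENNReal.mul_le_mul_iff_right hV0 hVt).1 h2

lemma set_bound {R : Set (Euc d)} (hR : MeasurableSet R) (hRt : volume R ≠ ∞) {f : Euc d → ℝ≥0∞}
    {B : ℝ≥0∞} (h : ∀ y ∈ R, volume R * f y ≤ B) : ∫⁻ y in R, f y ≤ B := by
  rcases eq_or_ne (volume R) 0 with h0 | h0
  · rw [setLIntegral_measure_zero _ _ h0]; exact zero_le
  · calc ∫⁻ y in R, f y ≤ ∫⁻ _ in R, B / volume R :=
        setLIntegral_mono' hR fun y hy => by
          rw [ENNReal.le_div_iff_mul_le (Or.inl h0) (Or.inl hRt), mul_comm]; exact h y hy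
      _ = B / volume R * volume R := by rw [setLIntegral_const]
      _ ≤ B := by rw [ENNReal.div_mul_cancel h0 hRt]

lemma R_incl {K G U : Set (Euc d)} {α : ℝ} (hα : 0 < α) (hα1 : α ≤ 1)
    (hU : ∀ z ∈ U, ∃ x ∈ G, z ∈ Wreg K x (α / 16)) {y y' : Euc d} (hy : y ∈ polarSet K)
    (hy' : y' ∈ polarSet K) (hG : ∀ x ∈ G, ⟪x, y⟫ < 1)
    (h : ∀ x ∈ G, |⟪x, y' - y⟫| ≤ 324 * α * (1 - ⟪x, y⟫)) :
    y' ∈ y +ᵥ (648 * α) • BB (U ∪ G) y := by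
  rw [mem_vadd_set_iff_neg_vadd_mem, mem_smul_set_iff_inv_smul_mem₀ (by positivity)]
  intro z hz
  rw [real_inner_smul_right, abs_mul, abs_of_pos (by positivity), inv_mul_le_iff₀ (by positivity),
    vadd_eq_add, neg_add_eq_sub]
  rcases hz with hz | hz
  · obtain ⟨x, hx, hzx⟩ := hU z hz
    have hp : y + (1 / 324 : ℝ) • (y' - y) ∈ polarSet K :=
      polar_convex K |>.add_smul_sub_mem hy hy' ⟨by norm_num, by norm_num⟩
    have h1 := abs_le.1 (hzx _ hp)
    have h2 := abs_le.1 (hzx _ hy)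
    have h3 := abs_le.1 (h x hx)
    have hl := hG x hx
    rw [inner_add_left, inner_add_left, real_inner_smul_left, real_inner_smul_left,
      inner_sub_right (y' - y), inner_sub_right y,
      real_inner_comm z (y' - y), real_inner_comm x (y' - y), real_inner_comm z y,
      real_inner_comm x y] at h1
    rw [inner_sub_right, real_inner_comm z y, real_inner_comm x y] at h2
    generalize ⟪x, y' - y⟫ = a at *
    generalize ⟪z, y' - y⟫ = b at *
    obtain ⟨l, hl'⟩ : ∃ l, l = 1 - ⟪x, y⟫ := ⟨_, rfl⟩
    obtain ⟨m, hm⟩ : ∃ m, m = 1 - ⟪z, y⟫ := ⟨_, rfl⟩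
    have e1 : ⟪x, y⟫ = 1 - l := by linarith
    have e2 : ⟪z, y⟫ = 1 - m := by linarith
    rw [e1] at h1 h2 h3 hl
    rw [e2] at h1 h2 ⊢
    have hlp : 0 < l := by linarith
    have hq : 0 ≤ α * l := by positivity
    have hq1 : α * l ≤ l := by nlinarith
    have h4 : l * (15 / 16) ≤ m := by linarith [h2.2]
    have h5 : α * (l * (15 / 16)) ≤ α * m := mul_le_mul_of_nonneg_left h4 hα.le
    have h6 : α / 16 * (1 - (1 - l + 1 / 324 * a)) ≤ α / 16 * (2 * l) := by
      apply mul_le_mul_of_nonneg_left _ (by positivity)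
      linarith [h3.1]
    rw [abs_le]; constructor <;> linarith [h1.1, h1.2, h2.1, h2.2, h3.1, h3.2]
  · refine (h z hz).trans ?_
    have := hG z hz
    have : 0 ≤ α * (1 - ⟪z, y⟫) := mul_nonneg hα.le (by linarith)
    nlinarith

lemma ratio_diff {α a b c : ℝ} (hα : 0 < α) (hα1 : α ≤ 1) (ha : 0 ≤ a)
    (h1 : Real.exp (-(2 * α)) * c ≤ a) (h2 : Real.exp (-(2 * α)) * a ≤ c)
    (h3 : Real.exp (-(2 * α)) * c ≤ b) (h4 : Real.exp (-(2 * α)) * b ≤ c) :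
    |b - a| ≤ 324 * α * a := by
  have hE : Real.exp (2 * α) * Real.exp (-(2 * α)) = 1 := by rw [← Real.exp_add]; simp
  have hp := Real.exp_pos (2 * α)
  have hp' := Real.exp_pos (-(2 * α))
  have hc : c ≤ Real.exp (2 * α) * a := by
    have := mul_le_mul_of_nonneg_left h1 hp.le
    rwa [← mul_assoc, hE, one_mul] at this
  have hb : b ≤ Real.exp (2 * α) * c := by
    have := mul_le_mul_of_nonneg_left h4 hp.le
    rwa [← mul_assoc, hE, one_mul] at this
  have hb2 : b ≤ Real.exp (4 * α) * a := by
    have : Real.exp (4 * α) = Real.exp (2 * α) * Real.exp (2 * α) := by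
      rw [← Real.exp_add]; ring_nf
    rw [this, mul_assoc]
    exact hb.trans (mul_le_mul_of_nonneg_left hc hp.le)
  have hb3 : Real.exp (-(4 * α)) * a ≤ b := by
    have : Real.exp (-(4 * α)) = Real.exp (-(2 * α)) * Real.exp (-(2 * α)) := by
      rw [← Real.exp_add]; ring_nf
    rw [this, mul_assoc]
    exact (mul_le_mul_of_nonneg_left h2 hp'.le).trans h3
  have h5 : 1 - 4 * α ≤ Real.exp (-(4 * α)) := by linarith [Real.add_one_le_exp (-(4 * α))]
  have h6 : Real.exp (4 * α) ≤ 81 := by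
    have : Real.exp (4 * α) ≤ Real.exp 4 := Real.exp_le_exp.2 (by linarith)
    refine this.trans ?_
    have h7 : Real.exp 4 = Real.exp 1 ^ 4 := by rw [← Real.exp_nat_mul]; norm_num
    rw [h7]
    have h8 := Real.exp_one_lt_three
    calc Real.exp 1 ^ 4 ≤ 3 ^ 4 := pow_le_pow_left₀ (Real.exp_pos 1).le h8.le 4
      _ = 81 := by norm_num
  have h7 : Real.exp (4 * α) - 1 ≤ 324 * α := by
    have h8 : Real.exp (4 * α) * Real.exp (-(4 * α)) = 1 := by rw [← Real.exp_add]; simp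
    have h9 := mul_le_mul_of_nonneg_left h5 (Real.exp_pos (4 * α)).le
    rw [h8] at h9
    nlinarith
  rw [abs_le]; constructor
  · nlinarith
  · nlinarith

end Main

open Set MeasureTheory Metric
open scoped Pointwise RealInnerProductSpace ENNReal


section Fin

variable {d : ℕ}

lemma polar_sub_int {G K : Set (Euc d)} (hG : IsCompact G) (hGc : Convex ℝ G)
    (h0 : (0 : Euc d) ∈ interior G) (hGK : G ⊆ interior K) :
    polarSet K ⊆ interior (polarSet G) := by
  intro y hy
  refine mem_int_of_lt (polar_closed G) (polar_convex G) (zero_int_polar hG) fun x hx => ?_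
  rw [bipolar hG.isClosed hGc (interior_subset h0)] at hx
  exact inner_lt_one (hGK hx) hy

def Rset (K G : Set (Euc d)) (α : ℝ) (c : Euc d) : Set (Euc d) :=
  {y | y ∈ polarSet K ∧ ∀ x ∈ G, Real.exp (-(2 * α)) * (1 - ⟪x, c⟫) ≤ 1 - ⟪x, y⟫ ∧
    Real.exp (-(2 * α)) * (1 - ⟪x, y⟫) ≤ 1 - ⟪x, c⟫}

lemma Rset_closed (K G : Set (Euc d)) (α : ℝ) (c : Euc d) : IsClosed (Rset K G α c) := by
  have : Rset K G α c = polarSet K ∩ ⋂ x ∈ G,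
      ({y | Real.exp (-(2 * α)) * (1 - ⟪x, c⟫) ≤ 1 - ⟪x, y⟫} ∩
        {y | Real.exp (-(2 * α)) * (1 - ⟪x, y⟫) ≤ 1 - ⟪x, c⟫}) := by
    ext y; simp [Rset]
  rw [this]
  exact (polar_closed K).inter (isClosed_biInter fun x _ =>
    (isClosed_le (by fun_prop) (by fun_prop)).inter (isClosed_le (by fun_prop) (by fun_prop)))

lemma Rset_int {G K U : Set (Euc d)} (h0 : (0 : Euc d) ∈ interior G)
    (hG : IsCompact G)
    (hGK : G ⊆ interior K) {α : ℝ} (hα : 0 < α) (hα1 : α ≤ 1)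
    (hUc : IsCompact U) (hUK : U ⊆ interior K)
    (hU : ∀ z ∈ U, ∃ x ∈ G, z ∈ Wreg K x (α / 16)) (c : Euc d) :
    ∫⁻ y in Rset K G α c, ∫⁻ z in U, kk z y ≤ ENNReal.ofReal ((194400 * α) ^ d) := by
  have hK0 : (0 : Euc d) ∈ interior K := hGK (interior_subset h0)
  have hsub : Rset K G α c ⊆ polarSet K := fun y hy => hy.1
  refine set_bound (Rset_closed K G α c).measurableSet
    (measure_ne_top_of_subset hsub (polar_compact hK0).measure_lt_top.ne) fun y hy => ?_
  have hlt : ∀ x ∈ U ∪ G, ⟪x, y⟫ < 1 := by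
    rintro x (hx | hx)
    · exact inner_lt_one (hUK hx) hy.1
    · exact inner_lt_one (hGK hx) hy.1
  have hsb : SymBody (BB (U ∪ G) y) :=
    BB_sym (hUc.union hG) (interior_mono subset_union_right h0) hlt
  have hincl : Rset K G α c ⊆ y +ᵥ (648 * α) • BB (U ∪ G) y := by
    intro y' hy'
    refine R_incl hα hα1 hU hy.1 hy'.1 (fun x hx => hlt x (Or.inr hx)) fun x hx => ?_
    have h1 := hy.2 x hx
    have h2 := hy'.2 x hx
    have h3 := ratio_diff hα hα1 (by linarith [hlt x (Or.inr hx)]) h1.1 h1.2 h2.1 h2.2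
    rw [inner_sub_right, abs_sub_comm]
    refine le_trans (le_of_eq ?_) h3
    congr 1; ring
  have hvol : volume (Rset K G α c) ≤ ENNReal.ofReal ((648 * α) ^ d) * volume (BB (U ∪ G) y) := by
    refine (measure_mono hincl).trans (le_of_eq ?_)
    rw [measure_vadd, Measure.addHaar_smul]
    simp [abs_of_pos hα]
  have hker : ∫⁻ z in U, kk z y ≤ IK (BB (U ∪ G) y) :=
    kernelB hUc.measurableSet hsb.compact hsb.ne fun x hx v hv =>
      (abs_le.1 (hv x (Or.inl hx))).2
  calc _ ≤ (ENNReal.ofReal ((648 * α) ^ d) * volume (BB (U ∪ G) y)) * IK (BB (U ∪ G) y) :=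
        mul_le_mul' hvol hker
    _ = ENNReal.ofReal ((648 * α) ^ d) * (volume (BB (U ∪ G) y) * IK (BB (U ∪ G) y)) := by ring
    _ ≤ ENNReal.ofReal ((648 * α) ^ d) * 300 ^ d := mul_le_mul_right (santalo hsb) _
    _ = ENNReal.ofReal ((648 * α) ^ d) * ENNReal.ofReal (300 ^ d) := by
        rw [ENNReal.ofReal_pow (by norm_num : (0:ℝ) ≤ 300) d]; norm_num
    _ = _ := by
        rw [← ENNReal.ofReal_mul (by positivity), ← mul_pow]
        congr 2; ring

lemma card_bound (hd : 1 ≤ d) {G K : Set (Euc d)} (hG : IsCompact G) (hGc : Convex ℝ G)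
    (hK : IsCompact K) (hKc : Convex ℝ K) (h0 : (0 : Euc d) ∈ interior G)
    (hGK : G ⊆ interior K) {α : ℝ} (hα : 0 < α) (hα1 : α ≤ 1) (X : Finset (Euc d))
    (hX : ∀ x ∈ X, x ∈ G) (hdis : (X : Set (Euc d)).PairwiseDisjoint fun x => Wreg K x (α / 16)) :
    (X.card : ℝ) ≤ 398131200 ^ d * (hilbertCov (polarSet G) (polarSet K) α : ℝ) := by
  have hK0 : (0 : Euc d) ∈ interior K := hGK (interior_subset h0)
  have hτ : 0 < α / 16 := by positivity
  have hτ1 : α / 16 < 1 := by linarith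
  set U : Set (Euc d) := ⋃ x ∈ X, Wreg K x (α / 16) with hUdef
  have hWc : ∀ x ∈ X, IsCompact (Wreg K x (α / 16)) := fun x hx =>
    Wreg_compact hK hK0 (hGK (hX x hx)) hτ
  have hUc : IsCompact U := X.isCompact_biUnion hWc
  have hU : ∀ z ∈ U, ∃ x ∈ G, z ∈ Wreg K x (α / 16) := by
    intro z hz
    obtain ⟨x, hx, hzx⟩ := mem_iUnion₂.1 hz
    exact ⟨x, hX x hx, hzx⟩
  have hUK : U ⊆ interior K := by
    intro z hz
    obtain ⟨x, hx, hzx⟩ := hU z hz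
    exact Wreg_int hK.isClosed hKc hK0 (hGK hx) hτ1 hzx
  set N := hilbertCov (polarSet G) (polarSet K) α with hN
  have hpsub := polar_sub_int hG hGc h0 hGK
  have hspec : ∃ c : Fin N → Euc d, (∀ i, c i ∈ interior (polarSet G)) ∧
      polarSet K ⊆ ⋃ i, hilbertBall (polarSet G) (c i) α := hilbertCov_spec (polar_closed G) (polar_convex G) (zero_int_polar hG)
    hα hα1 (polar_compact hK0) hpsub
  obtain ⟨c, hc, hcov⟩ := hspec
  have hbi := bipolar hG.isClosed hGc (interior_subset h0)
  have hcov2 : polarSet K ⊆ ⋃ i, Rset K G α (c i) := by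
    intro y hy
    obtain ⟨i, hi⟩ := mem_iUnion.1 (hcov hy)
    refine mem_iUnion.2 ⟨i, hy, fun x hx => ?_⟩
    rw [← hbi] at hx
    have := hilbert_ratio (hc i) hi.1 hi.2 hx
    rw [real_inner_comm x (c i), real_inner_comm x y] at this
    exact this
  have hup : ∫⁻ y in polarSet K, ∫⁻ z in U, kk z y ≤ N * ENNReal.ofReal ((194400 * α) ^ d) := by
    refine (lintegral_mono_set hcov2).trans ((lintegral_iUnion_le _ _).trans ?_)
    rw [tsum_fintype]
    refine (Finset.sum_le_card_nsmul _ _ _ fun i _ =>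
      Rset_int h0 hG hGK hα hα1 hUc hUK hU (c i)).trans ?_
    simp
  have hlow : (X.card : ℝ≥0∞) * ENNReal.ofReal ((α / 16) ^ d) ≤
      2 * 64 ^ d * ∫⁻ z in U, ∫⁻ y in polarSet K, kk z y := by
    rw [hUdef, lintegral_biUnion_finset hdis (fun x hx => (hWc x hx).measurableSet),
      Finset.mul_sum, ← nsmul_eq_mul]
    exact Finset.card_nsmul_le_sum _ _ _ fun x hx => point_lower hK hKc hK0 (hGK (hX x hx)) hτ hτ1
  have hswap : ∫⁻ z in U, ∫⁻ y in polarSet K, kk z y = ∫⁻ y in polarSet K, ∫⁻ z in U, kk z y :=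
    lintegral_lintegral_swap (f := fun z y => kk z y) kk_meas.aemeasurable
  rw [hswap] at hlow
  have hfin := hlow.trans (mul_le_mul_right hup _)
  have e1 : (X.card : ℝ≥0∞) * ENNReal.ofReal ((α / 16) ^ d) =
      ENNReal.ofReal (X.card * (α / 16) ^ d) := by
    rw [ENNReal.ofReal_mul (by positivity), ENNReal.ofReal_natCast]
  have e2 : (2 * 64 ^ d * (N * ENNReal.ofReal ((194400 * α) ^ d)) : ℝ≥0∞) =
      ENNReal.ofReal (2 * 64 ^ d * (N * (194400 * α) ^ d)) := by
    rw [ENNReal.ofReal_mul (by positivity), ENNReal.ofReal_mul (by positivity),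
      ENNReal.ofReal_mul (by positivity), ENNReal.ofReal_natCast,
      ENNReal.ofReal_pow (by norm_num : (0:ℝ) ≤ 64) d]
    norm_num
  rw [e1, e2, ENNReal.ofReal_le_ofReal_iff (by positivity)] at hfin
  have hτd : 0 < (α / 16) ^ d := by positivity
  refine le_of_mul_le_mul_right (hfin.trans ?_) hτd
  have e3 : (194400 * α) ^ d = 3110400 ^ d * (α / 16) ^ d := by
    rw [← mul_pow]; congr 1; ring
  have e4 : (398131200 : ℝ) ^ d = 2 ^ d * 64 ^ d * 3110400 ^ d := by
    rw [← mul_pow, ← mul_pow]; norm_num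
  have e5 : (2 : ℝ) ≤ 2 ^ d := by
    calc (2 : ℝ) = 2 ^ 1 := by norm_num
      _ ≤ 2 ^ d := pow_le_pow_right₀ (by norm_num) hd
  rw [e3, e4]
  have : (2 : ℝ) * (64 ^ d * (N * (3110400 ^ d * (α / 16) ^ d))) ≤
      2 ^ d * (64 ^ d * (N * (3110400 ^ d * (α / 16) ^ d))) :=
    mul_le_mul_of_nonneg_right e5 (by positivity)
  refine le_trans (le_of_eq (by ring)) (this.trans (le_of_eq (by ring)))

lemma half_duality (hd : 1 ≤ d) {G K : Set (Euc d)} (hG : IsCompact G) (hGc : Convex ℝ G)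
    (hK : IsCompact K) (hKc : Convex ℝ K) (h0 : (0 : Euc d) ∈ interior G)
    (hGK : G ⊆ interior K) {α : ℝ} (hα : 0 < α) (hα1 : α ≤ 1) :
    (hilbertCov K G α : ℝ) ≤ 398131200 ^ d * (hilbertCov (polarSet G) (polarSet K) α : ℝ) := by
  classical
  have hK0 : (0 : Euc d) ∈ interior K := hGK (interior_subset h0)
  set S : Set ℕ := {n | ∃ X : Finset (Euc d), X.card = n ∧ (∀ x ∈ X, x ∈ G) ∧
    (X : Set (Euc d)).PairwiseDisjoint fun x => Wreg K x (α / 16)} with hS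
  have hne : S.Nonempty := ⟨0, ∅, by simp⟩
  have hbd : BddAbove S := by
    obtain ⟨M, hM⟩ := exists_nat_ge
      ((398131200 : ℝ) ^ d * (hilbertCov (polarSet G) (polarSet K) α : ℝ))
    refine ⟨M, ?_⟩
    rintro n ⟨X, rfl, hX, hdis⟩
    exact_mod_cast (card_bound hd hG hGc hK hKc h0 hGK hα hα1 X hX hdis).trans hM
  obtain ⟨X, hcard, hX, hdis⟩ := Nat.sSup_mem hne hbd
  refine le_trans ?_ (card_bound hd hG hGc hK hKc h0 hGK hα hα1 X hX hdis)
  have : hilbertCov K G α ≤ X.card := by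
    refine hilbertCov_le X (fun x hx => hGK (hX x hx)) fun z hz => ?_
    obtain ⟨x, hx, hnd⟩ : ∃ x ∈ X, ¬ Disjoint (Wreg K z (α / 16)) (Wreg K x (α / 16)) := by
      by_contra hcon
      push Not at hcon
      have hzW : z ∈ Wreg K z (α / 16) := by
        intro y hy
        have := inner_lt_one (hGK hz) hy
        rw [real_inner_comm] at this
        simp only [sub_self, inner_zero_right, abs_zero]
        exact mul_nonneg (by positivity) (by linarith)
      have hzX : z ∉ X := fun h => by
        have := hcon z h
        exact Set.disjoint_left.1 this hzW hzW
      have hmem : X.card + 1 ∈ S := by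
        refine ⟨insert z X, Finset.card_insert_of_notMem hzX, ?_, ?_⟩
        · intro x hx
          rcases Finset.mem_insert.1 hx with rfl | h
          · exact hz
          · exact hX x h
        · rw [Finset.coe_insert]
          exact hdis.insert fun x hx _ => hcon x hx
      have := le_csSup hbd hmem
      omega
    obtain ⟨w, hw1, hw2⟩ := Set.not_disjoint_iff.1 hnd
    refine mem_iUnion₂.2 ⟨x, hx, hilbert_ball_of hK.isClosed hKc hK0 hα hα1 (hGK (hX x hx)) ?_⟩
    intro y hy
    have h1 := abs_le.1 (hw1 y hy)
    have h2 := abs_le.1 (hw2 y hy)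
    have hlx := inner_lt_one (hGK (hX x hx)) hy
    have hlz := inner_lt_one (hGK hz) hy
    rw [inner_sub_right, real_inner_comm z y, real_inner_comm w y] at h1
    rw [inner_sub_right, real_inner_comm x y, real_inner_comm w y] at h2
    rw [inner_sub_left]
    generalize ⟪z, y⟫ = a at *
    generalize ⟪x, y⟫ = b at *
    generalize ⟪w, y⟫ = e at *
    have h3 : (1 - a) ≤ 2 * (1 - b) := by nlinarith
    have h4 : α * (1 - a) ≤ α * (2 * (1 - b)) := mul_le_mul_of_nonneg_left h3 hα.le
    have h5 : 0 ≤ α * (1 - b) := mul_nonneg hα.le (by linarith)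
    rw [abs_le]; constructor <;> linarith [h1.1, h1.2, h2.1, h2.2]
  exact_mod_cast this

end Fin

/-- Duality for volumetric Hilbert-ball coverings. -/
theorem hilbert_cover_duality :
    ∃ c : ℝ, 1 ≤ c ∧ ∀ d : ℕ, 2 ≤ d →
      ∀ G K : Set (Euc d), IsConvexBody G → IsConvexBody K →
        (0 : Euc d) ∈ interior G → G ⊆ interior K →
        ∀ α : ℝ, 0 < α → α ≤ 1 →
          (c ^ d)⁻¹ * (hilbertCov (polarSet G) (polarSet K) α : ℝ) ≤
              (hilbertCov K G α : ℝ) ∧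
          (hilbertCov K G α : ℝ) ≤
              c ^ d * (hilbertCov (polarSet G) (polarSet K) α : ℝ) := by
  refine ⟨398131200, by norm_num, fun d hd G K hG hK h0 hGK α hα hα1 => ?_⟩
  have hK0 : (0 : Euc d) ∈ interior K := hGK (interior_subset h0)
  refine ⟨?_, half_duality (by omega) hG.1 hG.2.1 hK.1 hK.2.1 h0 hGK hα hα1⟩
  have h := half_duality (by omega) (polar_compact hK0) (polar_convex K) (polar_compact h0)
    (polar_convex G) (zero_int_polar hK.1) (polar_sub_int hG.1 hG.2.1 h0 hGK) hα hα1
  rw [bipolar hG.1.isClosed hG.2.1 (interior_subset h0),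
    bipolar hK.1.isClosed hK.2.1 (interior_subset hK0)] at h
  rw [inv_mul_le_iff₀ (by positivity)]
  exact h
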